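/- arXiv:2402.06765 — 3 statements merged into one kernel-verified Lean document; each statement's English description precedes it below -/
import Mathlib

section
/- Let A and Θ be nonempty finite sets. There exists a set 𝒰_R ⊆ ℝ^{A×Θ} that is open, dense, and whose complement has Lebesgue measure zero, such that for every receiver utility u_R ∈ 𝒰_R, every prior μ0 ∈ ΔΘ, and every sender utility u_S ∈ ℝ^{A×Θ}, one has ŵ(μ0) = v̂(μ0), i.e., the sender has a unique equilibrium payoff. -/
open MeasureTheory

/-- The receiver's best responses `A*_R(μ)` to a belief vector `μ` on a finite state
space. -/
def BRf {A Θ : Type*} [Fintype Θ] (uR : A → Θ → ℝ) (μ : Θ → ℝ) : Set A :=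
  {a | ∀ a' : A, ∑ θ, uR a' θ * μ θ ≤ ∑ θ, uR a θ * μ θ}

/-- The belief simplex `ΔΘ` over a finite state space, viewed as a subspace of `ℝ^Θ`. -/
abbrev Belief (Θ : Type*) [Fintype Θ] : Type _ := {f : Θ → ℝ // f ∈ stdSimplex ℝ Θ}

/-- The sender's upper value function `v` (finite model, state-dependent sender
utility). -/
noncomputable def vF {A Θ : Type*} [Fintype Θ] (uS uR : A → Θ → ℝ) (μ : Θ → ℝ) : ℝ :=
  sSup ((fun a => ∑ θ, uS a θ * μ θ) '' BRf uR μ)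

/-- The sender's lower value function `w` (finite model, state-dependent sender
utility). -/
noncomputable def wF {A Θ : Type*} [Fintype Θ] (uS uR : A → Θ → ℝ) (μ : Θ → ℝ) : ℝ :=
  sInf ((fun a => ∑ θ, uS a θ * μ θ) '' BRf uR μ)

/-- The set `I(μ0)` of information policies: Borel probability measures on the belief
simplex whose barycenter is the prior `μ0`. -/
def IPolF {Θ : Type*} [Fintype Θ] (μ0 : Θ → ℝ) : Set (ProbabilityMeasure (Belief Θ)) :=
  {p | ∀ θ : Θ, ∫ μ, (μ : Belief Θ).1 θ ∂(p : Measure (Belief Θ)) = μ0 θ}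

/-- `v̂(μ0)`: the sender's best equilibrium (Bayesian persuasion) value (finite model). -/
noncomputable def vHatF {A Θ : Type*} [Fintype Θ] (uS uR : A → Θ → ℝ) (μ0 : Θ → ℝ) : ℝ :=
  sSup ((fun p : ProbabilityMeasure (Belief Θ) =>
    ∫ μ, vF uS uR (μ : Belief Θ).1 ∂(p : Measure (Belief Θ))) '' IPolF μ0)

/-- `ŵ(μ0)`: the sender's worst equilibrium value (finite model). -/
noncomputable def wHatF {A Θ : Type*} [Fintype Θ] (uS uR : A → Θ → ℝ) (μ0 : Θ → ℝ) : ℝ :=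
  sSup ((fun p : ProbabilityMeasure (Belief Θ) =>
    ∫ μ, wF uS uR (μ : Belief Θ).1 ∂(p : Measure (Belief Θ))) '' IPolF μ0)

/-- Genericity condition. -/
def GoodU {A Θ : Type*} [Fintype Θ] (uR : A → Θ → ℝ) : Prop :=
  ∀ (S : Finset Θ) (a : A),
    (∃ μ ∈ stdSimplex ℝ Θ, (∀ θ ∉ S, μ θ = 0) ∧ a ∈ BRf uR μ) →
    ∃ μ ∈ stdSimplex ℝ Θ, (∀ θ ∉ S, μ θ = 0) ∧
      ∀ a', a' ≠ a → ∑ θ, uR a' θ * μ θ < ∑ θ, uR a θ * μ θ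

section aux
set_option linter.unusedSectionVars false
variable {A Θ : Type} [Fintype A] [Fintype Θ] [Nonempty A]

lemma BRf_nonempty (uR : A → Θ → ℝ) (μ : Θ → ℝ) : (BRf uR μ).Nonempty := by
  obtain ⟨a, -, ha⟩ := Finset.exists_max_image (Finset.univ : Finset A)
    (fun a => ∑ θ, uR a θ * μ θ) Finset.univ_nonempty
  exact ⟨a, fun a' => ha a' (Finset.mem_univ _)⟩

lemma vF_attained (uS uR : A → Θ → ℝ) (μ : Θ → ℝ) :
    ∃ a ∈ BRf uR μ, ∑ θ, uS a θ * μ θ = vF uS uR μ := by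
  have h := Set.Nonempty.csSup_mem ((BRf_nonempty uR μ).image (fun a => ∑ θ, uS a θ * μ θ))
    (Set.toFinite _)
  obtain ⟨a, ha, h⟩ := h
  exact ⟨a, ha, h⟩

lemma le_vF (uS uR : A → Θ → ℝ) (μ : Θ → ℝ) {a : A} (ha : a ∈ BRf uR μ) :
    ∑ θ, uS a θ * μ θ ≤ vF uS uR μ :=
  le_csSup (Set.toFinite _).bddAbove ⟨a, ha, rfl⟩

lemma wF_attained (uS uR : A → Θ → ℝ) (μ : Θ → ℝ) :
    ∃ a ∈ BRf uR μ, ∑ θ, uS a θ * μ θ = wF uS uR μ := by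
  have h := Set.Nonempty.csInf_mem ((BRf_nonempty uR μ).image (fun a => ∑ θ, uS a θ * μ θ))
    (Set.toFinite _)
  obtain ⟨a, ha, h⟩ := h
  exact ⟨a, ha, h⟩

lemma wF_le (uS uR : A → Θ → ℝ) (μ : Θ → ℝ) {a : A} (ha : a ∈ BRf uR μ) :
    wF uS uR μ ≤ ∑ θ, uS a θ * μ θ :=
  csInf_le (Set.toFinite _).bddBelow ⟨a, ha, rfl⟩

lemma sum_smul_right (x μ : Θ → ℝ) (t : ℝ) :
    ∑ θ, x θ * (t • μ) θ = t * ∑ θ, x θ * μ θ := by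
  rw [Finset.mul_sum]
  refine Finset.sum_congr rfl fun θ _ => ?_
  simp only [Pi.smul_apply, smul_eq_mul]; ring

lemma wF_smul (uS uR : A → Θ → ℝ) (μ : Θ → ℝ) {t : ℝ} (ht : 0 ≤ t) :
    wF uS uR (t • μ) = t * wF uS uR μ := by
  rcases ht.eq_or_lt with rfl | ht
  · obtain ⟨a, -, h⟩ := wF_attained uS uR ((0 : ℝ) • μ)
    rw [← h]; simp
  · have hBR : BRf uR (t • μ) = BRf uR μ := by
      ext a
      simp only [BRf, Set.mem_ofPred_eq, sum_smul_right]
      exact forall_congr' fun a' => mul_le_mul_iff_right₀ ht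
    apply le_antisymm
    · obtain ⟨a, ha, h⟩ := wF_attained uS uR μ
      rw [← h, ← sum_smul_right]
      exact wF_le _ _ _ (hBR ▸ ha)
    · obtain ⟨a, ha, h⟩ := wF_attained uS uR (t • μ)
      rw [← h, sum_smul_right]
      exact mul_le_mul_of_nonneg_left (wF_le _ _ _ (hBR ▸ ha)) ht.le

lemma wF_strict (uS uR : A → Θ → ℝ) (μ : Θ → ℝ) {a : A}
    (h : ∀ a', a' ≠ a → ∑ θ, uR a' θ * μ θ < ∑ θ, uR a θ * μ θ) :
    wF uS uR μ = ∑ θ, uS a θ * μ θ := by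
  obtain ⟨b, hb, h'⟩ := wF_attained uS uR μ
  by_cases hba : b = a
  · rw [← h', hba]
  · exact absurd (hb a) (not_le.2 (h b hba))

lemma abs_sum_le (uS : A → Θ → ℝ) (a : A) {μ : Θ → ℝ} (hμ : μ ∈ stdSimplex ℝ Θ) :
    |∑ θ, uS a θ * μ θ| ≤ ∑ b, ∑ θ, |uS b θ| := by
  calc |∑ θ, uS a θ * μ θ| ≤ ∑ θ, |uS a θ * μ θ| := Finset.abs_sum_le_sum_abs _ _
    _ ≤ ∑ θ, |uS a θ| := by
        refine Finset.sum_le_sum fun θ _ => ?_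
        rw [abs_mul, abs_of_nonneg (hμ.1 θ)]
        have h1 : μ θ ≤ 1 := by
          rw [← hμ.2]
          exact Finset.single_le_sum (fun i _ => hμ.1 i) (Finset.mem_univ θ)
        exact mul_le_of_le_one_right (abs_nonneg _) h1
    _ ≤ _ := Finset.single_le_sum (f := fun b => ∑ θ, |uS b θ|)
        (fun b _ => Finset.sum_nonneg fun θ _ => abs_nonneg _) (Finset.mem_univ a)

lemma continuous_coord (θ : Θ) : Continuous (fun μ : Belief Θ => μ.1 θ) :=
  (continuous_apply θ).comp continuous_subtype_val

lemma continuous_lin (x : Θ → ℝ) : Continuous (fun μ : Belief Θ => ∑ θ, x θ * μ.1 θ) :=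
  continuous_finsetSum _ fun θ _ => continuous_const.mul (continuous_coord θ)

lemma closed_BR (uR : A → Θ → ℝ) (a : A) : IsClosed {μ : Belief Θ | a ∈ BRf uR μ.1} := by
  have : {μ : Belief Θ | a ∈ BRf uR μ.1} =
      ⋂ a', {μ : Belief Θ | ∑ θ, uR a' θ * μ.1 θ ≤ ∑ θ, uR a θ * μ.1 θ} := by
    ext μ; simp [BRf]
  rw [this]
  exact isClosed_iInter fun a' => isClosed_le (continuous_lin (uR a')) (continuous_lin (uR a))

lemma measurable_vF (uS uR : A → Θ → ℝ) :
    Measurable (fun μ : Belief Θ => vF uS uR μ.1) := by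
  apply measurable_of_Ici
  intro c
  have : (fun μ : Belief Θ => vF uS uR μ.1) ⁻¹' Set.Ici c =
      ⋃ a, ({μ : Belief Θ | a ∈ BRf uR μ.1} ∩ {μ : Belief Θ | c ≤ ∑ θ, uS a θ * μ.1 θ}) := by
    ext μ
    simp only [Set.mem_preimage, Set.mem_Ici, Set.mem_iUnion, Set.mem_inter_iff, Set.mem_ofPred_eq]
    constructor
    · intro h
      obtain ⟨a, ha, h'⟩ := vF_attained uS uR μ.1
      exact ⟨a, ha, h' ▸ h⟩
    · rintro ⟨a, ha, h⟩
      exact h.trans (le_vF _ _ _ ha)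
  rw [this]
  exact MeasurableSet.iUnion fun a => (closed_BR uR a).measurableSet.inter
    (isClosed_le continuous_const (continuous_lin _)).measurableSet

lemma measurable_wF (uS uR : A → Θ → ℝ) :
    Measurable (fun μ : Belief Θ => wF uS uR μ.1) := by
  apply measurable_of_Iic
  intro c
  have : (fun μ : Belief Θ => wF uS uR μ.1) ⁻¹' Set.Iic c =
      ⋃ a, ({μ : Belief Θ | a ∈ BRf uR μ.1} ∩ {μ : Belief Θ | ∑ θ, uS a θ * μ.1 θ ≤ c}) := by
    ext μ
    simp only [Set.mem_preimage, Set.mem_Iic, Set.mem_iUnion, Set.mem_inter_iff, Set.mem_ofPred_eq]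
    constructor
    · intro h
      obtain ⟨a, ha, h'⟩ := wF_attained uS uR μ.1
      exact ⟨a, ha, h' ▸ h⟩
    · rintro ⟨a, ha, h⟩
      exact (wF_le _ _ _ ha).trans h
  rw [this]
  exact MeasurableSet.iUnion fun a => (closed_BR uR a).measurableSet.inter
    (isClosed_le (continuous_lin _) continuous_const).measurableSet

lemma abs_vF_le (uS uR : A → Θ → ℝ) (μ : Belief Θ) :
    |vF uS uR μ.1| ≤ ∑ b, ∑ θ, |uS b θ| := by
  obtain ⟨a, -, h⟩ := vF_attained uS uR μ.1
  rw [← h]; exact abs_sum_le uS a μ.2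

lemma abs_wF_le (uS uR : A → Θ → ℝ) (μ : Belief Θ) :
    |wF uS uR μ.1| ≤ ∑ b, ∑ θ, |uS b θ| := by
  obtain ⟨a, -, h⟩ := wF_attained uS uR μ.1
  rw [← h]; exact abs_sum_le uS a μ.2

lemma integrable_vF (uS uR : A → Θ → ℝ) (p : Measure (Belief Θ)) [IsFiniteMeasure p] :
    Integrable (fun μ : Belief Θ => vF uS uR μ.1) p :=
  Integrable.of_bound (measurable_vF uS uR).aestronglyMeasurable _
    (Filter.Eventually.of_forall fun μ => abs_vF_le uS uR μ)

lemma integrable_wF (uS uR : A → Θ → ℝ) (p : Measure (Belief Θ)) [IsFiniteMeasure p] :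
    Integrable (fun μ : Belief Θ => wF uS uR μ.1) p :=
  Integrable.of_bound (measurable_wF uS uR).aestronglyMeasurable _
    (Filter.Eventually.of_forall fun μ => abs_wF_le uS uR μ)

lemma wF_le_vF (uS uR : A → Θ → ℝ) (μ : Θ → ℝ) : wF uS uR μ ≤ vF uS uR μ := by
  obtain ⟨a, ha, h⟩ := vF_attained uS uR μ
  rw [← h]; exact wF_le _ _ _ ha

lemma integral_le_bound (p : Measure (Belief Θ)) [IsProbabilityMeasure p]
    {f : Belief Θ → ℝ} {M : ℝ} (hf : ∀ μ, |f μ| ≤ M) : ∫ μ, f μ ∂p ≤ M := by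
  have := norm_integral_le_of_norm_le_const (μ := p) (f := f) (C := M)
    (Filter.Eventually.of_forall hf)
  simp at this
  exact (le_abs_self _).trans this

/-- Finite splittings give information policies. -/
lemma exists_policy {ι : Type} [Fintype ι] (uS uR : A → Θ → ℝ) {μ0 : Θ → ℝ}
    (hμ0 : μ0 ∈ stdSimplex ℝ Θ) (n : ι → Θ → ℝ) (hn : ∀ i θ, 0 ≤ n i θ)
    (hsum : ∀ θ, ∑ i, n i θ = μ0 θ) :
    ∃ p ∈ IPolF μ0, ∫ μ, wF uS uR (μ : Belief Θ).1 ∂(p : Measure (Belief Θ)) =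
      ∑ i, wF uS uR (n i) := by
  have hN0 : ∀ i, 0 ≤ ∑ θ, n i θ := fun i => Finset.sum_nonneg fun θ _ => hn i θ
  have hpt : ∀ i, ∃ b : Belief Θ, n i = (∑ θ, n i θ) • b.1 := by
    intro i
    by_cases h : ∑ θ, n i θ = 0
    · refine ⟨⟨μ0, hμ0⟩, ?_⟩
      rw [h]
      ext θ
      have := (Finset.sum_eq_zero_iff_of_nonneg (fun θ _ => hn i θ)).1 h θ (Finset.mem_univ _)
      simp [this]
    · refine ⟨⟨(∑ θ, n i θ)⁻¹ • n i, fun θ => mul_nonneg (inv_nonneg.2 (hN0 i)) (hn i θ), ?_⟩, ?_⟩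
      · simp only [Pi.smul_apply, smul_eq_mul, ← Finset.mul_sum]
        exact inv_mul_cancel₀ h
      · simp only [smul_smul]
        rw [mul_inv_cancel₀ h, one_smul]
  choose b hb using hpt
  let P : Measure (Belief Θ) := ∑ i, ENNReal.ofReal (∑ θ, n i θ) • Measure.dirac (b i)
  have hP : IsProbabilityMeasure P := by
    constructor
    simp only [P, Measure.coe_finsetSum, Finset.sum_apply, Measure.smul_apply,
      measure_univ, smul_eq_mul, mul_one]
    rw [← ENNReal.ofReal_sum_of_nonneg (fun i _ => hN0 i), Finset.sum_comm]
    simp only [hsum, hμ0.2, ENNReal.ofReal_one]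
  have hint : ∀ f : Belief Θ → ℝ, Measurable f → (∃ M, ∀ μ, |f μ| ≤ M) →
      ∫ μ, f μ ∂P = ∑ i, (∑ θ, n i θ) * f (b i) := by
    rintro f hf ⟨M, hM⟩
    have hfi : ∀ q : Measure (Belief Θ), IsFiniteMeasure q → Integrable f q := fun q _ =>
      Integrable.of_bound hf.aestronglyMeasurable M (Filter.Eventually.of_forall hM)
    simp only [P]
    rw [integral_finsetSum_measure]
    · refine Finset.sum_congr rfl fun i _ => ?_
      rw [integral_smul_measure, integral_dirac' _ _ hf.stronglyMeasurable,
        ENNReal.toReal_ofReal (hN0 i), smul_eq_mul]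
    · intro i _
      exact (hfi _ inferInstance).smul_measure ENNReal.ofReal_ne_top
  refine ⟨⟨P, hP⟩, ?_, ?_⟩
  · intro θ
    simp only [ProbabilityMeasure.coe_mk]
    rw [hint (fun μ => μ.1 θ) (continuous_coord θ).measurable ⟨1, fun μ => ?_⟩, ← hsum θ]
    · refine Finset.sum_congr rfl fun i _ => ?_
      conv_rhs => rw [hb i]
      rfl
    · rw [abs_of_nonneg (μ.2.1 θ), ← μ.2.2]
      exact Finset.single_le_sum (fun i _ => μ.2.1 i) (Finset.mem_univ θ)
  · simp only [ProbabilityMeasure.coe_mk]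
    rw [hint _ (measurable_wF uS uR) ⟨_, abs_wF_le uS uR⟩]
    refine Finset.sum_congr rfl fun i _ => ?_
    conv_rhs => rw [hb i, wF_smul _ _ _ (hN0 i)]

open Classical in
/-- Aggregation of an information policy by recommended actions. -/
lemma exists_split (uS uR : A → Θ → ℝ) {μ0 : Θ → ℝ} {p : ProbabilityMeasure (Belief Θ)}
    (hp : p ∈ IPolF μ0) :
    ∃ m : A → Θ → ℝ, (∀ a θ, 0 ≤ m a θ) ∧ (∀ θ, ∑ a, m a θ = μ0 θ) ∧
      (∀ a, a ∈ BRf uR (m a)) ∧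
      ∫ μ, vF uS uR (μ : Belief Θ).1 ∂(p : Measure (Belief Θ)) =
        ∑ a, ∑ θ, uS a θ * m a θ := by
  let F : A → Set (Belief Θ) := fun a =>
    {μ | a ∈ BRf uR μ.1} ∩ {μ | ∑ θ, uS a θ * μ.1 θ = vF uS uR μ.1}
  have hF : ∀ a, MeasurableSet (F a) := fun a =>
    (closed_BR uR a).measurableSet.inter
      (measurableSet_eq_fun (continuous_lin _).measurable (measurable_vF uS uR))
  let g : A → Belief Θ → ℝ := fun a => (F a).indicator 1
  have hg0 : ∀ a μ, 0 ≤ g a μ := fun a μ => Set.indicator_nonneg (fun _ _ => zero_le_one) _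
  have hgm : ∀ a, Measurable (g a) := fun a => measurable_one.indicator (hF a)
  have hgpos : ∀ μ, 0 < ∑ a, g a μ := by
    intro μ
    obtain ⟨a, ha, h⟩ := vF_attained uS uR μ.1
    have : g a μ = 1 := Set.indicator_of_mem (show μ ∈ F a from ⟨ha, h⟩) _
    calc (0 : ℝ) < g a μ := by rw [this]; exact one_pos
      _ ≤ _ := Finset.single_le_sum (fun b _ => hg0 b μ) (Finset.mem_univ a)
  let f : A → Belief Θ → ℝ := fun a μ => g a μ / ∑ b, g b μ
  have hf0 : ∀ a μ, 0 ≤ f a μ := fun a μ => div_nonneg (hg0 a μ) (hgpos μ).le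
  have hfm : ∀ a, Measurable (f a) := fun a =>
    (hgm a).div (Finset.measurable_fun_sum _ fun b _ => hgm b)
  have hfs : ∀ μ, ∑ a, f a μ = 1 := by
    intro μ
    simp only [f]
    rw [← Finset.sum_div, div_self (hgpos μ).ne']
  have hf1 : ∀ a μ, f a μ ≤ 1 := fun a μ => by
    rw [← hfs μ]; exact Finset.single_le_sum (fun b _ => hf0 b μ) (Finset.mem_univ a)
  have hfF : ∀ a μ, μ ∉ F a → f a μ = 0 := fun a μ h => by
    simp only [f, g, Set.indicator_of_notMem h, zero_div]
  have hint : ∀ a θ, Integrable (fun μ : Belief Θ => f a μ * μ.1 θ) (p : Measure (Belief Θ)) := by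
    intro a θ
    refine Integrable.of_bound ((hfm a).mul (continuous_coord θ).measurable).aestronglyMeasurable 1
      (Filter.Eventually.of_forall fun μ => ?_)
    rw [Real.norm_of_nonneg (mul_nonneg (hf0 a μ) (μ.2.1 θ))]
    have : μ.1 θ ≤ 1 := by
      rw [← μ.2.2]
      exact Finset.single_le_sum (fun i _ => μ.2.1 i) (Finset.mem_univ θ)
    exact mul_le_one₀ (hf1 a μ) (μ.2.1 θ) this
  have hlin : ∀ (x : Θ → ℝ) a, ∑ θ, x θ * ∫ μ, f a μ * μ.1 θ ∂(p : Measure (Belief Θ)) =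
      ∫ μ, f a μ * ∑ θ, x θ * μ.1 θ ∂(p : Measure (Belief Θ)) := by
    intro x a
    simp only [← integral_const_mul]
    rw [← integral_finsetSum _ fun θ _ => (hint a θ).const_mul _]
    congr 1; ext μ
    rw [Finset.mul_sum]
    exact Finset.sum_congr rfl fun θ _ => by ring
  have hlini : ∀ (x : Θ → ℝ) a, Integrable (fun μ : Belief Θ => f a μ * ∑ θ, x θ * μ.1 θ)
      (p : Measure (Belief Θ)) := by
    intro x a
    refine (integrable_finsetSum Finset.univ fun θ _ => (hint a θ).const_mul (x θ)).congr
      (Filter.Eventually.of_forall fun μ => ?_)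
    simp only [Finset.mul_sum]
    exact Finset.sum_congr rfl fun θ _ => by ring
  refine ⟨fun a θ => ∫ μ, f a μ * μ.1 θ ∂(p : Measure (Belief Θ)), ?_, ?_, ?_, ?_⟩
  · exact fun a θ => integral_nonneg fun μ => mul_nonneg (hf0 a μ) (μ.2.1 θ)
  · intro θ
    rw [← hp θ, ← integral_finsetSum _ fun a _ => hint a θ]
    congr 1; ext μ
    rw [← Finset.sum_mul, hfs, one_mul]
  · intro a a'
    simp only [hlin]
    refine integral_mono (hlini _ _) (hlini _ _) fun μ => ?_
    by_cases h : μ ∈ F a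
    · exact mul_le_mul_of_nonneg_left (h.1 a') (hf0 a μ)
    · simp [hfF a μ h]
  · simp only [hlin]
    rw [← integral_finsetSum _ fun a _ => hlini _ a]
    congr 1; ext μ
    have : ∀ a, f a μ * ∑ θ, uS a θ * μ.1 θ = f a μ * vF uS uR μ.1 := by
      intro a
      by_cases h : μ ∈ F a
      · rw [h.2]
      · simp [hfF a μ h]
    simp only [this]
    rw [← Finset.sum_mul, hfs, one_mul]

lemma bddAbove_w (uS uR : A → Θ → ℝ) (μ0 : Θ → ℝ) :
    BddAbove ((fun p : ProbabilityMeasure (Belief Θ) =>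
      ∫ μ, wF uS uR (μ : Belief Θ).1 ∂(p : Measure (Belief Θ))) '' IPolF μ0) := by
  refine ⟨∑ b, ∑ θ, |uS b θ|, ?_⟩
  rintro _ ⟨p, -, rfl⟩
  exact integral_le_bound _ (abs_wF_le uS uR)

lemma bddAbove_v (uS uR : A → Θ → ℝ) (μ0 : Θ → ℝ) :
    BddAbove ((fun p : ProbabilityMeasure (Belief Θ) =>
      ∫ μ, vF uS uR (μ : Belief Θ).1 ∂(p : Measure (Belief Θ))) '' IPolF μ0) := by
  refine ⟨∑ b, ∑ θ, |uS b θ|, ?_⟩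
  rintro _ ⟨p, -, rfl⟩
  exact integral_le_bound _ (abs_vF_le uS uR)

lemma IPolF_nonempty {μ0 : Θ → ℝ} (h : μ0 ∈ stdSimplex ℝ Θ) : (IPolF μ0).Nonempty := by
  obtain ⟨p, hp, -⟩ := exists_policy (A := Unit) (ι := Unit) (fun _ _ => 0) (fun _ _ => 0) h
    (fun _ => μ0) (fun _ => h.1) (by simp)
  exact ⟨p, hp⟩

lemma value_le (uS uR : A → Θ → ℝ) (hU : GoodU uR) {μ0 : Θ → ℝ} (hμ0 : μ0 ∈ stdSimplex ℝ Θ)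
    (m : A → Θ → ℝ) (hm0 : ∀ a θ, 0 ≤ m a θ) (hms : ∀ θ, ∑ a, m a θ = μ0 θ)
    (hmB : ∀ a, a ∈ BRf uR (m a)) :
    ∑ a, ∑ θ, uS a θ * m a θ ≤ wHatF uS uR μ0 := by
  classical
  let S : Finset Θ := Finset.univ.filter fun θ => μ0 θ ≠ 0
  have hS : ∀ θ, θ ∉ S → μ0 θ = 0 := fun θ h => by simpa [S] using h
  have hmS : ∀ a θ, θ ∉ S → m a θ = 0 := by
    intro a θ h
    have h1 := hms θ
    rw [hS θ h] at h1
    exact (Finset.sum_eq_zero_iff_of_nonneg (fun a _ => hm0 a θ)).1 h1 a (Finset.mem_univ _)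
  -- strict points
  have hκ : ∀ a, ∃ κ : Θ → ℝ, (∀ θ, 0 ≤ κ θ) ∧ (∀ θ, κ θ ≤ 1) ∧ (∀ θ ∉ S, κ θ = 0) ∧
      ((m a = 0 ∧ κ = 0) ∨
        ∀ a', a' ≠ a → ∑ θ, uR a' θ * κ θ < ∑ θ, uR a θ * κ θ) := by
    intro a
    by_cases h : m a = 0
    · exact ⟨0, by simp, by simp, by simp, Or.inl ⟨h, rfl⟩⟩
    · have hN0 : 0 ≤ ∑ θ, m a θ := Finset.sum_nonneg fun θ _ => hm0 a θ
      have hN : ∑ θ, m a θ ≠ 0 := by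
        intro h0
        apply h
        ext θ
        exact (Finset.sum_eq_zero_iff_of_nonneg (fun θ _ => hm0 a θ)).1 h0 θ (Finset.mem_univ _)
      obtain ⟨κ, hκ, hκS, hκs⟩ := hU S a ⟨(∑ θ, m a θ)⁻¹ • m a,
        ⟨fun θ => mul_nonneg (inv_nonneg.2 hN0) (hm0 a θ), by
          simp only [Pi.smul_apply, smul_eq_mul, ← Finset.mul_sum]
          exact inv_mul_cancel₀ hN⟩,
        fun θ hθ => by simp [hmS a θ hθ],
        fun a' => by
          simp only [sum_smul_right]
          exact mul_le_mul_of_nonneg_left (hmB a a') (inv_nonneg.2 hN0)⟩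
      refine ⟨κ, hκ.1, fun θ => ?_, hκS, Or.inr hκs⟩
      rw [← hκ.2]
      exact Finset.single_le_sum (fun i _ => hκ.1 i) (Finset.mem_univ θ)
  choose κ hκ0 hκ1 hκS hκs using hκ
  -- small constant
  obtain ⟨c, hc, hcle⟩ : ∃ c : ℝ, 0 < c ∧ ∀ θ, c * ∑ a, κ a θ ≤ μ0 θ := by
    have hSne : S.Nonempty := by
      by_contra h
      rw [Finset.not_nonempty_iff_eq_empty] at h
      have h2 := hμ0.2
      rw [Finset.sum_eq_zero (fun θ _ => hS θ (by simp [h]))] at h2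
      exact zero_ne_one h2
    obtain ⟨θ0, hθ0, hmin⟩ := Finset.exists_min_image S μ0 hSne
    have hpos : 0 < μ0 θ0 := lt_of_le_of_ne (hμ0.1 θ0) (Ne.symm (by simpa [S] using hθ0))
    have hcard : (0 : ℝ) < Fintype.card A := by exact_mod_cast Fintype.card_pos
    refine ⟨μ0 θ0 / Fintype.card A, div_pos hpos hcard, fun θ => ?_⟩
    by_cases hθ : θ ∈ S
    · have h1 : ∑ a, κ a θ ≤ Fintype.card A := by
        calc ∑ a, κ a θ ≤ ∑ a : A, (1 : ℝ) := Finset.sum_le_sum fun a _ => hκ1 a θ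
          _ = _ := by simp
      calc μ0 θ0 / Fintype.card A * ∑ a, κ a θ
          ≤ μ0 θ0 / Fintype.card A * Fintype.card A :=
            mul_le_mul_of_nonneg_left h1 (div_pos hpos hcard).le
        _ = μ0 θ0 := by field_simp
        _ ≤ μ0 θ := hmin θ hθ
    · rw [hS θ hθ, Finset.sum_eq_zero (fun a _ => hκS a θ hθ), mul_zero]
  let r : Θ → ℝ := fun θ => μ0 θ - c * ∑ a, κ a θ
  let V := ∑ a, ∑ θ, uS a θ * m a θ
  let K := c * (∑ a, ∑ θ, uS a θ * κ a θ) + wF uS uR r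
  have key : ∀ δ : ℝ, 0 < δ → δ ≤ 1 → (1 - δ) * V + δ * K ≤ wHatF uS uR μ0 := by
    intro δ hδ hδ1
    let n : Option A → Θ → ℝ := fun o =>
      o.elim (δ • r) (fun a => (1 - δ) • m a + (δ * c) • κ a)
    obtain ⟨p, hp, hpe⟩ := exists_policy (ι := Option A) uS uR hμ0 n (by
      rintro (_ | a) θ
      · exact mul_nonneg hδ.le (sub_nonneg.2 (hcle θ))
      · exact add_nonneg (mul_nonneg (sub_nonneg.2 hδ1) (hm0 a θ))
          (mul_nonneg (mul_pos hδ hc).le (hκ0 a θ))) (by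
      intro θ
      simp only [Fintype.sum_option, n, Option.elim, Pi.smul_apply, Pi.add_apply, smul_eq_mul,
        Finset.sum_add_distrib, ← Finset.mul_sum, hms, r]
      ring)
    have hsplit : ∀ (x : Θ → ℝ) a, ∑ θ, x θ * ((1 - δ) • m a + (δ * c) • κ a) θ =
        (1 - δ) * ∑ θ, x θ * m a θ + (δ * c) * ∑ θ, x θ * κ a θ := by
      intro x a
      rw [← sum_smul_right, ← sum_smul_right, ← Finset.sum_add_distrib]
      exact Finset.sum_congr rfl fun θ _ => by rw [Pi.add_apply, mul_add]
    have hw : ∀ a, wF uS uR ((1 - δ) • m a + (δ * c) • κ a) =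
        (1 - δ) * ∑ θ, uS a θ * m a θ + (δ * c) * ∑ θ, uS a θ * κ a θ := by
      intro a
      rcases hκs a with ⟨h1, h2⟩ | h
      · rw [h1, h2]
        have := wF_smul uS uR (0 : Θ → ℝ) (le_refl (0 : ℝ))
        simpa using this
      · rw [← hsplit]
        apply wF_strict
        intro a' ha'
        rw [hsplit, hsplit]
        exact add_lt_add_of_le_of_lt
          (mul_le_mul_of_nonneg_left (hmB a a') (sub_nonneg.2 hδ1))
          (mul_lt_mul_of_pos_left (h a' ha') (mul_pos hδ hc))
    have hval : ∑ i, wF uS uR (n i) = (1 - δ) * V + δ * K := by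
      simp only [Fintype.sum_option, n, Option.elim, hw, wF_smul uS uR r hδ.le,
        Finset.sum_add_distrib, ← Finset.mul_sum, V, K]
      ring
    rw [← hval, ← hpe]
    exact le_csSup (bddAbove_w uS uR μ0) ⟨p, hp, rfl⟩
  change V ≤ _
  by_contra hlt
  push Not at hlt
  set W := wHatF uS uR μ0
  have hd : 0 < V - W := sub_pos.2 hlt
  have hD : 0 < V - W + |V - K| + 1 := by positivity
  have hkey := key ((V - W) / (V - W + |V - K| + 1)) (div_pos hd hD)
    ((div_le_one hD).2 (by linarith [abs_nonneg (V - K)]))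
  set δ := (V - W) / (V - W + |V - K| + 1) with hδ
  have hδpos : 0 < δ := div_pos hd hD
  have h1 : δ * (V - W + |V - K| + 1) = V - W := div_mul_cancel₀ _ hD.ne'
  have h2 : δ * (V - K) ≤ δ * |V - K| := mul_le_mul_of_nonneg_left (le_abs_self _) hδpos.le
  nlinarith [mul_pos hδpos hd]

lemma unique_of_good (uS uR : A → Θ → ℝ) (hU : GoodU uR) {μ0 : Θ → ℝ}
    (hμ0 : μ0 ∈ stdSimplex ℝ Θ) : wHatF uS uR μ0 = vHatF uS uR μ0 := by
  apply le_antisymm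
  · apply csSup_le ((IPolF_nonempty hμ0).image _)
    rintro _ ⟨p, hp, rfl⟩
    refine le_trans ?_ (le_csSup (bddAbove_v uS uR μ0) ⟨p, hp, rfl⟩)
    exact integral_mono (integrable_wF uS uR _) (integrable_vF uS uR _)
      fun μ => wF_le_vF uS uR μ.1
  · apply csSup_le ((IPolF_nonempty hμ0).image _)
    rintro _ ⟨p, hp, rfl⟩
    obtain ⟨m, hm0, hms, hmB, hv⟩ := exists_split uS uR hp
    simp only [hv]
    exact value_le uS uR hU hμ0 m hm0 hms hmB

/-- Bad receiver utilities for a face and an action. -/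
def BadU (S : Finset Θ) (a : A) : Set (A × Θ → ℝ) :=
  {u | (∃ μ : Θ → ℝ, (μ ∈ stdSimplex ℝ Θ ∧ ∀ θ ∉ S, μ θ = 0) ∧
      a ∈ BRf (fun a θ => u (a, θ)) μ)} ∩
  {u | ∀ μ : Θ → ℝ, (μ ∈ stdSimplex ℝ Θ ∧ ∀ θ ∉ S, μ θ = 0) →
      ∃ a', a' ≠ a ∧ ∑ θ, u (a, θ) * μ θ ≤ ∑ θ, u (a', θ) * μ θ}

lemma badU_closed (S : Finset Θ) (a : A) : IsClosed (BadU S a) := by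
  have hK : IsCompact {μ : Θ → ℝ | μ ∈ stdSimplex ℝ Θ ∧ ∀ θ ∉ S, μ θ = 0} := by
    apply (isCompact_stdSimplex ℝ Θ).inter_right
    have : {μ : Θ → ℝ | ∀ θ ∉ S, μ θ = 0} = ⋂ θ, ⋂ _ : θ ∉ S, {μ : Θ → ℝ | μ θ = 0} := by
      ext μ; simp
    change IsClosed {μ : Θ → ℝ | ∀ θ ∉ S, μ θ = 0}
    rw [this]
    exact isClosed_iInter fun θ => isClosed_iInter fun _ =>
      isClosed_eq (continuous_apply θ) continuous_const
  apply IsClosed.inter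
  · have := isCompact_iff_compactSpace.1 hK
    have hcl : IsClosed {x : (A × Θ → ℝ) × {μ : Θ → ℝ | μ ∈ stdSimplex ℝ Θ ∧ ∀ θ ∉ S, μ θ = 0} |
        a ∈ BRf (fun a θ => x.1 (a, θ)) x.2.1} := by
      have heq : {x : (A × Θ → ℝ) × {μ : Θ → ℝ | μ ∈ stdSimplex ℝ Θ ∧ ∀ θ ∉ S, μ θ = 0} |
          a ∈ BRf (fun a θ => x.1 (a, θ)) x.2.1} =
          ⋂ a', {x | ∑ θ, x.1 (a', θ) * x.2.1 θ ≤ ∑ θ, x.1 (a, θ) * x.2.1 θ} := by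
        ext x; simp [BRf]
      rw [heq]
      have hc : ∀ b : A, Continuous (fun x : (A × Θ → ℝ) ×
          {μ : Θ → ℝ | μ ∈ stdSimplex ℝ Θ ∧ ∀ θ ∉ S, μ θ = 0} =>
          ∑ θ, x.1 (b, θ) * x.2.1 θ) := fun b =>
        continuous_finsetSum _ fun θ _ =>
          ((continuous_apply (b, θ)).comp continuous_fst).mul
            ((continuous_apply θ).comp (continuous_subtype_val.comp continuous_snd))
      exact isClosed_iInter fun a' => isClosed_le (hc a') (hc a)
    have := isClosedMap_fst_of_compactSpace _ hcl
    convert this using 1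
    ext u
    constructor
    · rintro ⟨μ, hμ, h⟩
      exact ⟨(u, ⟨μ, hμ⟩), h, rfl⟩
    · rintro ⟨⟨u', μ⟩, h, rfl⟩
      exact ⟨μ.1, μ.2, h⟩
  · simp only [Set.ofPred_forall]
    refine isClosed_iInter fun μ => isClosed_iInter fun _ => ?_
    have : {u : A × Θ → ℝ | ∃ a', a' ≠ a ∧ ∑ θ, u (a, θ) * μ θ ≤ ∑ θ, u (a', θ) * μ θ} =
        ⋃ a' : A, {u | a' ≠ a ∧ ∑ θ, u (a, θ) * μ θ ≤ ∑ θ, u (a', θ) * μ θ} := by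
      ext; simp
    rw [this]
    refine isClosed_iUnion_of_finite fun a' => ?_
    by_cases h : a' = a
    · simp [h]
    · simp only [ne_eq, h, not_false_eq_true, true_and]
      exact isClosed_le (by fun_prop) (by fun_prop)

open Classical in
lemma badU_shift (S : Finset Θ) (a : A) (u : A × Θ → ℝ) {t : ℝ} (ht : 0 < t)
    (h1 : u ∈ BadU S a)
    (h2 : u + t • (fun x : A × Θ => if x.1 = a then (1 : ℝ) else 0) ∈ BadU S a) : False := by
  obtain ⟨⟨μ, hμ, hB⟩, -⟩ := h1
  obtain ⟨a', ha', hle⟩ := h2.2 μ hμ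
  have hB' := hB a'
  simp only [Pi.add_apply, Pi.smul_apply, smul_eq_mul, if_true, if_neg ha', mul_one, mul_zero,
    add_zero, add_mul, Finset.sum_add_distrib, ← Finset.mul_sum, hμ.1.2] at hle
  linarith

open Classical Pointwise in
lemma badU_null (S : Finset Θ) (a : A) : volume (BadU S a) = 0 := by
  let e : A × Θ → ℝ := fun x => if x.1 = a then (1 : ℝ) else 0
  have hlt : ∀ i j : ℕ, i < j → ∀ x, x ∈ ({(1 / ((i : ℝ) + 1)) • e} : Set (A × Θ → ℝ)) + BadU S a →
      x ∈ ({(1 / ((j : ℝ) + 1)) • e} : Set (A × Θ → ℝ)) + BadU S a → False := by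
    intro i j hij x hi hj
    rw [Set.singleton_add] at hi hj
    obtain ⟨y, hy, rfl⟩ := hi
    obtain ⟨z, hz, hzy⟩ := hj
    have hlt : (1 : ℝ) / ((j : ℝ) + 1) < 1 / ((i : ℝ) + 1) := Nat.one_div_lt_one_div hij
    have hz' : z = y + (1 / ((i : ℝ) + 1) - 1 / ((j : ℝ) + 1)) • e := by
      rw [sub_smul]
      simp only at hzy
      have := eq_sub_of_add_eq' hzy
      rw [this]; abel
    rw [hz'] at hz
    exact badU_shift S a y (sub_pos.2 hlt) hy hz
  apply Measure.addHaar_eq_zero_of_disjoint_translates volume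
    (fun n : ℕ => (1 / ((n : ℝ) + 1)) • e) ?_ ?_ (badU_closed S a).measurableSet
  · have : Filter.Tendsto (fun n : ℕ => (1 / ((n : ℝ) + 1)) • e) Filter.atTop
        (nhds ((0 : ℝ) • e)) := tendsto_one_div_add_atTop_nhds_zero_nat.smul_const e
    exact Metric.isBounded_range_of_tendsto _ this
  · intro i j hij
    rw [Function.onFun, Set.disjoint_left]
    intro x hi hj
    rcases lt_or_gt_of_ne hij with h | h
    · exact hlt i j h x hi hj
    · exact hlt j i h x hj hi

end aux

/-- **Generic uniqueness.** For finite action and state spaces, there is an open dense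
full-Lebesgue-measure set of receiver utilities such that, for every prior and every
sender utility, the sender has a unique equilibrium payoff. -/
theorem generic_unique_payoff
    (A Θ : Type) [Fintype A] [Fintype Θ] [Nonempty A] [Nonempty Θ] :
    ∃ UR : Set (A × Θ → ℝ), IsOpen UR ∧ Dense UR ∧ volume URᶜ = 0 ∧
      ∀ uR ∈ UR, ∀ μ0 ∈ stdSimplex ℝ Θ, ∀ uS : A × Θ → ℝ,
        wHatF (fun a θ => uS (a, θ)) (fun a θ => uR (a, θ)) μ0 =
          vHatF (fun a θ => uS (a, θ)) (fun a θ => uR (a, θ)) μ0 := by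
  have hnull : volume (⋃ x : Finset Θ × A, BadU x.1 x.2) = 0 :=
    measure_iUnion_null fun x => badU_null x.1 x.2
  have hclosed : IsClosed (⋃ x : Finset Θ × A, BadU x.1 x.2) :=
    isClosed_iUnion_of_finite fun x => badU_closed x.1 x.2
  refine ⟨(⋃ x : Finset Θ × A, BadU x.1 x.2)ᶜ, hclosed.isOpen_compl, ?_, ?_, ?_⟩
  · rw [← interior_eq_empty_iff_dense_compl]
    exact Measure.interior_eq_empty_of_null hnull
  · rw [compl_compl]; exact hnull
  · intro uR hU μ0 hμ0 uS
    apply unique_of_good _ _ _ hμ0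
    rintro S a ⟨μ, hμ, hμS, hB⟩
    by_contra hcon
    apply hU
    refine Set.mem_iUnion.2 ⟨(S, a), ⟨μ, ⟨hμ, hμS⟩, hB⟩, ?_⟩
    rintro ν ⟨hν, hνS⟩
    by_contra h
    push Not at h
    exact hcon ⟨ν, hν, hνS, h⟩
end

section
/- Suppose the environment is ordered, and for each θ̄ ∈ { min supp μ0, max supp μ0 }, either μ0({θ̄}) = 0 or A*_R(δ_{θ̄}) is a singleton (where δ_{θ̄} is the point mass at θ̄). Then ŵ(μ0) = v̂(μ0), i.e., the sender has a unique equilibrium payoff. -/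
open MeasureTheory


/-- The Borel σ-algebra on the space of probability measures (the σ-algebra generated by
evaluation maps, i.e. the subspace σ-algebra of the Giry σ-algebra; for metrizable spaces
this is the Borel σ-algebra of the weak* topology). -/
instance probMeasurableSpace {Ω : Type*} [MeasurableSpace Ω] :
    MeasurableSpace (ProbabilityMeasure Ω) :=
  MeasurableSpace.comap (fun μ => (μ : Measure Ω)) inferInstance

/-- Sender's expected utility from action `a` at belief `μ`. -/
noncomputable def senderEU {A Θ : Type*} [MeasurableSpace Θ]
    (uS : A → Θ → ℝ) (μ : ProbabilityMeasure Θ) (a : A) : ℝ :=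
  ∫ θ, uS a θ ∂(μ : Measure Θ)

/-- The receiver's best responses `A*_R(μ)` at belief `μ`. -/
def bestResponses {A Θ : Type*} [MeasurableSpace Θ]
    (uR : A → Θ → ℝ) (μ : ProbabilityMeasure Θ) : Set A :=
  {a | ∀ a' : A, ∫ θ, uR a' θ ∂(μ : Measure Θ) ≤ ∫ θ, uR a θ ∂(μ : Measure Θ)}

/-- The sender's upper value function `v`. -/
noncomputable def vFun {A Θ : Type*} [MeasurableSpace Θ]
    (uS uR : A → Θ → ℝ) (μ : ProbabilityMeasure Θ) : ℝ :=
  sSup (senderEU uS μ '' bestResponses uR μ)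

/-- The sender's lower value function `w`. -/
noncomputable def wFun {A Θ : Type*} [MeasurableSpace Θ]
    (uS uR : A → Θ → ℝ) (μ : ProbabilityMeasure Θ) : ℝ :=
  sInf (senderEU uS μ '' bestResponses uR μ)

/-- The set `I(μ0)` of information policies: distributions over posteriors with
barycenter equal to the prior `μ0`. -/
def infoPolicies {Θ : Type*} [MeasurableSpace Θ] (μ0 : ProbabilityMeasure Θ) :
    Set (ProbabilityMeasure (ProbabilityMeasure Θ)) :=
  {p | ∀ B : Set Θ, MeasurableSet B →
    ∫ ν, ((ν : Measure Θ) B).toReal ∂(p : Measure (ProbabilityMeasure Θ))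
      = ((μ0 : Measure Θ) B).toReal}

/-- `v̂(μ0)`: the sender's best equilibrium (Bayesian persuasion) value. -/
noncomputable def vHat {A Θ : Type*} [MeasurableSpace Θ]
    (uS uR : A → Θ → ℝ) (μ0 : ProbabilityMeasure Θ) : ℝ :=
  sSup ((fun p : ProbabilityMeasure (ProbabilityMeasure Θ) =>
    ∫ ν, vFun uS uR ν ∂(p : Measure (ProbabilityMeasure Θ))) '' infoPolicies μ0)

/-- `ŵ(μ0)`: the sender's worst equilibrium value. -/
noncomputable def wHat {A Θ : Type*} [MeasurableSpace Θ]
    (uS uR : A → Θ → ℝ) (μ0 : ProbabilityMeasure Θ) : ℝ :=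
  sSup ((fun p : ProbabilityMeasure (ProbabilityMeasure Θ) =>
    ∫ ν, wFun uS uR ν ∂(p : Measure (ProbabilityMeasure Θ))) '' infoPolicies μ0)

/-- The (topological) support of a probability measure. -/
def msupport {Θ : Type*} [MeasurableSpace Θ] [TopologicalSpace Θ]
    (μ : ProbabilityMeasure Θ) : Set Θ :=
  {θ | ∀ U : Set Θ, IsOpen U → θ ∈ U → (μ : Measure Θ) U ≠ 0}

/-- The point mass at `x` as a probability measure. -/
noncomputable def diracPM {X : Type*} [MeasurableSpace X] (x : X) : ProbabilityMeasure X :=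
  ⟨MeasureTheory.Measure.dirac x, MeasureTheory.Measure.dirac.isProbabilityMeasure⟩


section Helpers
set_option linter.unusedSectionVars false
open Filter Topology

section General
variable {A Θ : Type*} [MetricSpace A] [CompactSpace A] [Nonempty A]
  [MetricSpace Θ] [CompactSpace Θ] [MeasurableSpace Θ] [BorelSpace Θ]

/-- A uniform bound for a jointly continuous utility. -/
lemma exists_bound {u : A → Θ → ℝ} (hu : Continuous fun p : A × Θ => u p.1 p.2) :
    ∃ M : ℝ, 0 ≤ M ∧ ∀ a θ, |u a θ| ≤ M := by
  obtain ⟨M, hM⟩ := isCompact_univ.exists_bound_of_continuousOn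
    (f := fun p : A × Θ => u p.1 p.2) hu.continuousOn
  refine ⟨max M 0, le_max_right _ _, fun a θ => le_max_of_le_left ?_⟩
  simpa using hM (a, θ) trivial

lemma cont_right {u : A → Θ → ℝ} (hu : Continuous fun p : A × Θ => u p.1 p.2) (a : A) :
    Continuous (u a) := hu.comp (Continuous.prodMk continuous_const continuous_id)

lemma cont_left {u : A → Θ → ℝ} (hu : Continuous fun p : A × Θ => u p.1 p.2) (θ : Θ) :
    Continuous (fun a => u a θ) := hu.comp (Continuous.prodMk continuous_id continuous_const)

lemma integrable_cont {f : Θ → ℝ} (hf : Continuous f) (μ : Measure Θ) [IsFiniteMeasure μ] :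
    Integrable f μ :=
  hf.integrable_of_hasCompactSupport (HasCompactSupport.of_compactSpace f)

lemma eu_cont {u : A → Θ → ℝ} (hu : Continuous fun p : A × Θ => u p.1 p.2)
    (μ : ProbabilityMeasure Θ) : Continuous (senderEU u μ) := by
  obtain ⟨M, hM0, hM⟩ := exists_bound hu
  unfold senderEU
  refine continuous_of_dominated (bound := fun _ => M) ?_ ?_ ?_ ?_
  · intro a; exact (integrable_cont (cont_right hu a) _).aestronglyMeasurable
  · intro a; exact Eventually.of_forall fun θ => by simpa using hM a θ
  · exact integrable_const _
  · exact Eventually.of_forall fun θ => cont_left hu θ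

lemma eu_bound {u : A → Θ → ℝ} {M : ℝ} (hM : ∀ a θ, |u a θ| ≤ M)
    (μ : ProbabilityMeasure Θ) (a : A) : |senderEU u μ a| ≤ M := by
  unfold senderEU
  have := norm_integral_le_of_norm_le_const (μ := (μ : Measure Θ)) (f := u a) (C := M)
    (Eventually.of_forall fun θ => by simpa using hM a θ)
  simpa using this

lemma mem_br {u : A → Θ → ℝ} {μ : ProbabilityMeasure Θ} {a : A} :
    a ∈ bestResponses u μ ↔ ∀ a', senderEU u μ a' ≤ senderEU u μ a := Iff.rfl

lemma br_compact {u : A → Θ → ℝ} (hu : Continuous fun p : A × Θ => u p.1 p.2)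
    (μ : ProbabilityMeasure Θ) : IsCompact (bestResponses u μ) := by
  apply IsClosed.isCompact
  have : bestResponses u μ = ⋂ a', {a | senderEU u μ a' ≤ senderEU u μ a} := by
    ext a; simp [mem_br]
  rw [this]
  exact isClosed_iInter fun a' => isClosed_le continuous_const (eu_cont hu μ)

lemma br_nonempty {u : A → Θ → ℝ} (hu : Continuous fun p : A × Θ => u p.1 p.2)
    (μ : ProbabilityMeasure Θ) : (bestResponses u μ).Nonempty := by
  obtain ⟨a, -, ha⟩ := isCompact_univ.exists_isMaxOn (Set.univ_nonempty)
    (eu_cont hu μ).continuousOn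
  exact ⟨a, fun a' => ha (Set.mem_univ a')⟩

variable {uS uR : A → Θ → ℝ}

lemma img_compact (hS : Continuous fun p : A × Θ => uS p.1 p.2)
    (hR : Continuous fun p : A × Θ => uR p.1 p.2) (μ : ProbabilityMeasure Θ) :
    IsCompact (senderEU uS μ '' bestResponses uR μ) :=
  (br_compact hR μ).image (eu_cont hS μ)

lemma v_attained (hS : Continuous fun p : A × Θ => uS p.1 p.2)
    (hR : Continuous fun p : A × Θ => uR p.1 p.2) (μ : ProbabilityMeasure Θ) :
    ∃ a ∈ bestResponses uR μ, senderEU uS μ a = vFun uS uR μ :=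
  (img_compact hS hR μ).sSup_mem ((br_nonempty hR μ).image _)

lemma w_attained (hS : Continuous fun p : A × Θ => uS p.1 p.2)
    (hR : Continuous fun p : A × Θ => uR p.1 p.2) (μ : ProbabilityMeasure Θ) :
    ∃ a ∈ bestResponses uR μ, senderEU uS μ a = wFun uS uR μ :=
  (img_compact hS hR μ).sInf_mem ((br_nonempty hR μ).image _)

lemma le_v (hS : Continuous fun p : A × Θ => uS p.1 p.2)
    (hR : Continuous fun p : A × Θ => uR p.1 p.2) {μ : ProbabilityMeasure Θ} {a : A}
    (ha : a ∈ bestResponses uR μ) : senderEU uS μ a ≤ vFun uS uR μ :=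
  le_csSup (img_compact hS hR μ).bddAbove ⟨a, ha, rfl⟩

lemma w_le (hS : Continuous fun p : A × Θ => uS p.1 p.2)
    (hR : Continuous fun p : A × Θ => uR p.1 p.2) {μ : ProbabilityMeasure Θ} {a : A}
    (ha : a ∈ bestResponses uR μ) : wFun uS uR μ ≤ senderEU uS μ a :=
  csInf_le (img_compact hS hR μ).bddBelow ⟨a, ha, rfl⟩

lemma w_le_v (hS : Continuous fun p : A × Θ => uS p.1 p.2)
    (hR : Continuous fun p : A × Θ => uR p.1 p.2) (μ : ProbabilityMeasure Θ) :
    wFun uS uR μ ≤ vFun uS uR μ := by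
  obtain ⟨a, ha, -⟩ := v_attained hS hR μ
  exact (w_le hS hR ha).trans (le_v hS hR ha)

lemma w_eq_neg_v (μ : ProbabilityMeasure Θ) :
    wFun uS uR μ = - vFun (fun a θ => - uS a θ) uR μ := by
  unfold wFun vFun
  rw [Real.sInf_def]
  congr 2
  ext x
  simp only [Set.mem_neg, Set.mem_image, senderEU, integral_neg]
  constructor
  · rintro ⟨a, ha, h⟩; exact ⟨a, ha, by linarith⟩
  · rintro ⟨a, ha, h⟩; exact ⟨a, ha, by linarith⟩

lemma coe_meas : Measurable (fun μ : ProbabilityMeasure Θ => (μ : Measure Θ)) :=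
  comap_measurable _

lemma integral_meas {f : Θ → ℝ} (hf : Continuous f) :
    Measurable (fun μ : ProbabilityMeasure Θ => ∫ θ, f θ ∂(μ : Measure Θ)) := by
  let κ : ProbabilityTheory.Kernel (ProbabilityMeasure Θ) Θ := ⟨fun μ => (μ : Measure Θ), coe_meas⟩
  have := (StronglyMeasurable.integral_kernel (κ := κ) hf.stronglyMeasurable)
  exact this.measurable

lemma v_meas (hS : Continuous fun p : A × Θ => uS p.1 p.2)
    (hR : Continuous fun p : A × Θ => uR p.1 p.2) : Measurable (vFun uS uR) := by
  have hsec : SecondCountableTopology A := inferInstance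
  let d := TopologicalSpace.denseSeq A
  have hd : DenseRange d := TopologicalSpace.denseRange_denseSeq A
  refine measurable_of_Ici fun c => ?_
  have key : vFun uS uR ⁻¹' Set.Ici c = ⋂ n : ℕ, ⋃ i : ℕ, ⋂ j : ℕ,
      {μ | senderEU uR μ (d j) - 1 / ((n : ℝ) + 1) ≤ senderEU uR μ (d i) ∧
        c - 1 / ((n : ℝ) + 1) ≤ senderEU uS μ (d i)} := by
    ext μ
    simp only [Set.mem_preimage, Set.mem_Ici, Set.mem_iInter, Set.mem_iUnion, Set.mem_ofPred_eq]
    constructor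
    · intro h n
      obtain ⟨a, ha, hav⟩ := v_attained hS hR μ
      have hpos : (0 : ℝ) < 1 / ((n : ℝ) + 1) := by positivity
      have hopen : IsOpen ({b | senderEU uR μ a - 1 / ((n : ℝ) + 1) < senderEU uR μ b} ∩
          {b | c - 1 / ((n : ℝ) + 1) < senderEU uS μ b}) :=
        (isOpen_lt continuous_const (eu_cont hR μ)).inter
          (isOpen_lt continuous_const (eu_cont hS μ))
      obtain ⟨i, hi⟩ := hd.exists_mem_open hopen ⟨a, by
        constructor
        · simp only [Set.mem_ofPred_eq]; linarith
        · simp only [Set.mem_ofPred_eq]; linarith⟩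
      refine ⟨i, fun j => ⟨?_, hi.2.le⟩⟩
      have := mem_br.1 ha (d j)
      have h1 := hi.1
      simp only [Set.mem_ofPred_eq] at h1
      linarith
    · intro h
      choose i hi using h
      obtain ⟨b, -, φ, hφ, hlim⟩ := isCompact_univ.tendsto_subseq (x := fun n => d (i n))
        (fun n => Set.mem_univ _)
      have hz : Tendsto (fun n => 1 / ((φ n : ℝ) + 1)) atTop (𝓝 0) :=
        (tendsto_one_div_add_atTop_nhds_zero_nat (𝕜 := ℝ)).comp hφ.tendsto_atTop
      have hRl := ((eu_cont hR μ).tendsto b).comp hlim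
      have hSl := ((eu_cont hS μ).tendsto b).comp hlim
      have hb : b ∈ bestResponses uR μ := by
        rw [mem_br]
        intro a'
        have hj : ∀ j, senderEU uR μ (d j) ≤ senderEU uR μ b := by
          intro j
          have h1 : Tendsto (fun n => senderEU uR μ (d j) - 1 / ((φ n : ℝ) + 1)) atTop
            (𝓝 (senderEU uR μ (d j) - 0)) := tendsto_const_nhds.sub hz
          rw [sub_zero] at h1
          exact le_of_tendsto_of_tendsto' h1 hRl fun n => (hi (φ n) j).1
        exact hd.induction_on (p := fun a' => senderEU uR μ a' ≤ senderEU uR μ b) a'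
          (isClosed_le (eu_cont hR μ) continuous_const) hj
      refine le_trans ?_ (le_v hS hR hb)
      have h1 : Tendsto (fun n => c - 1 / ((φ n : ℝ) + 1)) atTop (𝓝 (c - 0)) :=
        tendsto_const_nhds.sub hz
      rw [sub_zero] at h1
      exact le_of_tendsto_of_tendsto' h1 hSl fun n => (hi (φ n) 0).2
  rw [key]
  refine MeasurableSet.iInter fun n => MeasurableSet.iUnion fun i => MeasurableSet.iInter fun j => ?_
  have mR : ∀ a, Measurable fun μ : ProbabilityMeasure Θ => senderEU uR μ a := fun a =>
    integral_meas (cont_right hR a)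
  have mS : ∀ a, Measurable fun μ : ProbabilityMeasure Θ => senderEU uS μ a := fun a =>
    integral_meas (cont_right hS a)
  exact (measurableSet_le ((mR _).sub_const _) (mR _)).inter
    (measurableSet_le measurable_const (mS _))

lemma w_meas (hS : Continuous fun p : A × Θ => uS p.1 p.2)
    (hR : Continuous fun p : A × Θ => uR p.1 p.2) : Measurable (wFun uS uR) := by
  have : wFun uS uR = fun μ => - vFun (fun a θ => - uS a θ) uR μ := funext w_eq_neg_v
  rw [this]
  exact (v_meas hS.neg hR).neg

lemma v_bound (hS : Continuous fun p : A × Θ => uS p.1 p.2)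
    (hR : Continuous fun p : A × Θ => uR p.1 p.2) {M : ℝ} (hM : ∀ a θ, |uS a θ| ≤ M)
    (μ : ProbabilityMeasure Θ) : |vFun uS uR μ| ≤ M := by
  obtain ⟨a, -, h⟩ := v_attained hS hR μ
  rw [← h]; exact eu_bound hM μ a

lemma w_bound (hS : Continuous fun p : A × Θ => uS p.1 p.2)
    (hR : Continuous fun p : A × Θ => uR p.1 p.2) {M : ℝ} (hM : ∀ a θ, |uS a θ| ≤ M)
    (μ : ProbabilityMeasure Θ) : |wFun uS uR μ| ≤ M := by
  obtain ⟨a, -, h⟩ := w_attained hS hR μ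
  rw [← h]; exact eu_bound hM μ a

lemma integrable_bdd {X : Type*} [MeasurableSpace X] {f : X → ℝ} (hf : Measurable f) {M : ℝ}
    (hM : ∀ x, |f x| ≤ M) (p : Measure X) [IsFiniteMeasure p] : Integrable f p :=
  Integrable.of_bound hf.aestronglyMeasurable M (Eventually.of_forall fun x => by simpa using hM x)

/-- Bayes plausibility with extended nonnegative integrals. -/
lemma policy_lintegral {μ0 : ProbabilityMeasure Θ} {p : ProbabilityMeasure (ProbabilityMeasure Θ)} :
    p ∈ infoPolicies μ0 ↔ ∀ B : Set Θ, MeasurableSet B →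
      ∫⁻ ν, (ν : Measure Θ) B ∂(p : Measure (ProbabilityMeasure Θ)) = (μ0 : Measure Θ) B := by
  unfold infoPolicies
  simp only [Set.mem_ofPred_eq]
  refine forall₂_congr fun B hB => ?_
  have hm : Measurable fun ν : ProbabilityMeasure Θ => (ν : Measure Θ) B :=
    (Measure.measurable_coe hB).comp coe_meas
  rw [integral_toReal hm.aemeasurable (Eventually.of_forall fun ν => measure_lt_top _ _)]
  refine ENNReal.toReal_eq_toReal_iff' ?_ (measure_ne_top _ _)
  refine ne_top_of_le_ne_top (b := ∫⁻ ν, 1 ∂(p : Measure (ProbabilityMeasure Θ))) ?_ ?_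
  · simp
  · exact lintegral_mono fun ν => prob_le_one

/-- Feasibility of a perturbed policy. -/
lemma perturbed_policy {μ0 : ProbabilityMeasure Θ}
    {p : ProbabilityMeasure (ProbabilityMeasure Θ)} (hp : p ∈ infoPolicies μ0)
    {T : ProbabilityMeasure Θ → ProbabilityMeasure Θ} (hT : Measurable T) {ε : ℝ} (hε : 0 < ε)
    (hle : ∀ ν, ∀ B, MeasurableSet B → (T ν : Measure Θ) B ≤
      (ν : Measure Θ) B + ENNReal.ofReal ε * (μ0 : Measure Θ) B)
    {f : ProbabilityMeasure Θ → ℝ} (hf : Measurable f) {M : ℝ} (hM : ∀ ν, |f ν| ≤ M) :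
    ∃ p' ∈ infoPolicies μ0, (1 / (1 + ε)) * ∫ ν, f (T ν) ∂(p : Measure (ProbabilityMeasure Θ))
      - (ε / (1 + ε)) * M ≤ ∫ ν, f ν ∂(p' : Measure (ProbabilityMeasure Θ)) := by
  have hpl := policy_lintegral.1 hp
  have hTm : Measurable fun ν => (T ν : Measure Θ) := coe_meas.comp hT
  set P : Measure (ProbabilityMeasure Θ) := (p : Measure (ProbabilityMeasure Θ)) with hP
  set c : ENNReal := ENNReal.ofReal (1 / (1 + ε)) with hc
  set d : ENNReal := ENNReal.ofReal (ε / (1 + ε)) with hd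
  have hcd : c + d = 1 := by
    rw [hc, hd, ← ENNReal.ofReal_add (by positivity) (by positivity), ← ENNReal.ofReal_one]
    congr 1; field_simp
  have hd0 : d ≠ 0 := by
    rw [hd, Ne, ENNReal.ofReal_eq_zero, not_le]; positivity
  have hdt : d ≠ ⊤ := ENNReal.ofReal_ne_top
  have hct : c ≠ ⊤ := ENNReal.ofReal_ne_top
  have hc1 : c * (1 + ENNReal.ofReal ε) = 1 := by
    rw [hc, ← ENNReal.ofReal_one, ← ENNReal.ofReal_add (by positivity) (by positivity),
      ← ENNReal.ofReal_mul (by positivity)]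
    congr 1; field_simp
  let b : Measure Θ := P.bind fun ν => (T ν : Measure Θ)
  have hb : ∀ B, MeasurableSet B → b B = ∫⁻ ν, (T ν : Measure Θ) B ∂P := fun B hB =>
    Measure.bind_apply hB hTm.aemeasurable
  have hb1 : b Set.univ = 1 := by rw [hb _ MeasurableSet.univ]; simp
  have hbfin : IsFiniteMeasure b := ⟨by rw [hb1]; simp⟩
  have hcb : c • b ≤ (μ0 : Measure Θ) := by
    refine Measure.le_iff.2 fun B hB => ?_
    rw [Measure.smul_apply, smul_eq_mul, hb B hB]
    calc c * ∫⁻ ν, (T ν : Measure Θ) B ∂P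
        ≤ c * ∫⁻ ν, ((ν : Measure Θ) B + ENNReal.ofReal ε * (μ0 : Measure Θ) B) ∂P := by
          gcongr with ν; exact hle ν B hB
      _ = c * ((1 + ENNReal.ofReal ε) * (μ0 : Measure Θ) B) := by
          rw [lintegral_add_right _ measurable_const, hpl B hB, lintegral_const]
          simp [add_mul]
      _ = (μ0 : Measure Θ) B := by rw [← mul_assoc, hc1, one_mul]
  have hcbfin : IsFiniteMeasure (c • b) := ⟨by
    rw [Measure.smul_apply, hb1]; simpa using hct.lt_top⟩
  let r : Measure Θ := (μ0 : Measure Θ) - c • b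
  have hr : r + c • b = (μ0 : Measure Θ) := Measure.sub_add_cancel_of_le hcb
  have hr1 : r Set.univ = d := by
    have h1 : r Set.univ + c = 1 := by
      have := congrArg (fun m : Measure Θ => m Set.univ) hr
      simpa [hb1] using this
    have h2 : r Set.univ + c = d + c := by rw [h1, add_comm, hcd]
    exact (ENNReal.add_left_inj hct).1 h2
  let ρ : ProbabilityMeasure Θ := ⟨d⁻¹ • r, ⟨by
    rw [Measure.smul_apply, hr1, smul_eq_mul, ENNReal.inv_mul_cancel hd0 hdt]⟩⟩
  have hρ : ∀ B, d * (ρ : Measure Θ) B = r B := by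
    intro B
    change d * (d⁻¹ • r) B = r B
    rw [Measure.smul_apply, smul_eq_mul, ← mul_assoc, ENNReal.mul_inv_cancel hd0 hdt, one_mul]
  have hmapprob : IsProbabilityMeasure (P.map T) := Measure.isProbabilityMeasure_map hT.aemeasurable
  let q : Measure (ProbabilityMeasure Θ) := c • P.map T + d • Measure.dirac ρ
  have hq : IsProbabilityMeasure q := ⟨by simp [q, hcd]⟩
  refine ⟨⟨q, hq⟩, policy_lintegral.2 fun B hB => ?_, ?_⟩
  · have hm : Measurable fun ν : ProbabilityMeasure Θ => (ν : Measure Θ) B :=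
      (Measure.measurable_coe hB).comp coe_meas
    change ∫⁻ ν, (ν : Measure Θ) B ∂(c • P.map T + d • Measure.dirac ρ) = _
    rw [lintegral_add_measure, lintegral_smul_measure, lintegral_smul_measure,
      lintegral_map hm hT, lintegral_dirac' _ hm, ← hb B hB, smul_eq_mul, smul_eq_mul, hρ B,
      add_comm]
    have := congrArg (fun m : Measure Θ => m B) hr
    simpa using this
  · change _ ≤ ∫ ν, f ν ∂(c • P.map T + d • Measure.dirac ρ)
    have hi1 : Integrable f (c • P.map T) :=
      (integrable_bdd hf hM (P.map T)).smul_measure hct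
    have hi2 : Integrable f (d • Measure.dirac ρ) :=
      (integrable_bdd hf hM (Measure.dirac ρ)).smul_measure hdt
    rw [integral_add_measure hi1 hi2, integral_smul_measure, integral_smul_measure,
      integral_map hT.aemeasurable hf.aestronglyMeasurable,
      integral_dirac' _ _ hf.stronglyMeasurable, hc, hd, ENNReal.toReal_ofReal (by positivity),
      ENNReal.toReal_ofReal (by positivity), smul_eq_mul, smul_eq_mul]
    have h1 := (abs_le.1 (hM ρ)).1
    have h2 : 0 ≤ ε / (1 + ε) := by positivity
    nlinarith

/-- The perturbation of beliefs: with probability `ε`, a state drawn from the belief is replaced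
by its combination (by `m`) with an independent draw from the prior. -/
noncomputable def tiltMeasure (m : Θ × Θ → Θ) (μ0 : ProbabilityMeasure Θ) (ε : ℝ)
    (ν : ProbabilityMeasure Θ) : Measure Θ :=
  ENNReal.ofReal (1 - ε) • (ν : Measure Θ) +
    ENNReal.ofReal ε • ((ν : Measure Θ).prod (μ0 : Measure Θ)).map m

lemma tilt_prob {m : Θ × Θ → Θ} (hm : Measurable m) (μ0 : ProbabilityMeasure Θ) {ε : ℝ}
    (h0 : 0 ≤ ε) (h1 : ε ≤ 1) (ν : ProbabilityMeasure Θ) :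
    IsProbabilityMeasure (tiltMeasure m μ0 ε ν) := by
  have : IsProbabilityMeasure (((ν : Measure Θ).prod (μ0 : Measure Θ)).map m) :=
    Measure.isProbabilityMeasure_map hm.aemeasurable
  refine ⟨?_⟩
  unfold tiltMeasure
  simp only [Measure.add_apply, Measure.smul_apply, measure_univ, smul_eq_mul, mul_one]
  rw [← ENNReal.ofReal_add (by linarith) h0]
  simp

/-- The perturbed belief as a probability measure. -/
noncomputable def tilt {m : Θ × Θ → Θ} (hm : Measurable m) (μ0 : ProbabilityMeasure Θ) {ε : ℝ}
    (h0 : 0 ≤ ε) (h1 : ε ≤ 1) (ν : ProbabilityMeasure Θ) : ProbabilityMeasure Θ :=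
  ⟨tiltMeasure m μ0 ε ν, tilt_prob hm μ0 h0 h1 ν⟩

lemma tilt_meas {m : Θ × Θ → Θ} (hm : Measurable m) (μ0 : ProbabilityMeasure Θ) {ε : ℝ}
    (h0 : 0 ≤ ε) (h1 : ε ≤ 1) : Measurable (tilt hm μ0 h0 h1) := by
  refine measurable_comap_iff.2 ?_
  refine Measure.measurable_of_measurable_coe _ fun B hB => ?_
  have e : ∀ ν : ProbabilityMeasure Θ, (tilt hm μ0 h0 h1 ν : Measure Θ) B =
      ENNReal.ofReal (1 - ε) * (ν : Measure Θ) B + ENNReal.ofReal ε *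
        ∫⁻ x, (μ0 : Measure Θ) (Prod.mk x ⁻¹' (m ⁻¹' B)) ∂(ν : Measure Θ) := by
    intro ν
    change tiltMeasure m μ0 ε ν B = _
    unfold tiltMeasure
    rw [Measure.add_apply, Measure.smul_apply, Measure.smul_apply, Measure.map_apply hm hB,
      Measure.prod_apply (hm hB), smul_eq_mul, smul_eq_mul]
  simp only [Function.comp_def, e]
  have m1 : Measurable fun ν : ProbabilityMeasure Θ => (ν : Measure Θ) B :=
    (Measure.measurable_coe hB).comp coe_meas
  have m2 : Measurable fun ν : ProbabilityMeasure Θ =>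
      ∫⁻ x, (μ0 : Measure Θ) (Prod.mk x ⁻¹' (m ⁻¹' B)) ∂(ν : Measure Θ) :=
    (Measure.measurable_lintegral (measurable_measure_prodMk_left (hm hB))).comp coe_meas
  exact (m1.const_mul _).add (m2.const_mul _)

lemma tilt_le {m : Θ × Θ → Θ} (hm : Measurable m) (hms : ∀ x y, m (x, y) = x ∨ m (x, y) = y)
    (μ0 : ProbabilityMeasure Θ) {ε : ℝ}
    (h0 : 0 ≤ ε) (h1 : ε ≤ 1) (ν : ProbabilityMeasure Θ) (B : Set Θ) (hB : MeasurableSet B) :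
    (tilt hm μ0 h0 h1 ν : Measure Θ) B ≤
      (ν : Measure Θ) B + ENNReal.ofReal ε * (μ0 : Measure Θ) B := by
  change tiltMeasure m μ0 ε ν B ≤ _
  unfold tiltMeasure
  rw [Measure.add_apply, Measure.smul_apply, Measure.smul_apply, Measure.map_apply hm hB,
    smul_eq_mul, smul_eq_mul]
  have hsub : m ⁻¹' B ⊆ B ×ˢ Set.univ ∪ Set.univ ×ˢ B := by
    rintro ⟨x, y⟩ h
    rcases hms x y with h' | h'
    · left; simpa [h'] using h
    · right; simpa [h'] using h
  have h2 : ((ν : Measure Θ).prod (μ0 : Measure Θ)) (m ⁻¹' B) ≤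
      (ν : Measure Θ) B + (μ0 : Measure Θ) B := by
    refine (measure_mono hsub).trans ((measure_union_le _ _).trans ?_)
    simp [Measure.prod_prod]
  calc _ ≤ ENNReal.ofReal (1 - ε) * (ν : Measure Θ) B +
        ENNReal.ofReal ε * ((ν : Measure Θ) B + (μ0 : Measure Θ) B) := by gcongr
    _ = (ENNReal.ofReal (1 - ε) + ENNReal.ofReal ε) * (ν : Measure Θ) B
        + ENNReal.ofReal ε * (μ0 : Measure Θ) B := by ring
    _ = _ := by
        rw [← ENNReal.ofReal_add (by linarith) h0]; simp

lemma tilt_integral {m : Θ × Θ → Θ} (_hm : Continuous m)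
    (hmm : Measurable m) (μ0 : ProbabilityMeasure Θ) {ε : ℝ}
    (h0 : 0 ≤ ε) (h1 : ε ≤ 1) (ν : ProbabilityMeasure Θ) {f : Θ → ℝ} (hf : Continuous f) :
    ∫ θ, f θ ∂(tilt hmm μ0 h0 h1 ν : Measure Θ) = (1 - ε) * ∫ θ, f θ ∂(ν : Measure Θ) +
      ε * ∫ z, f (m z) ∂((ν : Measure Θ).prod (μ0 : Measure Θ)) := by
  change ∫ θ, f θ ∂(tiltMeasure m μ0 ε ν) = _
  unfold tiltMeasure
  have : IsProbabilityMeasure (((ν : Measure Θ).prod (μ0 : Measure Θ)).map m) :=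
    Measure.isProbabilityMeasure_map hmm.aemeasurable
  rw [integral_add_measure ((integrable_cont hf _).smul_measure ENNReal.ofReal_ne_top)
    ((integrable_cont hf _).smul_measure ENNReal.ofReal_ne_top), integral_smul_measure,
    integral_smul_measure, integral_map hmm.aemeasurable hf.aestronglyMeasurable,
    ENNReal.toReal_ofReal (by linarith), ENNReal.toReal_ofReal h0, smul_eq_mul, smul_eq_mul]

lemma tilt_dist {u : A → Θ → ℝ} (hu : Continuous fun p : A × Θ => u p.1 p.2) {M : ℝ}
    (hM : ∀ a θ, |u a θ| ≤ M) {m : Θ × Θ → Θ} (hm : Continuous m)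
    (hmm : Measurable m) (μ0 : ProbabilityMeasure Θ) {ε : ℝ}
    (h0 : 0 ≤ ε) (h1 : ε ≤ 1) (ν : ProbabilityMeasure Θ) (a : A) :
    |senderEU u (tilt hmm μ0 h0 h1 ν) a - senderEU u ν a| ≤ ε * (2 * M) := by
  have e := tilt_integral hm hmm μ0 h0 h1 ν (cont_right hu a)
  have b1 := eu_bound hM ν a
  have b2 : |∫ z, u a (m z) ∂((ν : Measure Θ).prod (μ0 : Measure Θ))| ≤ M := by
    have := norm_integral_le_of_norm_le_const (μ := (ν : Measure Θ).prod (μ0 : Measure Θ))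
      (f := fun z => u a (m z)) (C := M)
      (Eventually.of_forall fun z => by simpa using hM a (m z))
    simpa using this
  unfold senderEU at b1 ⊢
  rw [e]
  rw [abs_le] at b1 b2 ⊢
  constructor <;> nlinarith

/-- Convergence of the worst payoff along perturbed beliefs. -/
lemma w_tendsto (hS : Continuous fun p : A × Θ => uS p.1 p.2)
    (hR : Continuous fun p : A × Θ => uR p.1 p.2) {ν : ProbabilityMeasure Θ}
    {T : ℕ → ProbabilityMeasure Θ}
    (hTS : ∃ δ : ℕ → ℝ, Tendsto δ atTop (𝓝 0) ∧
      ∀ n a, |senderEU uS (T n) a - senderEU uS ν a| ≤ δ n)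
    (hTR : ∃ δ : ℕ → ℝ, Tendsto δ atTop (𝓝 0) ∧
      ∀ n a, |senderEU uR (T n) a - senderEU uR ν a| ≤ δ n)
    {C : Set A} (hC : IsClosed C) (hTC : ∀ n, bestResponses uR (T n) ⊆ C) {a : A}
    (ha : ∀ b ∈ C, b ∈ bestResponses uR ν → b = a) :
    Tendsto (fun n => wFun uS uR (T n)) atTop (𝓝 (senderEU uS ν a)) := by
  obtain ⟨δS, hδS, hTS⟩ := hTS
  obtain ⟨δR, hδR, hTR⟩ := hTR
  choose x hx hxw using fun n => w_attained hS hR (T n)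
  refine tendsto_of_subseq_tendsto fun ns hns => ?_
  obtain ⟨b, -, ms, hms, hlim⟩ := isCompact_univ.tendsto_subseq (x := fun n => x (ns n))
    (fun n => Set.mem_univ _)
  have hnm : Tendsto (fun k => ns (ms k)) atTop atTop := hns.comp hms.tendsto_atTop
  have lim : ∀ {u : A → Θ → ℝ} (hu : Continuous fun p : A × Θ => u p.1 p.2) {δ : ℕ → ℝ}
      (hδ : Tendsto δ atTop (𝓝 0)) (hT : ∀ n a, |senderEU u (T n) a - senderEU u ν a| ≤ δ n),
      Tendsto (fun k => senderEU u (T (ns (ms k))) (x (ns (ms k)))) atTop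
        (𝓝 (senderEU u ν b)) := by
    intro u hu δ hδ hT
    have h1 : Tendsto (fun k => senderEU u (T (ns (ms k))) (x (ns (ms k)))
        - senderEU u ν (x (ns (ms k)))) atTop (𝓝 0) :=
      squeeze_zero_norm (fun k => by simpa using hT _ _) (hδ.comp hnm)
    have h2 := h1.add (((eu_cont hu ν).tendsto b).comp hlim)
    simpa using h2
  have hbC : b ∈ C := hC.mem_of_tendsto hlim (Eventually.of_forall fun n => hTC _ (hx _))
  have hbR : b ∈ bestResponses uR ν := by
    rw [mem_br]
    intro a'
    have h1 : Tendsto (fun k => senderEU uR (T (ns (ms k))) a' - senderEU uR ν a') atTop (𝓝 0) :=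
      squeeze_zero_norm (fun k => by simpa using hTR _ _) (hδR.comp hnm)
    have h2 := h1.add_const (senderEU uR ν a')
    simp only [sub_add_cancel, zero_add] at h2
    exact le_of_tendsto_of_tendsto' h2 (lim hR hδR hTR) fun k => mem_br.1 (hx _) a'
  have hba := ha b hbC hbR
  subst hba
  refine ⟨ms, ?_⟩
  have := lim hS hδS hTS
  simpa only [hxw] using this

/-- Perturbed beliefs rank actions strictly. -/
lemma tilt_strict (hR : Continuous fun p : A × Θ => uR p.1 p.2) {m : Θ × Θ → Θ}
    (hm : Continuous m) (hmm : Measurable m) (μ0 : ProbabilityMeasure Θ) {ε : ℝ}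
    (h0 : 0 < ε) (h1 : ε ≤ 1) {ν : ProbabilityMeasure Θ} {a a' : A}
    (ha : a ∈ bestResponses uR ν)
    (hD : ∀ x y, m (x, y) ≠ x → uR a x - uR a' x < uR a (m (x, y)) - uR a' (m (x, y)))
    (hpos : 0 < ((ν : Measure Θ).prod (μ0 : Measure Θ)) {z | m z ≠ z.1}) :
    a' ∉ bestResponses uR (tilt hmm μ0 h0.le h1 ν) := by
  intro h
  have h2 := h a
  have h3 := ha a'
  have ca := cont_right hR a
  have ca' := cont_right hR a'
  rw [tilt_integral hm hmm μ0 h0.le h1 ν ca, tilt_integral hm hmm μ0 h0.le h1 ν ca'] at h2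
  set Q := (ν : Measure Θ).prod (μ0 : Measure Θ) with hQ
  let D : Θ → ℝ := fun θ => uR a θ - uR a' θ
  have cD : Continuous D := ca.sub ca'
  have i1 : ∫ z, (D (m z) - D z.1) ∂Q = (∫ z, uR a (m z) ∂Q - ∫ z, uR a' (m z) ∂Q)
      - (∫ θ, uR a θ ∂(ν : Measure Θ) - ∫ θ, uR a' θ ∂(ν : Measure Θ)) := by
    refine (integral_sub (integrable_cont (cD.comp hm) Q)
      (integrable_cont (cD.comp continuous_fst) Q)).trans ?_
    simp only [Function.comp_def]
    congr 1
    · exact integral_sub (integrable_cont (ca.comp hm) Q) (integrable_cont (ca'.comp hm) Q)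
    · rw [hQ, integral_fun_fst D]
      simp only [probReal_univ, one_smul]
      exact integral_sub (integrable_cont ca _) (integrable_cont ca' _)
  have hnn : 0 ≤ fun z => D (m z) - D z.1 := by
    rintro ⟨x, y⟩
    by_cases hxy : m (x, y) = x
    · simp [hxy]
    · have := hD x y hxy
      simp only [Pi.zero_apply, D]; linarith
  have hint : Integrable (fun z => D (m z) - D z.1) Q :=
    integrable_cont ((cD.comp hm).sub (cD.comp continuous_fst)) Q
  have i2 : 0 < ∫ z, (D (m z) - D z.1) ∂Q := by
    rw [integral_pos_iff_support_of_nonneg hnn hint]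
    refine hpos.trans_le (measure_mono ?_)
    rintro ⟨x, y⟩ hxy
    have := hD x y hxy
    simp only [Function.mem_support, D]; intro h; linarith
  rw [i1] at i2
  nlinarith

/-- Null events of the prior are null for almost every posterior. -/
lemma ae_null {μ0 : ProbabilityMeasure Θ} {p : ProbabilityMeasure (ProbabilityMeasure Θ)}
    (hp : p ∈ infoPolicies μ0) {B : Set Θ} (hB : MeasurableSet B) (h : (μ0 : Measure Θ) B = 0) :
    ∀ᵐ ν : ProbabilityMeasure Θ ∂(p : Measure (ProbabilityMeasure Θ)), (ν : Measure Θ) B = 0 := by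
  have hm : Measurable fun ν : ProbabilityMeasure Θ => (ν : Measure Θ) B :=
    (Measure.measurable_coe hB).comp coe_meas
  have h1 := policy_lintegral.1 hp B hB
  rw [h, lintegral_eq_zero_iff hm] at h1
  exact h1

lemma eps_pos (n : ℕ) : (0 : ℝ) < 1 / ((n : ℝ) + 1) := by positivity

lemma eps_le (n : ℕ) : 1 / ((n : ℝ) + 1) ≤ 1 := by
  rw [div_le_one (by positivity)]
  have : (0 : ℝ) ≤ n := Nat.cast_nonneg n
  linarith

lemma eps_tendsto : Tendsto (fun n : ℕ => 1 / ((n : ℝ) + 1)) atTop (𝓝 0) :=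
  tendsto_one_div_add_atTop_nhds_zero_nat (𝕜 := ℝ)

/-- One-sided perturbations select the extreme best response. -/
lemma side_tendsto (hS : Continuous fun p : A × Θ => uS p.1 p.2)
    (hR : Continuous fun p : A × Θ => uR p.1 p.2) {m : Θ × Θ → Θ}
    (hm : Continuous m) (hmm : Measurable m) (μ0 ν : ProbabilityMeasure Θ) {a : A}
    (ha : a ∈ bestResponses uR ν) {C : Set A} (hC : IsClosed C)
    (hCa : ∀ b ∈ C, b ∈ bestResponses uR ν → b = a)
    (hD : ∀ a' ∉ C, ∀ x y, m (x, y) ≠ x →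
      uR a x - uR a' x < uR a (m (x, y)) - uR a' (m (x, y)))
    {θe : Θ} {N : Set Θ} (hN : (ν : Measure Θ) N = 0)
    (hμ : ∀ x, x ≠ θe → x ∉ N → (μ0 : Measure Θ) {y | m (x, y) ≠ x} ≠ 0)
    (hsing : (ν : Measure Θ) {θe} = 0 ∨ ∃ a : A, bestResponses uR (diracPM θe) = {a}) :
    Tendsto (fun n : ℕ => wFun uS uR (tilt hmm μ0 (eps_pos n).le (eps_le n) ν)) atTop
      (𝓝 (senderEU uS ν a)) := by
  have dist : ∀ {u : A → Θ → ℝ} (hu : Continuous fun p : A × Θ => u p.1 p.2),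
      ∃ δ : ℕ → ℝ, Tendsto δ atTop (𝓝 0) ∧ ∀ n a,
        |senderEU u (tilt hmm μ0 (eps_pos n).le (eps_le n) ν) a - senderEU u ν a| ≤ δ n := by
    intro u hu
    obtain ⟨M, hM0, hM⟩ := exists_bound hu
    refine ⟨fun n => 1 / ((n : ℝ) + 1) * (2 * M), ?_, fun n a =>
      tilt_dist hu hM hm hmm μ0 (eps_pos n).le (eps_le n) ν a⟩
    simpa using eps_tendsto.mul_const (2 * M)
  have hms : MeasurableSet {z : Θ × Θ | m z ≠ z.1} :=
    (isOpen_ne_fun hm continuous_fst).measurableSet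
  by_cases hpos : ((ν : Measure Θ).prod (μ0 : Measure Θ)) {z | m z ≠ z.1} = 0
  · have hae : ∀ᵐ x ∂(ν : Measure Θ), x = θe := by
      rw [Measure.measure_prod_null hms] at hpos
      have hN' : ∀ᵐ x ∂(ν : Measure Θ), x ∉ N := by
        rw [ae_iff]; simpa using hN
      filter_upwards [hpos, hN'] with x h1 h2
      by_contra hx
      exact hμ x hx h2 h1
    have hne : (ν : Measure Θ) {θe} ≠ 0 := by
      intro h0
      have h1 : ∀ᵐ x ∂(ν : Measure Θ), x ≠ θe := by
        rw [ae_iff]; simpa using h0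
      have : ∀ᵐ x ∂(ν : Measure Θ), False := by
        filter_upwards [hae, h1] with x h2 h3 using h3 h2
      simp only [Filter.eventually_false_iff_eq_bot, ae_eq_bot] at this
      exact IsProbabilityMeasure.ne_zero _ this
    obtain ⟨c, hc⟩ := hsing.resolve_left hne
    have heu : ∀ b, senderEU uR ν b = senderEU uR (diracPM θe) b := by
      intro b
      have e1 : senderEU uR ν b = uR b θe := by
        unfold senderEU
        rw [integral_congr_ae (g := fun _ => uR b θe) (by
          filter_upwards [hae] with x hx; rw [hx])]
        simp
      have e2 : senderEU uR (diracPM θe) b = uR b θe := by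
        change ∫ θ, uR b θ ∂(Measure.dirac θe) = _
        exact integral_dirac _ _
      rw [e1, e2]
    have hbr : bestResponses uR ν = {c} := by
      rw [← hc]; ext b
      simp only [mem_br, heu]
    refine w_tendsto hS hR (dist hS) (dist hR) isClosed_univ (fun n => Set.subset_univ _) ?_
    intro b _ hb
    rw [hbr] at hb ha
    rw [Set.mem_singleton_iff] at hb ha
    rw [hb, ha]
  · refine w_tendsto hS hR (dist hS) (dist hR) hC (fun n b hb => ?_) hCa
    by_contra hbC
    exact tilt_strict hR hm hmm μ0 (eps_pos n) (eps_le n) ha (hD b hbC)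
      (pos_iff_ne_zero.2 hpos) hb

lemma infoPolicies_nonempty (μ0 : ProbabilityMeasure Θ) : (infoPolicies μ0).Nonempty := by
  refine ⟨⟨Measure.dirac μ0, inferInstance⟩, policy_lintegral.2 fun B hB => ?_⟩
  have hm : Measurable fun ν : ProbabilityMeasure Θ => (ν : Measure Θ) B :=
    (Measure.measurable_coe hB).comp coe_meas
  exact lintegral_dirac' _ hm

lemma values_bdd {f : ProbabilityMeasure Θ → ℝ} {M : ℝ} (hM : ∀ ν, |f ν| ≤ M)
    (μ0 : ProbabilityMeasure Θ) :
    BddAbove ((fun p : ProbabilityMeasure (ProbabilityMeasure Θ) =>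
      ∫ ν, f ν ∂(p : Measure (ProbabilityMeasure Θ))) '' infoPolicies μ0) := by
  refine ⟨M, ?_⟩
  rintro _ ⟨p, -, rfl⟩
  have := norm_integral_le_of_norm_le_const (μ := (p : Measure (ProbabilityMeasure Θ)))
    (f := f) (C := M) (Eventually.of_forall fun θ => by simpa using hM θ)
  simp only [probReal_univ, mul_one, Real.norm_eq_abs] at this
  exact (le_abs_self _).trans this

/-- The general perturbation argument. -/
lemma payoff_eq_of_perturbation (hS : Continuous fun p : A × Θ => uS p.1 p.2)
    (hR : Continuous fun p : A × Θ => uR p.1 p.2) (μ0 : ProbabilityMeasure Θ)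
    {m₁ m₂ : Θ × Θ → Θ} (hm₁ : Measurable m₁) (hm₂ : Measurable m₂)
    (hs₁ : ∀ x y, m₁ (x, y) = x ∨ m₁ (x, y) = y) (hs₂ : ∀ x y, m₂ (x, y) = x ∨ m₂ (x, y) = y)
    (hae : ∀ p ∈ infoPolicies μ0, ∀ᵐ ν ∂(p : Measure (ProbabilityMeasure Θ)),
      ∃ L, vFun uS uR ν ≤ L ∧
      (Tendsto (fun n : ℕ => wFun uS uR (tilt hm₁ μ0 (eps_pos n).le (eps_le n) ν)) atTop (𝓝 L) ∨
       Tendsto (fun n : ℕ => wFun uS uR (tilt hm₂ μ0 (eps_pos n).le (eps_le n) ν)) atTop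
        (𝓝 L))) :
    wHat uS uR μ0 = vHat uS uR μ0 := by
  obtain ⟨M, hM0, hM⟩ := exists_bound hS
  have wb := w_bound hS hR hM
  have vb := v_bound hS hR hM
  have wm := w_meas hS hR
  have vm := v_meas hS hR
  apply le_antisymm
  · refine csSup_le ((infoPolicies_nonempty μ0).image _) ?_
    rintro _ ⟨p, hp, rfl⟩
    refine le_trans ?_ (le_csSup (values_bdd vb μ0) ⟨p, hp, rfl⟩)
    exact integral_mono (integrable_bdd wm wb _) (integrable_bdd vm vb _) (w_le_v hS hR)
  · refine csSup_le ((infoPolicies_nonempty μ0).image _) ?_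
    rintro _ ⟨p, hp, rfl⟩
    let P : Measure (ProbabilityMeasure Θ) := p
    let x : ℕ → ProbabilityMeasure Θ → ℝ := fun n ν =>
      wFun uS uR (tilt hm₁ μ0 (eps_pos n).le (eps_le n) ν)
    let y : ℕ → ProbabilityMeasure Θ → ℝ := fun n ν =>
      wFun uS uR (tilt hm₂ μ0 (eps_pos n).le (eps_le n) ν)
    have xm : ∀ n, Measurable (x n) := fun n => wm.comp (tilt_meas hm₁ μ0 _ _)
    have ym : ∀ n, Measurable (y n) := fun n => wm.comp (tilt_meas hm₂ μ0 _ _)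
    let G : ℕ → ProbabilityMeasure Θ → ℝ := fun n ν => min (max (x n ν) (y n ν)) (vFun uS uR ν)
    have Gm : ∀ n, Measurable (G n) := fun n => ((xm n).max (ym n)).min vm
    have maxb : ∀ n ν, |max (x n ν) (y n ν)| ≤ M := fun n ν =>
      abs_max_le_max_abs_abs.trans (max_le (wb _) (wb _))
    have Gb : ∀ n ν, |G n ν| ≤ M := fun n ν =>
      abs_min_le_max_abs_abs.trans (max_le (maxb n ν) (vb _))
    have Glim : Tendsto (fun n => ∫ ν, G n ν ∂P) atTop (𝓝 (∫ ν, vFun uS uR ν ∂P)) := by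
      refine tendsto_integral_of_dominated_convergence (fun _ => M)
        (fun n => (Gm n).aestronglyMeasurable) (integrable_const _)
        (fun n => Eventually.of_forall fun ν => by simpa using Gb n ν) ?_
      filter_upwards [hae p hp] with ν hν
      obtain ⟨L, hL, h⟩ := hν
      rcases h with h | h
      · have h1 : Tendsto (fun n => min (x n ν) (vFun uS uR ν)) atTop
            (𝓝 (min L (vFun uS uR ν))) := h.min tendsto_const_nhds
        rw [min_eq_right hL] at h1
        exact tendsto_of_tendsto_of_tendsto_of_le_of_le h1 tendsto_const_nhds
          (fun n => min_le_min_right _ (le_max_left _ _)) (fun n => min_le_right _ _)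
      · have h1 : Tendsto (fun n => min (y n ν) (vFun uS uR ν)) atTop
            (𝓝 (min L (vFun uS uR ν))) := h.min tendsto_const_nhds
        rw [min_eq_right hL] at h1
        exact tendsto_of_tendsto_of_tendsto_of_le_of_le h1 tendsto_const_nhds
          (fun n => min_le_min_right _ (le_max_right _ _)) (fun n => min_le_right _ _)
    have step : ∀ n : ℕ, (1 / (1 + 1 / ((n : ℝ) + 1))) * ∫ ν, G n ν ∂P
        - ((1 / ((n : ℝ) + 1)) / (1 + 1 / ((n : ℝ) + 1))) * M ≤ wHat uS uR μ0 := by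
      intro n
      classical
      let E : Set (ProbabilityMeasure Θ) := {ν | y n ν ≤ x n ν}
      have hE : MeasurableSet E := measurableSet_le (ym n) (xm n)
      let T : ProbabilityMeasure Θ → ProbabilityMeasure Θ :=
        E.piecewise (tilt hm₁ μ0 (eps_pos n).le (eps_le n)) (tilt hm₂ μ0 (eps_pos n).le (eps_le n))
      have hT : Measurable T := Measurable.piecewise hE (tilt_meas _ _ _ _) (tilt_meas _ _ _ _)
      have hTw : ∀ ν, wFun uS uR (T ν) = max (x n ν) (y n ν) := by
        intro ν
        by_cases h : ν ∈ E
        · rw [show T ν = _ from Set.piecewise_eq_of_mem _ _ _ h]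
          exact (max_eq_left h).symm
        · rw [show T ν = _ from Set.piecewise_eq_of_notMem _ _ _ h]
          exact (max_eq_right (not_le.1 h).le).symm
      have hTle : ∀ ν, ∀ B, MeasurableSet B → (T ν : Measure Θ) B ≤
          (ν : Measure Θ) B + ENNReal.ofReal (1 / ((n : ℝ) + 1)) * (μ0 : Measure Θ) B := by
        intro ν B hB
        by_cases h : ν ∈ E
        · rw [show T ν = _ from Set.piecewise_eq_of_mem _ _ _ h]
          exact tilt_le hm₁ hs₁ μ0 _ _ ν B hB
        · rw [show T ν = _ from Set.piecewise_eq_of_notMem _ _ _ h]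
          exact tilt_le hm₂ hs₂ μ0 _ _ ν B hB
      obtain ⟨p', hp', hle⟩ := perturbed_policy hp hT (eps_pos n) hTle wm wb
      refine le_trans ?_ (le_csSup (values_bdd wb μ0) ⟨p', hp', rfl⟩)
      refine le_trans ?_ hle
      have hGT : ∫ ν, G n ν ∂P ≤ ∫ ν, wFun uS uR (T ν) ∂P := by
        simp only [hTw]
        exact integral_mono (integrable_bdd (Gm n) (Gb n) _)
          (integrable_bdd ((xm n).max (ym n)) (maxb n) _) (fun ν => min_le_left _ _)
      have hc0 : 0 ≤ 1 / (1 + 1 / ((n : ℝ) + 1)) := by positivity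
      exact sub_le_sub_right (mul_le_mul_of_nonneg_left hGT hc0) _
    have e1 : Tendsto (fun n : ℕ => 1 + 1 / ((n : ℝ) + 1)) atTop (𝓝 (1 + 0)) :=
      tendsto_const_nhds.add eps_tendsto
    have e2 : Tendsto (fun n : ℕ => 1 / (1 + 1 / ((n : ℝ) + 1))) atTop (𝓝 (1 / (1 + 0))) :=
      tendsto_const_nhds.div e1 (by norm_num)
    have e3 : Tendsto (fun n : ℕ => (1 / ((n : ℝ) + 1)) / (1 + 1 / ((n : ℝ) + 1))) atTop
        (𝓝 (0 / (1 + 0))) := eps_tendsto.div e1 (by norm_num)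
    have e4 := (e2.mul Glim).sub (e3.mul_const M)
    simp only [add_zero, div_one, one_mul, zero_mul, sub_zero] at e4
    exact le_of_tendsto' e4 step

lemma msupport_eq (μ : ProbabilityMeasure Θ) : msupport μ = (μ : Measure Θ).support := by
  ext x
  unfold msupport
  rw [Measure.mem_support_iff_forall]
  simp only [Set.mem_ofPred_eq]
  constructor
  · intro h U hU
    obtain ⟨V, hVU, hV, hx⟩ := mem_nhds_iff.1 hU
    exact (pos_iff_ne_zero.2 (h V hV hx)).trans_le (measure_mono hVU)
  · intro h U hU hx
    exact (h U (hU.mem_nhds hx)).ne'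

end General

end Helpers

/-- **Uniqueness in the ordered model.** Suppose the environment is ordered (`A, Θ ⊆ ℝ`,
`u_R` has strictly increasing differences, and at each belief the receiver's expected
payoff is strictly quasiconcave in the action or the sender's expected payoff is weakly
quasiconvex in the action), and for each endpoint `θ̄` of the support of the prior,
either `μ0({θ̄}) = 0` or the receiver's best response at `δ_θ̄` is unique. Then the
sender has a unique equilibrium payoff: `ŵ(μ0) = v̂(μ0)`. -/
theorem unique_payoff_ordered
    (A Θ : Set ℝ) [Nonempty ↥A] [Nonempty ↥Θ] [CompactSpace ↥A] [CompactSpace ↥Θ]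
    (uS uR : ↥A → ↥Θ → ℝ)
    (hS : Continuous fun p : ↥A × ↥Θ => uS p.1 p.2)
    (hR : Continuous fun p : ↥A × ↥Θ => uR p.1 p.2)
    (hsid : ∀ a a' : ↥A, (a : ℝ) < (a' : ℝ) → ∀ θ θ' : ↥Θ, (θ : ℝ) < (θ' : ℝ) →
      uR a' θ - uR a θ < uR a' θ' - uR a θ')
    (hquasi : ∀ μ : ProbabilityMeasure ↥Θ,
      (∀ aL aM aH : ↥A, (aL : ℝ) < (aM : ℝ) → (aM : ℝ) < (aH : ℝ) →
        min (∫ θ, uR aL θ ∂(μ : Measure ↥Θ)) (∫ θ, uR aH θ ∂(μ : Measure ↥Θ)) <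
          ∫ θ, uR aM θ ∂(μ : Measure ↥Θ)) ∨
      (∀ aL aM aH : ↥A, (aL : ℝ) ≤ (aM : ℝ) → (aM : ℝ) ≤ (aH : ℝ) →
        senderEU uS μ aM ≤ max (senderEU uS μ aL) (senderEU uS μ aH)))
    (μ0 : ProbabilityMeasure ↥Θ)
    (hbdry : ∀ θbar : ↥Θ,
      ((θbar : ℝ) = sInf ((fun t : ↥Θ => (t : ℝ)) '' msupport μ0) ∨
        (θbar : ℝ) = sSup ((fun t : ↥Θ => (t : ℝ)) '' msupport μ0)) →
      ((μ0 : Measure ↥Θ) {θbar} = 0 ∨ ∃ a : ↥A, bestResponses uR (diracPM θbar) = {a})) :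
    wHat uS uR μ0 = vHat uS uR μ0 := by
  classical
  have hsc := msupport_eq μ0
  have hne : (msupport μ0).Nonempty := by
    rw [hsc]; exact Measure.nonempty_support (IsProbabilityMeasure.ne_zero _)
  have hcomp : IsCompact (msupport μ0) := by
    rw [hsc]; exact Measure.isClosed_support.isCompact
  have hcnull : (μ0 : Measure ↥Θ) (msupport μ0)ᶜ = 0 := by
    rw [hsc]; exact Measure.measure_compl_support
  obtain ⟨tmax, hmaxmem, hmax⟩ := hcomp.exists_isGreatest hne
  obtain ⟨tmin, hminmem, hmin⟩ := hcomp.exists_isLeast hne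
  have hmaxS : (tmax : ℝ) = sSup ((fun t : ↥Θ => (t : ℝ)) '' msupport μ0) := by
    have hg : IsGreatest ((fun t : ↥Θ => (t : ℝ)) '' msupport μ0) (tmax : ℝ) := by
      refine ⟨⟨tmax, hmaxmem, rfl⟩, ?_⟩
      rintro _ ⟨t, ht, rfl⟩
      exact hmax ht
    exact hg.csSup_eq.symm
  have hminS : (tmin : ℝ) = sInf ((fun t : ↥Θ => (t : ℝ)) '' msupport μ0) := by
    have hg : IsLeast ((fun t : ↥Θ => (t : ℝ)) '' msupport μ0) (tmin : ℝ) := by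
      refine ⟨⟨tmin, hminmem, rfl⟩, ?_⟩
      rintro _ ⟨t, ht, rfl⟩
      exact hmin ht
    exact hg.csInf_eq.symm
  have hIoi : (μ0 : Measure ↥Θ) (Set.Ioi tmax) = 0 :=
    measure_mono_null (t := (msupport μ0)ᶜ)
      (by intro t ht h; exact absurd (hmax h) (not_le.2 ht)) hcnull
  have hIio : (μ0 : Measure ↥Θ) (Set.Iio tmin) = 0 :=
    measure_mono_null (t := (msupport μ0)ᶜ)
      (by intro t ht h; exact absurd (hmin h) (not_le.2 ht)) hcnull
  have c₁ : Continuous fun z : ↥Θ × ↥Θ => max z.1 z.2 := continuous_fst.max continuous_snd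
  have c₂ : Continuous fun z : ↥Θ × ↥Θ => min z.1 z.2 := continuous_fst.min continuous_snd
  refine payoff_eq_of_perturbation hS hR μ0 c₁.measurable c₂.measurable
    (fun x y => max_choice x y) (fun x y => min_choice x y) ?_
  intro p hp
  have transfer : ∀ t : ↥Θ, ((μ0 : Measure ↥Θ) {t} = 0 ∨
      ∃ a : ↥A, bestResponses uR (diracPM t) = {a}) →
      ∀ᵐ ν : ProbabilityMeasure ↥Θ ∂(p : Measure (ProbabilityMeasure ↥Θ)), ((ν : Measure ↥Θ) {t} = 0 ∨
      ∃ a : ↥A, bestResponses uR (diracPM t) = {a}) := by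
    intro t ht
    rcases ht with ht | ht
    · filter_upwards [ae_null hp (measurableSet_singleton t) ht] with ν hν using Or.inl hν
    · exact Filter.Eventually.of_forall fun ν => Or.inr ht
  filter_upwards [ae_null hp measurableSet_Ioi hIoi, ae_null hp measurableSet_Iio hIio,
    transfer tmax (hbdry tmax (Or.inr hmaxS)), transfer tmin (hbdry tmin (Or.inl hminS))]
    with ν n1 n2 s1 s2
  obtain ⟨amax, amaxB, hamax⟩ := (br_compact hR ν).exists_isGreatest (br_nonempty hR ν)
  obtain ⟨amin, aminB, hamin⟩ := (br_compact hR ν).exists_isLeast (br_nonempty hR ν)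
  have hv : vFun uS uR ν ≤ max (senderEU uS ν amin) (senderEU uS ν amax) := by
    obtain ⟨a, ha, hav⟩ := v_attained hS hR ν
    rw [← hav]
    have h1 : amin ≤ a := hamin ha
    have h2 : a ≤ amax := hamax ha
    rcases hquasi ν with hq | hq
    · rcases h1.eq_or_lt with h1 | h1
      · rw [h1]; exact le_max_left _ _
      rcases h2.eq_or_lt with h2 | h2
      · rw [h2]; exact le_max_right _ _
      exfalso
      have h3 := hq amin a amax h1 h2
      rcases min_lt_iff.1 h3 with h4 | h4
      · exact absurd (aminB a) (not_le.2 h4)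
      · exact absurd (amaxB a) (not_le.2 h4)
    · exact hq amin a amax h1 h2
  rcases le_max_iff.1 hv with hv | hv
  · refine ⟨_, hv, Or.inr ?_⟩
    refine side_tendsto hS hR c₂ c₂.measurable μ0 ν aminB (C := Set.Iic amin) isClosed_Iic
      (fun b hb hbR => le_antisymm hb (hamin hbR)) ?_ n2 (θe := tmin) ?_ s2
    · intro a' ha' x y hxy
      have hyx : y < x := by
        by_contra h
        exact hxy (min_eq_left (not_lt.1 h))
      have h1 : amin < a' := not_le.1 ha'
      have h2 := hsid amin a' h1 y x hyx
      simp only [min_eq_right hyx.le]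
      linarith
    · intro x hx hxN h0
      have hlt : tmin < x := lt_of_le_of_ne (not_lt.1 hxN) (Ne.symm hx)
      refine hminmem (Set.Iio x) isOpen_Iio hlt (measure_mono_null ?_ h0)
      intro y hy
      have hy' : y < x := hy
      change min x y ≠ x
      rw [min_eq_right hy'.le]
      exact hy'.ne
  · refine ⟨_, hv, Or.inl ?_⟩
    refine side_tendsto hS hR c₁ c₁.measurable μ0 ν amaxB (C := Set.Ici amax) isClosed_Ici
      (fun b hb hbR => le_antisymm (hamax hbR) hb) ?_ n1 (θe := tmax) ?_ s1
    · intro a' ha' x y hxy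
      have hyx : x < y := by
        by_contra h
        exact hxy (max_eq_left (not_lt.1 h))
      have h1 : a' < amax := not_le.1 ha'
      have h2 := hsid a' amax h1 x y hyx
      simp only [max_eq_right hyx.le]
      linarith
    · intro x hx hxN h0
      have hlt : x < tmax := lt_of_le_of_ne (not_lt.1 hxN) hx
      refine hmaxmem (Set.Ioi x) isOpen_Ioi hlt (measure_mono_null ?_ h0)
      intro y hy
      have hy' : x < y := hy
      change max x y ≠ x
      rw [max_eq_right hy'.le]
      exact hy'.ne'
end

section
/- For every credibility χ ∈ [0,1], the set of χ-PBE sender payoffs is nonempty and lies weakly below the interval [ŵ(μ0), v̂(μ0)] in the strong set order; moreover, for χ = 1 the set of χ-PBE sender payoffs equals [ŵ(μ0), v̂(μ0)]. -/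
open MeasureTheory Filter Topology

/-- A probability vector on a finite set. -/
def IsDist {X : Type*} [Fintype X] (f : X → ℝ) : Prop :=
  (∀ x, 0 ≤ f x) ∧ ∑ x, f x = 1

/-- An experiment (official reporting protocol): a state-contingent distribution over
messages. -/
def IsExperiment {Θ M : Type*} [Fintype M] (ψ : Θ → M → ℝ) : Prop :=
  ∀ θ, IsDist (ψ θ)

/-- The sender's upper value function `v(μ) = max_{a ∈ A*_R(μ)} u_S(a)` (state-independent
sender utility). -/
noncomputable def vG {A Θ : Type*} [Fintype Θ] (uS : A → ℝ) (uR : A → Θ → ℝ)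
    (μ : Θ → ℝ) : ℝ :=
  sSup (uS '' BRf uR μ)

/-- The sender's lower value function `w(μ) = min_{a ∈ A*_R(μ)} u_S(a)`. -/
noncomputable def wG {A Θ : Type*} [Fintype Θ] (uS : A → ℝ) (uR : A → Θ → ℝ)
    (μ : Θ → ℝ) : ℝ :=
  sInf (uS '' BRf uR μ)

/-- `v̂(μ0)`: the sender's Bayesian persuasion value. -/
noncomputable def vHatG {A Θ : Type*} [Fintype Θ] (uS : A → ℝ) (uR : A → Θ → ℝ)
    (μ0 : Θ → ℝ) : ℝ :=
  sSup ((fun p : ProbabilityMeasure (Belief Θ) =>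
    ∫ μ, vG uS uR (μ : Belief Θ).1 ∂(p : Measure (Belief Θ))) '' IPolF μ0)

/-- `ŵ(μ0)`: the sender's worst equilibrium value under full commitment. -/
noncomputable def wHatG {A Θ : Type*} [Fintype Θ] (uS : A → ℝ) (uR : A → Θ → ℝ)
    (μ0 : Θ → ℝ) : ℝ :=
  sSup ((fun p : ProbabilityMeasure (Belief Θ) =>
    ∫ μ, wG uS uR (μ : Belief Θ).1 ∂(p : Measure (Belief Θ))) '' IPolF μ0)

/-- The sender's expected payoff in the partial-credibility game from (provisionally)
choosing experiment `ψ'`, given influencing strategy `σ` and receiver strategy `α`. -/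
noncomputable def chiValue {A Θ M : Type*} [Fintype A] [Fintype Θ] [Fintype M]
    (uS : A → ℝ) (μ0 : Θ → ℝ) (χ : ℝ)
    (σ : Θ → (Θ → M → ℝ) → M → ℝ) (α : M → (Θ → M → ℝ) → A → ℝ)
    (ψ' : Θ → M → ℝ) : ℝ :=
  ∑ θ, μ0 θ * ∑ m, (χ * ψ' θ m + (1 - χ) * σ θ ψ' m) * ∑ a, uS a * α m ψ' a

/-- Perfect Bayesian `χ`-equilibrium of the partial-credibility persuasion game. -/
def IsChiPBE {A Θ M : Type*} [Fintype A] [Fintype Θ] [Fintype M]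
    (uS : A → ℝ) (uR : A → Θ → ℝ) (μ0 : Θ → ℝ) (χ : ℝ)
    (ψ : Θ → M → ℝ) (σ : Θ → (Θ → M → ℝ) → M → ℝ)
    (α : M → (Θ → M → ℝ) → A → ℝ) (β : M → (Θ → M → ℝ) → Θ → ℝ) : Prop :=
  IsExperiment ψ ∧
  (∀ ψ' : Θ → M → ℝ, IsExperiment ψ' → ∀ θ, IsDist (σ θ ψ')) ∧
  (∀ ψ' : Θ → M → ℝ, IsExperiment ψ' → ∀ m, IsDist (α m ψ')) ∧
  (∀ ψ' : Θ → M → ℝ, IsExperiment ψ' → ∀ m, IsDist (β m ψ')) ∧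
  -- (1) the sender's experiment choice is optimal
  (∀ ψ' : Θ → M → ℝ, IsExperiment ψ' →
    chiValue uS μ0 χ σ α ψ' ≤ chiValue uS μ0 χ σ α ψ) ∧
  -- (2) the receiver best responds to his beliefs
  (∀ ψ' : Θ → M → ℝ, IsExperiment ψ' → ∀ (m : M) (a : A),
    α m ψ' a ≠ 0 → a ∈ BRf uR (β m ψ')) ∧
  -- (3) beliefs are Bayesian
  (∀ ψ' : Θ → M → ℝ, IsExperiment ψ' → ∀ (m : M) (θ : Θ),
    β m ψ' θ * (∑ θ', μ0 θ' * (χ * ψ' θ' m + (1 - χ) * σ θ' ψ' m)) =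
      μ0 θ * (χ * ψ' θ m + (1 - χ) * σ θ ψ' m)) ∧
  -- (4) the influencing sender's message choice is optimal
  (∀ ψ' : Θ → M → ℝ, IsExperiment ψ' → ∀ (θ : Θ) (m : M), σ θ ψ' m ≠ 0 →
    ∀ m' : M, ∑ a, uS a * α m' ψ' a ≤ ∑ a, uS a * α m ψ' a)

/-- The set of sender `χ`-PBE payoffs. -/
def chiPBEPayoffs (A : Type*) {Θ : Type*} (M : Type*) [Fintype A] [Fintype Θ] [Fintype M]
    (uS : A → ℝ) (uR : A → Θ → ℝ) (μ0 : Θ → ℝ) (χ : ℝ) : Set ℝ :=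
  {s | ∃ (ψ : Θ → M → ℝ) (σ : Θ → (Θ → M → ℝ) → M → ℝ)
      (α : M → (Θ → M → ℝ) → A → ℝ) (β : M → (Θ → M → ℝ) → Θ → ℝ),
    IsChiPBE uS uR μ0 χ ψ σ α β ∧ s = chiValue uS μ0 χ σ α ψ}

/-- `w*_χ(μ0)`: the infimum sender `χ`-PBE payoff. -/
noncomputable def wStar (A : Type*) {Θ : Type*} (M : Type*)
    [Fintype A] [Fintype Θ] [Fintype M]
    (uS : A → ℝ) (uR : A → Θ → ℝ) (μ0 : Θ → ℝ) (χ : ℝ) : ℝ :=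
  sInf (chiPBEPayoffs A M uS uR μ0 χ)


set_option linter.unusedSectionVars false

namespace ChiP

variable {A Θ M : Type} [Fintype A] [Fintype Θ] [Fintype M]

/-- total payoff of an outcome -/
noncomputable def pay (uS : A → ℝ) (b : M → Θ → ℝ) (α : M → A → ℝ) : ℝ :=
  ∑ m, (∑ θ, b m θ) * ∑ a, uS a * α m a

/-- Outcomes, with slack `η` in the receiver's best response condition. -/
structure Out (uS : A → ℝ) (uR : A → Θ → ℝ) (μ0 : Θ → ℝ) (χ η : ℝ)
    (b c : M → Θ → ℝ) (α : M → A → ℝ) (y : ℝ) : Prop where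
  c0 : ∀ m θ, 0 ≤ c m θ
  cb : ∀ m θ, c m θ ≤ b m θ
  bs : ∀ θ, ∑ m, b m θ = μ0 θ
  cs : ∀ θ, ∑ m, c m θ = (1 - χ) * μ0 θ
  α0 : ∀ m a, 0 ≤ α m a
  α1 : ∀ m, ∑ a, α m a = 1
  br : ∀ m a a', 0 ≤ α m a * (∑ θ, uR a θ * b m θ - ∑ θ, uR a' θ * b m θ) + η
  yb : ∀ m θ, 0 ≤ b m θ * (y - ∑ a, uS a * α m a)
  yc : ∀ m θ, c m θ * (y - ∑ a, uS a * α m a) = 0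
  yl : -(∑ a, |uS a|) ≤ y
  yu : y ≤ ∑ a, |uS a|

lemma Out.b0 {uS : A → ℝ} {uR : A → Θ → ℝ} {μ0 : Θ → ℝ} {χ η : ℝ}
    {b c : M → Θ → ℝ} {α : M → A → ℝ} {y : ℝ} (h : Out uS uR μ0 χ η b c α y) (m : M) (θ : Θ) :
    0 ≤ b m θ := (h.c0 m θ).trans (h.cb m θ)

/-- the closed set of slack/outcome pairs -/
def K (uS : A → ℝ) (uR : A → Θ → ℝ) (μ0 : Θ → ℝ) (χ : ℝ) :
    Set (ℝ × (M → Θ → ℝ) × (M → Θ → ℝ) × (M → A → ℝ) × ℝ) :=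
  {z | Out uS uR μ0 χ z.1 z.2.1 z.2.2.1 z.2.2.2.1 z.2.2.2.2}

lemma K_closed (uS : A → ℝ) (uR : A → Θ → ℝ) (μ0 : Θ → ℝ) (χ : ℝ) :
    IsClosed (K (M := M) uS uR μ0 χ) := by
  have : K (M := M) uS uR μ0 χ =
    {z | (∀ m θ, 0 ≤ z.2.2.1 m θ) ∧ (∀ m θ, z.2.2.1 m θ ≤ z.2.1 m θ) ∧
      (∀ θ, ∑ m, z.2.1 m θ = μ0 θ) ∧ (∀ θ, ∑ m, z.2.2.1 m θ = (1 - χ) * μ0 θ) ∧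
      (∀ m a, 0 ≤ z.2.2.2.1 m a) ∧ (∀ m, ∑ a, z.2.2.2.1 m a = 1) ∧
      (∀ m a a', 0 ≤ z.2.2.2.1 m a *
        (∑ θ, uR a θ * z.2.1 m θ - ∑ θ, uR a' θ * z.2.1 m θ) + z.1) ∧
      (∀ m θ, 0 ≤ z.2.1 m θ * (z.2.2.2.2 - ∑ a, uS a * z.2.2.2.1 m a)) ∧
      (∀ m θ, z.2.2.1 m θ * (z.2.2.2.2 - ∑ a, uS a * z.2.2.2.1 m a) = 0) ∧
      -(∑ a, |uS a|) ≤ z.2.2.2.2 ∧ z.2.2.2.2 ≤ ∑ a, |uS a|} := by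
    ext z
    constructor
    · rintro ⟨h1, h2, h3, h4, h5, h6, h7, h8, h9, h10, h11⟩
      exact ⟨h1, h2, h3, h4, h5, h6, h7, h8, h9, h10, h11⟩
    · rintro ⟨h1, h2, h3, h4, h5, h6, h7, h8, h9, h10, h11⟩
      exact ⟨h1, h2, h3, h4, h5, h6, h7, h8, h9, h10, h11⟩
  rw [this]
  simp only [Set.ofPred_and, Set.ofPred_forall]
  refine IsClosed.inter ?_ <| IsClosed.inter ?_ <| IsClosed.inter ?_ <| IsClosed.inter ?_ <|
    IsClosed.inter ?_ <| IsClosed.inter ?_ <| IsClosed.inter ?_ <| IsClosed.inter ?_ <|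
    IsClosed.inter ?_ <| IsClosed.inter ?_ ?_
  all_goals
    repeat' (refine isClosed_iInter fun _ => ?_)
    first
    | exact isClosed_le (by fun_prop) (by fun_prop)
    | exact isClosed_eq (by fun_prop) (by fun_prop)

lemma K_compact (uS : A → ℝ) (uR : A → Θ → ℝ) (μ0 : Θ → ℝ) (χ : ℝ)
    (hμ0 : μ0 ∈ stdSimplex ℝ Θ) :
    IsCompact (K (M := M) uS uR μ0 χ ∩ {z | z.1 ∈ Set.Icc (0 : ℝ) 1}) := by
  let C := ∑ a, |uS a|
  have hI : IsCompact (Set.Icc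
     ((0, fun _ _ => 0, fun _ _ => 0, fun _ _ => 0, -C) :
      ℝ × (M → Θ → ℝ) × (M → Θ → ℝ) × (M → A → ℝ) × ℝ)
     (1, fun _ _ => 1, fun _ _ => 1, fun _ _ => 1, C)) := isCompact_Icc
  refine hI.of_isClosed_subset ((K_closed uS uR μ0 χ).inter ?_) ?_
  · exact isClosed_Icc.preimage continuous_fst
  · rintro z ⟨h, h0, h1⟩
    have h : Out uS uR μ0 χ z.1 z.2.1 z.2.2.1 z.2.2.2.1 z.2.2.2.2 := h
    have hb : ∀ m θ, z.2.1 m θ ≤ 1 := fun m θ => by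
      have := Finset.single_le_sum (f := fun m => z.2.1 m θ) (fun i _ => h.b0 i θ)
        (Finset.mem_univ m)
      have h2 := h.bs θ
      have h3 := Finset.single_le_sum (f := fun θ => μ0 θ) (fun i _ => hμ0.1 i)
        (Finset.mem_univ θ)
      have h4 := hμ0.2
      simp only at *
      linarith
    have ha : ∀ m a, z.2.2.2.1 m a ≤ 1 := fun m a => by
      have := Finset.single_le_sum (f := fun a => z.2.2.2.1 m a) (fun i _ => h.α0 m i)
        (Finset.mem_univ a)
      have h2 := h.α1 m
      simp only at *
      linarith
    exact ⟨⟨h0, fun m θ => h.b0 m θ, fun m θ => h.c0 m θ, fun m a => h.α0 m a, h.yl⟩,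
      ⟨h1, fun m θ => hb m θ, fun m θ => (h.cb m θ).trans (hb m θ), fun m a => ha m a, h.yu⟩⟩

lemma pay_cont (uS : A → ℝ) : Continuous
    (fun z : ℝ × (M → Θ → ℝ) × (M → Θ → ℝ) × (M → A → ℝ) × ℝ => pay uS z.2.1 z.2.2.2.1) := by
  unfold pay; fun_prop

/-- limit lemma -/
lemma out_limit (uS : A → ℝ) (uR : A → Θ → ℝ) (μ0 : Θ → ℝ) (χ : ℝ)
    (hμ0 : μ0 ∈ stdSimplex ℝ Θ) (ψ : Θ → M → ℝ) (t : ℝ)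
    (H : ∀ η > 0, ∃ b c α y, Out uS uR μ0 χ η b c α y ∧
      (∀ m θ, b m θ - c m θ = χ * μ0 θ * ψ θ m) ∧ pay uS b α ≤ t) :
    ∃ b c α y, Out uS uR μ0 χ 0 b c α y ∧
      (∀ m θ, b m θ - c m θ = χ * μ0 θ * ψ θ m) ∧ pay uS b α ≤ t := by
  have hη : ∀ n : ℕ, (0:ℝ) < 1 / ((n:ℝ) + 1) := fun n => by positivity
  choose b c α y h1 h2 h3 using fun n : ℕ => H _ (hη n)
  let z : ℕ → ℝ × (M → Θ → ℝ) × (M → Θ → ℝ) × (M → A → ℝ) × ℝ :=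
    fun n => (1 / ((n:ℝ) + 1), b n, c n, α n, y n)
  let S : Set (ℝ × (M → Θ → ℝ) × (M → Θ → ℝ) × (M → A → ℝ) × ℝ) :=
    {z | (∀ m θ, z.2.1 m θ - z.2.2.1 m θ = χ * μ0 θ * ψ θ m)} ∩ {z | pay uS z.2.1 z.2.2.2.1 ≤ t}
  have hS : IsClosed S := by
    refine IsClosed.inter ?_ (isClosed_le (pay_cont uS) continuous_const)
    simp only [Set.ofPred_forall]
    repeat' (refine isClosed_iInter fun _ => ?_)
    exact isClosed_eq (by fun_prop) (by fun_prop)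
  have hc := (K_compact (M := M) uS uR μ0 χ hμ0).inter_right hS
  have hz : ∀ n, z n ∈ (K (M := M) uS uR μ0 χ ∩ {z | z.1 ∈ Set.Icc (0 : ℝ) 1}) ∩ S := by
    intro n
    refine ⟨⟨h1 n, (hη n).le, ?_⟩, h2 n, h3 n⟩
    have : (0:ℝ) ≤ n := Nat.cast_nonneg n
    show 1 / ((n:ℝ) + 1) ≤ 1
    rw [div_le_one (by positivity)]; linarith
  obtain ⟨w, hw, φ, hφ, hlim⟩ := hc.tendsto_subseq hz
  have h0 : w.1 = 0 := by
    have e1 : Tendsto (fun n => (z (φ n)).1) atTop (𝓝 w.1) :=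
      (continuous_fst.tendsto w).comp hlim
    have e2 : Tendsto (fun n => (z (φ n)).1) atTop (𝓝 0) :=
      (tendsto_one_div_add_atTop_nhds_zero_nat (𝕜 := ℝ)).comp hφ.tendsto_atTop
    exact tendsto_nhds_unique e1 e2
  refine ⟨w.2.1, w.2.2.1, w.2.2.2.1, w.2.2.2.2, ?_, hw.2.1, hw.2.2⟩
  have : Out uS uR μ0 χ w.1 w.2.1 w.2.2.1 w.2.2.2.1 w.2.2.2.2 := hw.1.1
  rwa [h0] at this

/-- the compact set of exact outcomes -/
lemma K0_compact (uS : A → ℝ) (uR : A → Θ → ℝ) (μ0 : Θ → ℝ) (χ : ℝ)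
    (hμ0 : μ0 ∈ stdSimplex ℝ Θ) :
    IsCompact (K (M := M) uS uR μ0 χ ∩ {z | z.1 = 0}) := by
  have h := (K_compact (M := M) uS uR μ0 χ hμ0).inter_right
    (isClosed_eq (continuous_fst) (continuous_const (y := (0:ℝ))))
  convert h using 1
  ext z
  constructor
  · rintro ⟨h1, h2⟩
    refine ⟨⟨h1, ?_⟩, h2⟩
    have : z.1 = 0 := h2
    simp [this]
  · rintro ⟨⟨h1, _⟩, h2⟩
    exact ⟨h1, h2⟩

lemma BRf_nonempty [Nonempty A] (uR : A → Θ → ℝ) (μ : Θ → ℝ) : (BRf uR μ).Nonempty := by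
  obtain ⟨a, -, ha⟩ := Finset.exists_max_image Finset.univ (fun a => ∑ θ, uR a θ * μ θ)
    Finset.univ_nonempty
  exact ⟨a, fun a' => ha a' (Finset.mem_univ _)⟩

lemma wG_le (uS : A → ℝ) (uR : A → Θ → ℝ) (μ : Θ → ℝ) {a : A} (ha : a ∈ BRf uR μ) :
    wG uS uR μ ≤ uS a :=
  csInf_le (Set.toFinite _).bddBelow ⟨a, ha, rfl⟩

lemma le_vG (uS : A → ℝ) (uR : A → Θ → ℝ) (μ : Θ → ℝ) {a : A} (ha : a ∈ BRf uR μ) :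
    uS a ≤ vG uS uR μ :=
  le_csSup (Set.toFinite _).bddAbove ⟨a, ha, rfl⟩

lemma wG_mem [Nonempty A] (uS : A → ℝ) (uR : A → Θ → ℝ) (μ : Θ → ℝ) :
    ∃ a ∈ BRf uR μ, uS a = wG uS uR μ :=
  ((BRf_nonempty uR μ).image uS).csInf_mem (Set.toFinite _)

lemma vG_mem [Nonempty A] (uS : A → ℝ) (uR : A → Θ → ℝ) (μ : Θ → ℝ) :
    ∃ a ∈ BRf uR μ, uS a = vG uS uR μ :=
  ((BRf_nonempty uR μ).image uS).csSup_mem (Set.toFinite _)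

lemma uS_abs (uS : A → ℝ) (a : A) : |uS a| ≤ ∑ a, |uS a| :=
  Finset.single_le_sum (f := fun a => |uS a|) (fun _ _ => abs_nonneg _) (Finset.mem_univ a)

lemma wG_abs [Nonempty A] (uS : A → ℝ) (uR : A → Θ → ℝ) (μ : Θ → ℝ) :
    |wG uS uR μ| ≤ ∑ a, |uS a| := by
  obtain ⟨a, -, h⟩ := wG_mem uS uR μ
  rw [← h]; exact uS_abs uS a

lemma vG_abs [Nonempty A] (uS : A → ℝ) (uR : A → Θ → ℝ) (μ : Θ → ℝ) :
    |vG uS uR μ| ≤ ∑ a, |uS a| := by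
  obtain ⟨a, -, h⟩ := vG_mem uS uR μ
  rw [← h]; exact uS_abs uS a

/-- upper bound for an average -/
lemma avg_le (uS α : A → ℝ) (h0 : ∀ a, 0 ≤ α a) (h1 : ∑ a, α a = 1) (x : ℝ)
    (h : ∀ a, α a ≠ 0 → uS a ≤ x) : ∑ a, uS a * α a ≤ x := by
  calc ∑ a, uS a * α a ≤ ∑ a, x * α a := by
        refine Finset.sum_le_sum fun a _ => ?_
        by_cases ha : α a = 0
        · simp [ha]
        · exact mul_le_mul_of_nonneg_right (h a ha) (h0 a)
    _ = x := by rw [← Finset.mul_sum, h1, mul_one]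

lemma le_avg (uS α : A → ℝ) (h0 : ∀ a, 0 ≤ α a) (h1 : ∑ a, α a = 1) (x : ℝ)
    (h : ∀ a, α a ≠ 0 → x ≤ uS a) : x ≤ ∑ a, uS a * α a := by
  calc x = ∑ a, x * α a := by rw [← Finset.mul_sum, h1, mul_one]
    _ ≤ ∑ a, uS a * α a := by
        refine Finset.sum_le_sum fun a _ => ?_
        by_cases ha : α a = 0
        · simp [ha]
        · exact mul_le_mul_of_nonneg_right (h a ha) (h0 a)

/-- finite information policies are dominated by the supremum over `IPolF`. -/
lemma fin_le_sSup (μ0 : Θ → ℝ) (f : (Θ → ℝ) → ℝ) (C : ℝ)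
    (hC : ∀ μ, |f μ| ≤ C) (l : M → ℝ) (ν : M → Θ → ℝ) (hl : ∀ m, 0 ≤ l m)
    (hl1 : ∑ m, l m = 1) (hν : ∀ m, ν m ∈ stdSimplex ℝ Θ)
    (hb : ∀ θ, ∑ m, l m * ν m θ = μ0 θ) :
    ∑ m, l m * f (ν m) ≤ sSup ((fun p : ProbabilityMeasure (Belief Θ) =>
      ∫ μ, f (μ : Belief Θ).1 ∂(p : Measure (Belief Θ))) '' IPolF μ0) := by
  classical
  let P : Measure (Belief Θ) := ∑ m, (ENNReal.ofReal (l m)) • Measure.dirac (⟨ν m, hν m⟩ : Belief Θ)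
  have hint : ∀ g : Belief Θ → ℝ, ∫ μ, g μ ∂P = ∑ m, l m * g ⟨ν m, hν m⟩ := by
    intro g
    have hg : ∀ m ∈ Finset.univ, Integrable g
        ((ENNReal.ofReal (l m)) • Measure.dirac (⟨ν m, hν m⟩ : Belief Θ)) := by
      intro m _
      refine Integrable.smul_measure ?_ ENNReal.ofReal_ne_top
      exact integrable_dirac (by simp)
    rw [integral_finsetSum_measure hg]
    refine Finset.sum_congr rfl fun m _ => ?_
    rw [integral_smul_measure, integral_dirac, ENNReal.toReal_ofReal (hl m), smul_eq_mul]
  have hP : IsProbabilityMeasure P := by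
    constructor
    simp only [P, Measure.coe_finsetSum, Finset.sum_apply, Measure.smul_apply, measure_univ,
      smul_eq_mul, mul_one]
    rw [← ENNReal.ofReal_sum_of_nonneg (fun i _ => hl i), hl1, ENNReal.ofReal_one]
  refine le_csSup ⟨C, ?_⟩ ⟨⟨P, hP⟩, ?_, ?_⟩
  · rintro _ ⟨p, -, rfl⟩
    have := norm_integral_le_of_norm_le_const (μ := (p : Measure (Belief Θ)))
      (f := fun μ : Belief Θ => f μ.1) (C := C) (Filter.Eventually.of_forall fun μ => hC _)
    simp only [probReal_univ, mul_one] at this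
    exact (le_abs_self _).trans this
  · intro θ
    show ∫ μ, (μ : Belief Θ).1 θ ∂P = _
    rw [hint, hb]
  · show ∫ μ, f (μ : Belief Θ).1 ∂P = _
    rw [hint]

/-- Normalisation of a nonnegative family. -/
lemma normalise (μ0 : Θ → ℝ) (hμ0 : μ0 ∈ stdSimplex ℝ Θ) (b : M → Θ → ℝ)
    (hb : ∀ m θ, 0 ≤ b m θ) (hs : ∀ θ, ∑ m, b m θ = μ0 θ) :
    ∃ ν : M → Θ → ℝ, (∀ m, ν m ∈ stdSimplex ℝ Θ) ∧
      (∀ m θ, b m θ = (∑ θ, b m θ) * ν m θ) ∧ (∀ m, 0 ≤ ∑ θ, b m θ) ∧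
      ∑ m, ∑ θ, b m θ = 1 := by
  classical
  refine ⟨fun m => if ∑ θ, b m θ = 0 then μ0 else fun θ => b m θ / ∑ θ, b m θ, ?_, ?_, ?_, ?_⟩
  · intro m
    by_cases h : ∑ θ, b m θ = 0
    · simp only [h, if_true]; exact hμ0
    · simp only [h, if_false]
      refine ⟨fun θ => div_nonneg (hb m θ) (Finset.sum_nonneg fun i _ => hb m i), ?_⟩
      rw [← Finset.sum_div, div_self h]
  · intro m θ
    by_cases h : ∑ θ, b m θ = 0
    · simp only [h, zero_mul]
      exact (Finset.sum_eq_zero_iff_of_nonneg (fun i _ => hb m i)).1 h θ (Finset.mem_univ _)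
    · simp only [h, if_false]
      field_simp
  · exact fun m => Finset.sum_nonneg fun i _ => hb m i
  · rw [Finset.sum_comm]
    simp only [hs]
    exact hμ0.2

lemma pay_le_sup (uS : A → ℝ) (μ0 : Θ → ℝ) (hμ0 : μ0 ∈ stdSimplex ℝ Θ)
    (f : (Θ → ℝ) → ℝ) (C : ℝ) (hC : ∀ μ, |f μ| ≤ C) (b : M → Θ → ℝ)
    (hb : ∀ m θ, 0 ≤ b m θ) (hs : ∀ θ, ∑ m, b m θ = μ0 θ) (α : M → A → ℝ)
    (hf : ∀ m (ν : Θ → ℝ) (l : ℝ), 0 < l → ν ∈ stdSimplex ℝ Θ → (∀ θ, b m θ = l * ν θ) →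
      ∑ a, uS a * α m a ≤ f ν) :
    pay uS b α ≤ sSup ((fun p : ProbabilityMeasure (Belief Θ) =>
      ∫ μ, f (μ : Belief Θ).1 ∂(p : Measure (Belief Θ))) '' IPolF μ0) := by
  obtain ⟨ν, h1, h2, h3, h4⟩ := normalise μ0 hμ0 b hb hs
  refine le_trans ?_ (fin_le_sSup μ0 f C hC (fun m => ∑ θ, b m θ) ν h3 h4 h1 ?_)
  · unfold pay
    refine Finset.sum_le_sum fun m _ => ?_
    rcases (h3 m).eq_or_lt with h | h
    · rw [← h]; simp
    · exact mul_le_mul_of_nonneg_left (hf m (ν m) _ h (h1 m) (h2 m)) h.le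
  · intro θ
    rw [← hs θ]
    exact Finset.sum_congr rfl fun m _ => (h2 m θ).symm

lemma sum_scale (x : Θ → ℝ) (b ν : Θ → ℝ) (l : ℝ) (h : ∀ θ, b θ = l * ν θ) :
    ∑ θ, x θ * b θ = l * ∑ θ, x θ * ν θ := by
  rw [Finset.mul_sum]
  exact Finset.sum_congr rfl fun θ _ => by rw [h]; ring

/-- support of the receiver's strategy -/
lemma Out.mem_BR {uS : A → ℝ} {uR : A → Θ → ℝ} {μ0 : Θ → ℝ} {χ : ℝ}
    {b c : M → Θ → ℝ} {α : M → A → ℝ} {y : ℝ} (h : Out uS uR μ0 χ 0 b c α y) {m : M} {a : A}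
    (ha : α m a ≠ 0) : a ∈ BRf uR (b m) := by
  intro a'
  have h1 := h.br m a a'
  have h2 : 0 < α m a := lt_of_le_of_ne (h.α0 m a) (Ne.symm ha)
  rw [add_zero] at h1
  have := nonneg_of_mul_nonneg_right h1 h2
  linarith

lemma BR_scale {uR : A → Θ → ℝ} {b ν : Θ → ℝ} {l : ℝ} (hl : 0 < l) (h : ∀ θ, b θ = l * ν θ)
    {a : A} : a ∈ BRf uR b ↔ a ∈ BRf uR ν := by
  constructor
  · intro ha a'
    have := ha a'
    rw [sum_scale _ _ _ _ h, sum_scale _ _ _ _ h] at this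
    exact le_of_mul_le_mul_left this hl
  · intro ha a'
    rw [sum_scale _ _ _ _ h, sum_scale _ _ _ _ h]
    exact mul_le_mul_of_nonneg_left (ha a') hl.le

/-- L4 -/
lemma pay_le_vHat [Nonempty A] {uS : A → ℝ} {uR : A → Θ → ℝ} {μ0 : Θ → ℝ} {χ : ℝ}
    (hμ0 : μ0 ∈ stdSimplex ℝ Θ)
    {b c : M → Θ → ℝ} {α : M → A → ℝ} {y : ℝ} (h : Out uS uR μ0 χ 0 b c α y) :
    pay uS b α ≤ vHatG uS uR μ0 := by
  refine pay_le_sup uS μ0 hμ0 (vG uS uR) _ (vG_abs uS uR) b h.b0 h.bs α ?_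
  intro m ν l hl hν hb
  refine avg_le _ _ (h.α0 m) (h.α1 m) _ fun a ha => le_vG uS uR ν ?_
  exact (BR_scale hl hb).1 (h.mem_BR ha)

lemma pay_le_wHat [Nonempty A] {uS : A → ℝ} {uR : A → Θ → ℝ} {μ0 : Θ → ℝ} {χ ε : ℝ} (hε : 0 < ε)
    (hμ0 : μ0 ∈ stdSimplex ℝ Θ)
    {b c : M → Θ → ℝ} {α : M → A → ℝ} {y : ℝ}
    (h : Out uS (fun a θ => uR a θ - ε * uS a) μ0 χ 0 b c α y) :
    pay uS b α ≤ wHatG uS uR μ0 := by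
  refine pay_le_sup uS μ0 hμ0 (wG uS uR) _ (wG_abs uS uR) b h.b0 h.bs α ?_
  intro m ν l hl hν hb
  refine avg_le _ _ (h.α0 m) (h.α1 m) _ fun a ha => ?_
  have h1 := (BR_scale hl hb).1 (h.mem_BR ha)
  obtain ⟨a', h2, h3⟩ := wG_mem uS uR ν
  have h4 := h1 a'
  have h5 := h2 a
  have hx : ∀ a, ∑ θ, (uR a θ - ε * uS a) * ν θ = ∑ θ, uR a θ * ν θ - ε * uS a := by
    intro a
    simp only [sub_mul, Finset.sum_sub_distrib]
    rw [← Finset.mul_sum, hν.2, mul_one]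
  rw [hx, hx] at h4
  rw [← h3]
  have : ε * uS a ≤ ε * uS a' := by linarith
  exact le_of_mul_le_mul_left this hε


lemma mix (uS : A → ℝ) (a1 a2 : A) (y : ℝ) (h1 : uS a1 ≤ y) (h2 : y ≤ uS a2) :
    ∃ α : A → ℝ, (∀ a, 0 ≤ α a) ∧ ∑ a, α a = 1 ∧ (∀ a, α a ≠ 0 → a = a1 ∨ a = a2) ∧
      ∑ a, uS a * α a = y := by
  classical
  obtain ⟨p, hp0, hp1, hp⟩ : ∃ p : ℝ, 0 ≤ p ∧ p ≤ 1 ∧ (1 - p) * uS a1 + p * uS a2 = y := by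
    rcases h1.eq_or_lt with h | h
    · exact ⟨0, le_rfl, zero_le_one, by simp [h]⟩
    · have hd : 0 < uS a2 - uS a1 := by linarith
      refine ⟨(y - uS a1) / (uS a2 - uS a1), div_nonneg (by linarith) hd.le, ?_, ?_⟩
      · rw [div_le_one hd]; linarith
      · field_simp; ring
  refine ⟨fun a => (1 - p) * (if a = a1 then 1 else 0) + p * (if a = a2 then 1 else 0),
    fun a => ?_, ?_, fun a ha => ?_, ?_⟩
  · have : 0 ≤ 1 - p := by linarith
    positivity
  · rw [Finset.sum_add_distrib, ← Finset.mul_sum, ← Finset.mul_sum]; simp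
  · by_contra hcon
    push Not at hcon
    apply ha
    simp [hcon.1, hcon.2]
  · simp only [mul_add, Finset.sum_add_distrib]
    rw [← hp]
    congr 1
    · simp [mul_comm]
    · simp [mul_comm]

lemma isClosed_br (uR : A → Θ → ℝ) (b μ0 : Θ → ℝ) (Q : A → Prop) :
    IsClosed {l : ℝ | ∃ a, Q a ∧ a ∈ BRf uR (fun θ => (1 - l) * b θ + l * μ0 θ)} := by
  have : {l : ℝ | ∃ a, Q a ∧ a ∈ BRf uR (fun θ => (1 - l) * b θ + l * μ0 θ)} =
      ⋃ a ∈ {a | Q a}, ⋂ a' : A, {l : ℝ | ∑ θ, uR a' θ * ((1 - l) * b θ + l * μ0 θ) ≤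
        ∑ θ, uR a θ * ((1 - l) * b θ + l * μ0 θ)} := by
    ext l
    simp [BRf]
  rw [this]
  refine Set.Finite.isClosed_biUnion (Set.toFinite _) fun a _ => isClosed_iInter fun a' => ?_
  exact isClosed_le (by fun_prop) (by fun_prop)

/-- intermediate value along the segment towards the prior -/
lemma slide_one [Nonempty A] (uS : A → ℝ) (uR : A → Θ → ℝ) (b μ0 : Θ → ℝ) (y : ℝ)
    (h0 : ∃ a, y ≤ uS a ∧ a ∈ BRf uR b) (h1 : ∃ a, uS a ≤ y ∧ a ∈ BRf uR μ0) :
    ∃ l : ℝ, 0 ≤ l ∧ l ≤ 1 ∧ ∃ α : A → ℝ, (∀ a, 0 ≤ α a) ∧ ∑ a, α a = 1 ∧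
      (∀ a, α a ≠ 0 → a ∈ BRf uR (fun θ => (1 - l) * b θ + l * μ0 θ)) ∧
      ∑ a, uS a * α a = y := by
  have hpc : IsPreconnected (Set.Icc (0:ℝ) 1) := isPreconnected_Icc
  rw [isPreconnected_closed_iff] at hpc
  obtain ⟨l, hl, ⟨a2, h2, h2'⟩, ⟨a1, h3, h3'⟩⟩ := hpc _ _
    (isClosed_br uR b μ0 (fun a => y ≤ uS a)) (isClosed_br uR b μ0 (fun a => uS a ≤ y))
    (by
      intro l _
      obtain ⟨a, ha⟩ := BRf_nonempty uR (fun θ => (1 - l) * b θ + l * μ0 θ)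
      rcases le_total y (uS a) with h | h
      · exact Or.inl ⟨a, h, ha⟩
      · exact Or.inr ⟨a, h, ha⟩)
    (by
      obtain ⟨a, h, ha⟩ := h0
      refine ⟨0, ⟨le_rfl, zero_le_one⟩, a, h, ?_⟩
      simpa using ha)
    (by
      obtain ⟨a, h, ha⟩ := h1
      refine ⟨1, ⟨zero_le_one, le_rfl⟩, a, h, ?_⟩
      simpa using ha)
  obtain ⟨α, g1, g2, g3, g4⟩ := mix uS a1 a2 y h3 h2
  refine ⟨l, hl.1, hl.2, α, g1, g2, fun a ha => ?_, g4⟩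
  rcases g3 a ha with rfl | rfl
  · exact h3'
  · exact h2'

lemma br_of_mem {uR : A → Θ → ℝ} {b : Θ → ℝ} {α : A → ℝ} (h0 : ∀ a, 0 ≤ α a)
    (h : ∀ a, α a ≠ 0 → a ∈ BRf uR b) (a a' : A) :
    0 ≤ α a * (∑ θ, uR a θ * b θ - ∑ θ, uR a' θ * b θ) + 0 := by
  rw [add_zero]
  by_cases ha : α a = 0
  · simp [ha]
  · have := h a ha a'
    exact mul_nonneg (h0 a) (by linarith)

lemma Out.pay_le {uS : A → ℝ} {uR : A → Θ → ℝ} {μ0 : Θ → ℝ} {χ η : ℝ}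
    (hμ0 : μ0 ∈ stdSimplex ℝ Θ)
    {b c : M → Θ → ℝ} {α : M → A → ℝ} {y : ℝ} (h : Out uS uR μ0 χ η b c α y) :
    pay uS b α ≤ y := by
  have h1 : ∑ m, ∑ θ, b m θ = 1 := by
    rw [Finset.sum_comm]; simp only [h.bs]; exact hμ0.2
  have h2 : pay uS b α ≤ ∑ m, (∑ θ, b m θ) * y := by
    unfold pay
    refine Finset.sum_le_sum fun m _ => ?_
    have : 0 ≤ (∑ θ, b m θ) * (y - ∑ a, uS a * α m a) := by
      rw [Finset.sum_mul]; exact Finset.sum_nonneg fun θ _ => h.yb m θ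
    linarith
  rw [← Finset.sum_mul, h1, one_mul] at h2
  exact h2

/-- The sliding lemma. -/
lemma slide [Nonempty A] [Nonempty M] {uS : A → ℝ} {uR : A → Θ → ℝ} {μ0 : Θ → ℝ} {χ : ℝ}
    (hχ0 : 0 ≤ χ) (hχ1 : χ ≤ 1)
    (hμ0 : μ0 ∈ stdSimplex ℝ Θ)
    {b c : M → Θ → ℝ} {α : M → A → ℝ} {y : ℝ} (h : Out uS uR μ0 χ 0 b c α y)
    (y' : ℝ) (hy : y' ≤ y) (hw : wG uS uR μ0 ≤ y') :
    ∃ b' c' α', Out (M := M) uS uR μ0 χ 0 b' c' α' y' ∧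
      pay uS b α - (y - y') ≤ pay uS b' α' := by
  classical
  have hyl : -(∑ a, |uS a|) ≤ y' := by
    have := (abs_le.1 (wG_abs uS uR μ0)).1
    linarith
  have hyu : y' ≤ ∑ a, |uS a| := hy.trans h.yu
  have hpy := h.pay_le hμ0
  obtain ⟨a0, ha0, ha0'⟩ := wG_mem uS uR μ0
  have key : ∀ m, ∃ l : ℝ, 0 ≤ l ∧ l ≤ 1 ∧ ∃ α' : A → ℝ, (∀ a, 0 ≤ α' a) ∧ ∑ a, α' a = 1 ∧
      (∀ a, α' a ≠ 0 → a ∈ BRf uR (fun θ => (1 - l) * b m θ + l * μ0 θ)) ∧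
      ((∑ a, uS a * α' a = y' ∧ y' < ∑ a, uS a * α m a) ∨
        (l = 0 ∧ α' = α m ∧ ∑ a, uS a * α m a ≤ y')) := by
    intro m
    by_cases hm : ∑ a, uS a * α m a ≤ y'
    · refine ⟨0, le_rfl, zero_le_one, α m, h.α0 m, h.α1 m, fun a ha => ?_, Or.inr ⟨rfl, rfl, hm⟩⟩
      simpa using h.mem_BR ha
    · push Not at hm
      have : ∃ a, y' ≤ uS a ∧ a ∈ BRf uR (b m) := by
        by_contra hcon
        push Not at hcon
        have := avg_le uS (α m) (h.α0 m) (h.α1 m) y' fun a ha => by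
          by_contra hlt
          push Not at hlt
          exact hcon a hlt.le (h.mem_BR ha)
        linarith
      obtain ⟨l, h1, h2, α', h3, h4, h5, h6⟩ := slide_one uS uR (b m) μ0 y' this
        ⟨a0, ha0' ▸ hw, ha0⟩
      exact ⟨l, h1, h2, α', h3, h4, h5, Or.inl ⟨h6, hm⟩⟩
  choose l hl0 hl1 α' hα0 hα1 hbr hcase using key
  by_cases hone : ∃ m, l m = 1
  · -- pool at the prior
    obtain ⟨m0, hm0⟩ := hone
    have hu : ∑ a, uS a * α' m0 a = y' := by
      rcases hcase m0 with h | h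
      · exact h.1
      · rw [hm0] at h; exact absurd h.1 one_ne_zero
    have hb0 : ∀ a, α' m0 a ≠ 0 → a ∈ BRf uR μ0 := by
      intro a ha
      have := hbr m0 a ha
      rw [hm0] at this
      simpa using this
    refine ⟨fun m θ => if m = m0 then μ0 θ else 0, fun m θ => if m = m0 then (1 - χ) * μ0 θ else 0,
      fun _ => α' m0, ⟨?_, ?_, ?_, ?_, ?_, ?_, ?_, ?_, ?_, hyl, hyu⟩, ?_⟩
    · intro m θ
      have := hμ0.1 θ
      have : 0 ≤ (1 - χ) * μ0 θ := mul_nonneg (by linarith) this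
      split_ifs <;> simp [this]
    · intro m θ
      have := hμ0.1 θ
      split_ifs
      · nlinarith
      · exact le_rfl
    · intro θ; simp
    · intro θ; simp
    · exact fun _ => hα0 m0
    · exact fun _ => hα1 m0
    · intro m a a'
      by_cases hm : m = m0
      · simp only [hm, if_true]
        exact br_of_mem (hα0 m0) hb0 a a'
      · simp [hm]
    · intro m θ; simp [hu]
    · intro m θ; simp [hu]
    · unfold pay
      have : ∀ m, ∑ θ, (if m = m0 then μ0 θ else 0) = if m = m0 then 1 else 0 := by
        intro m
        split_ifs
        · exact hμ0.2
        · simp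
      simp only [this, hu]
      simp
      have := h.pay_le hμ0
      unfold pay at this
      linarith
  · push Not at hone
    have hlt : ∀ m, 0 < 1 - l m := fun m => by
      have := lt_of_le_of_ne (hl1 m) (hone m); linarith
    let τ : M → ℝ := fun m => l m / (1 - l m)
    have hτ : ∀ m, 0 ≤ τ m := fun m => div_nonneg (hl0 m) (hlt m).le
    let L := ∑ m, τ m
    have hL : 0 ≤ L := Finset.sum_nonneg fun m _ => hτ m
    have hL1 : 0 < 1 + L := by linarith
    have hτ0 : ∀ m, l m = 0 → τ m = 0 := fun m hm => by simp [τ, hm]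
    let b' : M → Θ → ℝ := fun m θ => (b m θ + τ m * μ0 θ) / (1 + L)
    let c' : M → Θ → ℝ := fun m θ => (c m θ + τ m * ((1 - χ) * μ0 θ)) / (1 + L)
    have hs1 : ∑ m, ∑ θ, b m θ = 1 := by
      rw [Finset.sum_comm]; simp only [h.bs]; exact hμ0.2
    have hu : ∀ m, ∑ a, uS a * α' m a ≤ y' := fun m => by
      rcases hcase m with h | h
      · exact h.1.le
      · rw [h.2.1]; exact h.2.2
    have hb'0 : ∀ m θ, 0 ≤ b' m θ := fun m θ =>
      div_nonneg (add_nonneg (h.b0 m θ) (mul_nonneg (hτ m) (hμ0.1 θ))) hL1.le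
    refine ⟨b', c', α', ⟨?_, ?_, ?_, ?_, hα0, hα1, ?_, ?_, ?_, hyl, hyu⟩, ?_⟩
    · intro m θ
      refine div_nonneg (add_nonneg (h.c0 m θ) (mul_nonneg (hτ m) ?_)) hL1.le
      exact mul_nonneg (by linarith) (hμ0.1 θ)
    · intro m θ
      refine div_le_div_of_nonneg_right (add_le_add (h.cb m θ) ?_) hL1.le
      refine mul_le_mul_of_nonneg_left ?_ (hτ m)
      have := hμ0.1 θ
      nlinarith
    · intro θ
      simp only [b']
      rw [← Finset.sum_div, Finset.sum_add_distrib, h.bs, ← Finset.sum_mul]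
      field_simp
      rfl
    · intro θ
      simp only [c']
      rw [← Finset.sum_div, Finset.sum_add_distrib, h.cs, ← Finset.sum_mul,
        div_eq_iff hL1.ne']
      show _ + L * _ = _
      ring
    · intro m a a'
      refine br_of_mem (hα0 m) (fun a ha => ?_) a a'
      have h1 := hbr m a ha
      have hk : 0 < (1 - l m) * (1 + L) := mul_pos (hlt m) hL1
      refine (BR_scale hk (ν := b' m) (fun θ => ?_)).1 h1
      have := (hlt m).ne'
      simp only [b', τ]
      field_simp
    · exact fun m θ => mul_nonneg (hb'0 m θ) (by linarith [hu m])
    · intro m θ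
      rcases hcase m with hc | hc
      · rw [hc.1]; simp
      · have h1 := h.yc m θ
        simp only [c', hτ0 m hc.1, hc.2.1, zero_mul, add_zero]
        rcases mul_eq_zero.1 h1 with h2 | h2
        · simp [h2]
        · have : y' - ∑ a, uS a * α m a = 0 := by linarith [hc.2.2]
          rw [this, mul_zero]
    · have e1 : pay uS b' α' = (∑ m, (∑ θ, b m θ) * ∑ a, uS a * α' m a + L * y') / (1 + L) := by
        unfold pay
        have : ∀ m, (∑ θ, b' m θ) * ∑ a, uS a * α' m a =
            ((∑ θ, b m θ) * ∑ a, uS a * α' m a + τ m * y') / (1 + L) := by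
          intro m
          have : ∑ θ, b' m θ = (∑ θ, b m θ + τ m) / (1 + L) := by
            simp only [b']
            rw [← Finset.sum_div, Finset.sum_add_distrib, ← Finset.mul_sum, hμ0.2, mul_one]
          rw [this]
          have h3 : τ m * ∑ a, uS a * α' m a = τ m * y' := by
            rcases hcase m with hc | hc
            · rw [hc.1]
            · rw [hτ0 m hc.1]; simp
          rw [← h3]; ring
        simp only [this]
        rw [← Finset.sum_div, Finset.sum_add_distrib, ← Finset.sum_mul]
      have e2 : pay uS b α - (y - y') ≤ ∑ m, (∑ θ, b m θ) * ∑ a, uS a * α' m a := by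
        have : pay uS b α - (y - y') =
            ∑ m, (∑ θ, b m θ) * (∑ a, uS a * α m a - (y - y')) := by
          unfold pay
          simp only [mul_sub, Finset.sum_sub_distrib]
          rw [← Finset.sum_mul, ← Finset.sum_mul, hs1]
          ring
        rw [this]
        refine Finset.sum_le_sum fun m _ => ?_
        rcases hcase m with hc | hc
        · rw [hc.1]
          have : 0 ≤ (∑ θ, b m θ) * (y - ∑ a, uS a * α m a) := by
            rw [Finset.sum_mul]; exact Finset.sum_nonneg fun θ _ => h.yb m θ
          linarith
        · rw [hc.2.1]
          refine mul_le_mul_of_nonneg_left (by linarith) ?_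
          exact Finset.sum_nonneg fun θ _ => h.b0 m θ
      rw [e1, le_div_iff₀ hL1]
      nlinarith

/-- L5 -/
lemma interm [Nonempty A] [Nonempty M] {uS : A → ℝ} {uR : A → Θ → ℝ} {μ0 : Θ → ℝ} {χ : ℝ}
    (hχ0 : 0 ≤ χ) (hχ1 : χ ≤ 1)
    (hμ0 : μ0 ∈ stdSimplex ℝ Θ)
    {b c : M → Θ → ℝ} {α : M → A → ℝ} {y : ℝ} (h : Out uS uR μ0 χ 0 b c α y)
    (t : ℝ) (ht : t ≤ pay uS b α) (hw : wG uS uR μ0 ≤ t) :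
    ∃ b' c' α' y', Out (M := M) uS uR μ0 χ 0 b' c' α' y' ∧ pay uS b' α' = t := by
  have hc := (K0_compact (M := M) uS uR μ0 χ hμ0).inter_right
    (isClosed_le (continuous_const (y := t)) (pay_cont (M := M) (Θ := Θ) uS))
  have hne : ((K (M := M) uS uR μ0 χ ∩ {z | z.1 = 0}) ∩
      {z | t ≤ pay uS z.2.1 z.2.2.2.1}).Nonempty := ⟨(0, b, c, α, y), ⟨h, rfl⟩, ht⟩
  obtain ⟨z, ⟨⟨hz1, hz2⟩, hz3⟩, hmin⟩ := hc.exists_isMinOn hne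
    (f := fun z : ℝ × (M → Θ → ℝ) × (M → Θ → ℝ) × (M → A → ℝ) × ℝ => z.2.2.2.2)
    (by fun_prop)
  have hz1 : Out uS uR μ0 χ z.1 z.2.1 z.2.2.1 z.2.2.2.1 z.2.2.2.2 := hz1
  have hz2 : z.1 = 0 := hz2
  have hz3 : t ≤ pay uS z.2.1 z.2.2.2.1 := hz3
  rw [hz2] at hz1
  refine ⟨_, _, _, _, hz1, ?_⟩
  by_contra hcon
  have hlt : t < pay uS z.2.1 z.2.2.2.1 := lt_of_le_of_ne hz3 (Ne.symm hcon)
  have hpy := hz1.pay_le hμ0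
  obtain ⟨b', c', α', h1, h2⟩ := slide hχ0 hχ1 hμ0 hz1
    (z.2.2.2.2 - (pay uS z.2.1 z.2.2.2.1 - t)) (by linarith) (by linarith)
  have h3 := hmin (a := (0, b', c', α', z.2.2.2.2 - (pay uS z.2.1 z.2.2.2.1 - t)))
    ⟨⟨h1, rfl⟩, by show t ≤ pay uS b' α'; linarith⟩
  have h4 : z.2.2.2.2 ≤ z.2.2.2.2 - (pay uS z.2.1 z.2.2.2.1 - t) := h3
  linarith


/-- A discrete potential argument. -/
lemma grid (f : M → ℕ → ℝ) [Nonempty M] (N : ℕ) :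
    ∃ n : M → ℕ, ∑ m, n m = N ∧
      ∀ m m', m ≠ m' → 1 ≤ n m → f m' (n m') ≤ f m (n m - 1) := by
  classical
  let Φ : (M → ℕ) → ℝ := fun n => ∑ m, ∑ j ∈ Finset.range (n m), f m j
  have hΦ : ∀ (p : M → ℕ) (m : M), Φ (fun k => p k + if k = m then 1 else 0) = Φ p + f m (p m) := by
    intro p m
    have : ∀ k, ∑ j ∈ Finset.range (p k + if k = m then 1 else 0), f k j =
        ∑ j ∈ Finset.range (p k), f k j + if k = m then f k (p k) else 0 := by
      intro k
      split_ifs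
      · rw [Finset.sum_range_succ]
      · simp
    simp only [Φ, this, Finset.sum_add_distrib]
    simp
  have hne : (Finset.piAntidiag (Finset.univ : Finset M) N).Nonempty := by
    obtain ⟨m⟩ := ‹Nonempty M›
    refine ⟨fun k => if k = m then N else 0, ?_⟩
    rw [Finset.mem_piAntidiag]
    simp
  obtain ⟨n, hn, hmax⟩ := Finset.exists_max_image _ Φ hne
  rw [Finset.mem_piAntidiag] at hn
  refine ⟨n, hn.1, fun m m' hmm hm => ?_⟩
  let p : M → ℕ := fun k => n k - if k = m then 1 else 0
  have hnp : n = fun k => p k + if k = m then 1 else 0 := by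
    funext k
    simp only [p]
    split_ifs with h
    · subst h; omega
    · omega
  have hsum : ∀ m, ∑ k, (p k + if k = m then 1 else 0) = ∑ k, p k + 1 := by
    intro m
    rw [Finset.sum_add_distrib]; simp
  have h1 := hmax (fun k => p k + if k = m' then 1 else 0) (by
    rw [Finset.mem_piAntidiag]
    refine ⟨?_, fun _ _ => Finset.mem_univ _⟩
    show ∑ k, (p k + if k = m' then 1 else 0) = N
    rw [hsum m', ← hsum m, ← hn.1]
    conv_rhs => rw [hnp])
  rw [hΦ, hnp, hΦ] at h1
  have e1 : p m' = n m' := by simp [p, hmm.symm]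
  have e2 : p m = n m - 1 := by simp [p]
  rw [e1, e2] at h1
  linarith

lemma exists_approx [Nonempty A] [Nonempty M] (uS : A → ℝ) (uR : A → Θ → ℝ) (μ0 : Θ → ℝ) (χ : ℝ)
    (hχ0 : 0 ≤ χ) (hχ1 : χ ≤ 1)
    (hμ0 : μ0 ∈ stdSimplex ℝ Θ) (ψ : Θ → M → ℝ) (hψ : IsExperiment ψ) (η : ℝ) (hη : 0 < η) :
    ∃ b c α y, Out uS uR μ0 χ η b c α y ∧
      (∀ m θ, b m θ - c m θ = χ * μ0 θ * ψ θ m) := by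
  classical
  let D : ℝ := ∑ a, ∑ a', |(1 - χ) * (∑ θ, uR a θ * μ0 θ - ∑ θ, uR a' θ * μ0 θ)|
  have hD : ∀ a a', |(1 - χ) * (∑ θ, uR a θ * μ0 θ - ∑ θ, uR a' θ * μ0 θ)| ≤ D := by
    intro a a'
    refine le_trans ?_ (Finset.single_le_sum
      (f := fun a => ∑ a', |(1 - χ) * (∑ θ, uR a θ * μ0 θ - ∑ θ, uR a' θ * μ0 θ)|)
      (fun i _ => Finset.sum_nonneg fun _ _ => abs_nonneg _) (Finset.mem_univ a))
    exact Finset.single_le_sum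
      (f := fun a' => |(1 - χ) * (∑ θ, uR a θ * μ0 θ - ∑ θ, uR a' θ * μ0 θ)|)
      (fun i _ => abs_nonneg _) (Finset.mem_univ a')
  obtain ⟨N, hN⟩ := exists_nat_gt (max (D / η) 1)
  have hN1 : (1:ℝ) < N := (le_max_right _ _).trans_lt hN
  have hN0 : (0:ℝ) < N := by linarith
  have hN2 : D / N ≤ η := by
    have := (le_max_left (D / η) 1).trans_lt hN
    rw [div_lt_iff₀ hη] at this
    rw [div_le_iff₀ hN0]; linarith
  let B : M → ℝ → Θ → ℝ := fun m q θ => χ * μ0 θ * ψ θ m + q * ((1 - χ) * μ0 θ)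
  choose act hact using fun (m : M) (j : ℕ) => BRf_nonempty uR (B m ((j:ℝ) / N))
  obtain ⟨n, hnN, hn⟩ := grid (fun m j => uS (act m j)) N
  have hS : (Finset.univ.filter fun m => 1 ≤ n m).Nonempty := by
    by_contra hcon
    rw [Finset.not_nonempty_iff_eq_empty, Finset.filter_eq_empty_iff] at hcon
    have : ∑ m, n m = 0 := Finset.sum_eq_zero fun m hm => by
      have := hcon hm; omega
    rw [this] at hnN
    rw [← hnN] at hN0
    simp at hN0
  obtain ⟨m0, hm0, hmin⟩ := Finset.exists_min_image _ (fun m => uS (act m (n m - 1))) hS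
  simp only [Finset.mem_filter, Finset.mem_univ, true_and] at hm0 hmin
  let y := uS (act m0 (n m0 - 1))
  have key : ∀ m, ∃ α : A → ℝ, (∀ a, 0 ≤ α a) ∧ ∑ a, α a = 1 ∧
      (∀ a, α a ≠ 0 → a = act m (n m) ∨ (1 ≤ n m ∧ a = act m (n m - 1))) ∧
      ∑ a, uS a * α a ≤ y ∧ (n m ≠ 0 → ∑ a, uS a * α a = y) := by
    intro m
    by_cases hm : n m = 0
    · have hne : m0 ≠ m := by rintro rfl; omega
      obtain ⟨α, h1, h2, h3, h4⟩ := mix uS (act m (n m)) (act m (n m)) _ le_rfl le_rfl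
      refine ⟨α, h1, h2, fun a ha => Or.inl (by simpa using h3 a ha), ?_, fun h => absurd hm h⟩
      rw [h4]
      exact hn m0 m hne hm0
    · by_cases hmm : m0 = m
      · subst hmm
        obtain ⟨α, h1, h2, h3, h4⟩ := mix uS (act m0 (n m0 - 1)) (act m0 (n m0 - 1)) _ le_rfl le_rfl
        exact ⟨α, h1, h2, fun a ha => Or.inr ⟨hm0, by simpa using h3 a ha⟩, h4.le, fun _ => h4⟩
      · obtain ⟨α, h1, h2, h3, h4⟩ := mix uS (act m (n m)) (act m (n m - 1)) y
          (hn m0 m hmm hm0) (hmin m (by omega))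
        refine ⟨α, h1, h2, fun a ha => ?_, h4.le, fun _ => h4⟩
        rcases h3 a ha with h | h
        · exact Or.inl h
        · exact Or.inr ⟨by omega, h⟩
  choose α h0 h1 hsupp hle heq using key
  have hq0 : ∀ m, (0:ℝ) ≤ (n m : ℝ) / N := fun m => by positivity
  have hq1 : ∑ m, (n m : ℝ) / N = 1 := by
    rw [← Finset.sum_div, ← Nat.cast_sum, hnN, div_self hN0.ne']
  have hc0 : ∀ θ, 0 ≤ (1 - χ) * μ0 θ := fun θ => mul_nonneg (by linarith) (hμ0.1 θ)
  have hb1 : ∀ θ m, 0 ≤ χ * μ0 θ * ψ θ m := fun θ m =>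
    mul_nonneg (mul_nonneg hχ0 (hμ0.1 θ)) ((hψ θ).1 m)
  have hα1 : ∀ m a, α m a ≤ 1 := fun m a => by
    rw [← h1 m]
    exact Finset.single_le_sum (f := fun a => α m a) (fun i _ => h0 m i) (Finset.mem_univ a)
  refine ⟨fun m => B m ((n m : ℝ) / N), fun m θ => (n m : ℝ) / N * ((1 - χ) * μ0 θ), α, y,
    ⟨?_, ?_, ?_, ?_, h0, h1, ?_, ?_, ?_, (abs_le.1 (uS_abs uS _)).1, (abs_le.1 (uS_abs uS _)).2⟩, ?_⟩
  · exact fun m θ => mul_nonneg (hq0 m) (hc0 θ)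
  · exact fun m θ => by simp only [B]; linarith [hb1 θ m]
  · intro θ
    simp only [B]
    rw [Finset.sum_add_distrib, ← Finset.mul_sum, ← Finset.sum_mul, hq1, (hψ θ).2]
    ring
  · intro θ
    rw [← Finset.sum_mul, hq1, one_mul]
  · intro m a a'
    by_cases ha : α m a = 0
    · simp [ha, hη.le]
    rcases hsupp m a ha with h | ⟨hpos, h⟩
    · have := hact m (n m) a'
      rw [← h] at this
      have := mul_nonneg (h0 m a) (sub_nonneg.2 this)
      linarith
    · have h2 := hact m (n m - 1) a'
      rw [← h] at h2
      have hB : ∀ a, ∑ θ, uR a θ * B m ((n m : ℝ) / N) θ =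
          ∑ θ, uR a θ * B m (((n m - 1 : ℕ) : ℝ) / N) θ +
            (1 / N) * ((1 - χ) * ∑ θ, uR a θ * μ0 θ) := by
        intro a
        rw [Finset.mul_sum, Finset.mul_sum, ← Finset.sum_add_distrib]
        refine Finset.sum_congr rfl fun θ _ => ?_
        simp only [B]
        rw [Nat.cast_sub hpos]
        push_cast
        field_simp
        ring
      rw [hB a, hB a']
      have h3 := (abs_le.1 (hD a a')).1
      have h4 : -(D / N) ≤ (1 / N) * ((1 - χ) * ∑ θ, uR a θ * μ0 θ) -
          (1 / N) * ((1 - χ) * ∑ θ, uR a' θ * μ0 θ) := by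
        rw [← mul_sub, ← mul_sub, div_eq_mul_one_div, ← neg_mul, mul_comm]
        exact mul_le_mul_of_nonneg_left h3 (by positivity)
      have hD0 : 0 ≤ D := (abs_nonneg _).trans (hD a a')
      have h5 : 0 ≤ D / N := by positivity
      have h6 := h0 m a
      have h7 := hα1 m a
      have h8 : -(D / N) ≤ (∑ θ, uR a θ * B m (((n m - 1 : ℕ) : ℝ) / N) θ +
            (1 / N) * ((1 - χ) * ∑ θ, uR a θ * μ0 θ)) -
            (∑ θ, uR a' θ * B m (((n m - 1 : ℕ) : ℝ) / N) θ +
            (1 / N) * ((1 - χ) * ∑ θ, uR a' θ * μ0 θ)) := by linarith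
      have h9 := mul_le_mul_of_nonneg_left h8 h6
      nlinarith
  · intro m θ
    refine mul_nonneg ?_ (by linarith [hle m])
    exact add_nonneg (hb1 θ m) (mul_nonneg (hq0 m) (hc0 θ))
  · intro m θ
    by_cases hm : n m = 0
    · simp [hm]
    · rw [heq m hm]; simp
  · intro m θ
    simp only [B]; ring

lemma Out.pay_le_C {uS : A → ℝ} {uR : A → Θ → ℝ} {μ0 : Θ → ℝ} {χ η : ℝ}
    (hμ0 : μ0 ∈ stdSimplex ℝ Θ)
    {b c : M → Θ → ℝ} {α : M → A → ℝ} {y : ℝ} (h : Out uS uR μ0 χ η b c α y) :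
    pay uS b α ≤ ∑ a, |uS a| := (h.pay_le hμ0).trans h.yu

/-- L2 -/
lemma exists_out [Nonempty A] [Nonempty M] (uS : A → ℝ) (uR : A → Θ → ℝ) (μ0 : Θ → ℝ) (χ : ℝ)
    (hχ0 : 0 ≤ χ) (hχ1 : χ ≤ 1)
    (hμ0 : μ0 ∈ stdSimplex ℝ Θ) (ψ : Θ → M → ℝ) (hψ : IsExperiment ψ) :
    ∃ b c α y, Out uS uR μ0 χ 0 b c α y ∧
      (∀ m θ, b m θ - c m θ = χ * μ0 θ * ψ θ m) := by
  obtain ⟨b, c, α, y, h1, h2, -⟩ := out_limit uS uR μ0 χ hμ0 ψ (∑ a, |uS a|) (by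
    intro η hη
    obtain ⟨b, c, α, y, h1, h2⟩ := exists_approx uS uR μ0 χ hχ0 hχ1 hμ0 ψ hψ η hη
    exact ⟨b, c, α, y, h1, h2, h1.pay_le_C hμ0⟩)
  exact ⟨b, c, α, y, h1, h2⟩

/-- L3 -/
lemma exists_low [Nonempty A] [Nonempty M] (uS : A → ℝ) (uR : A → Θ → ℝ) (μ0 : Θ → ℝ) (χ : ℝ)
    (hχ0 : 0 ≤ χ) (hχ1 : χ ≤ 1)
    (hμ0 : μ0 ∈ stdSimplex ℝ Θ) (ψ : Θ → M → ℝ) (hψ : IsExperiment ψ) :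
    ∃ b c α y, Out uS uR μ0 χ 0 b c α y ∧
      (∀ m θ, b m θ - c m θ = χ * μ0 θ * ψ θ m) ∧ pay uS b α ≤ wHatG uS uR μ0 := by
  refine out_limit uS uR μ0 χ hμ0 ψ _ ?_
  intro η hη
  let C := ∑ a, |uS a|
  have hC : 0 ≤ C := Finset.sum_nonneg fun _ _ => abs_nonneg _
  let ε := η / (2 * C + 1)
  have hε : 0 < ε := by positivity
  have hεC : ε * (2 * C) ≤ η := by
    have : ε * (2 * C + 1) = η := by simp only [ε]; field_simp
    linarith
  obtain ⟨b, c, α, y, h1, h2⟩ := exists_out uS (fun a θ => uR a θ - ε * uS a) μ0 χ hχ0 hχ1 hμ0 ψ hψ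
  refine ⟨b, c, α, y, ⟨h1.c0, h1.cb, h1.bs, h1.cs, h1.α0, h1.α1, ?_, h1.yb, h1.yc, h1.yl, h1.yu⟩,
    h2, pay_le_wHat hε hμ0 h1⟩
  intro m a a'
  have h3 := h1.br m a a'
  have hx : ∀ a, ∑ θ, (uR a θ - ε * uS a) * b m θ =
      ∑ θ, uR a θ * b m θ - ε * uS a * ∑ θ, b m θ := by
    intro a
    simp only [sub_mul, Finset.sum_sub_distrib]
    rw [← Finset.mul_sum]
  simp only [hx] at h3
  have hb0 : 0 ≤ ∑ θ, b m θ := Finset.sum_nonneg fun θ _ => h1.b0 m θ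
  have hb1 : ∑ θ, b m θ ≤ 1 := by
    rw [← hμ0.2]
    refine Finset.sum_le_sum fun θ _ => ?_
    rw [← h1.bs θ]
    exact Finset.single_le_sum (f := fun m => b m θ) (fun i _ => h1.b0 i θ) (Finset.mem_univ m)
  have hα0 := h1.α0 m a
  have hα1 : α m a ≤ 1 := by
    rw [← h1.α1 m]
    exact Finset.single_le_sum (f := fun a => α m a) (fun i _ => h1.α0 m i) (Finset.mem_univ a)
  have hd : uS a' - uS a ≤ 2 * C := by
    have e1 := (abs_le.1 (uS_abs uS a)).1
    have e2 := (abs_le.1 (uS_abs uS a')).2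
    simp only [C]
    linarith
  have hp0 : 0 ≤ α m a * ∑ θ, b m θ := mul_nonneg hα0 hb0
  have hp1 : α m a * ∑ θ, b m θ ≤ 1 := mul_le_one₀ hα1 hb0 hb1
  have e3 : (α m a * ∑ θ, b m θ) * (ε * (uS a' - uS a)) ≤ η := by
    calc (α m a * ∑ θ, b m θ) * (ε * (uS a' - uS a))
        ≤ (α m a * ∑ θ, b m θ) * (ε * (2 * C)) :=
          mul_le_mul_of_nonneg_left (mul_le_mul_of_nonneg_left hd hε.le) hp0
      _ ≤ 1 * (ε * (2 * C)) := mul_le_mul_of_nonneg_right hp1 (by positivity)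
      _ ≤ η := by linarith
  nlinarith


lemma conv [Nonempty A] {uS : A → ℝ} {uR : A → Θ → ℝ} {μ0 : Θ → ℝ} {χ : ℝ}
    (hχ1 : χ ≤ 1)
    (hμ0 : μ0 ∈ stdSimplex ℝ Θ) {ψ : Θ → M → ℝ}
    {b c : M → Θ → ℝ} {α : M → A → ℝ} {y : ℝ} (h : Out uS uR μ0 χ 0 b c α y)
    (hbc : ∀ m θ, b m θ - c m θ = χ * μ0 θ * ψ θ m) :
    ∃ (σ : Θ → M → ℝ) (α' : M → A → ℝ) (β : M → Θ → ℝ),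
      (∀ θ, IsDist (σ θ)) ∧ (∀ m, IsDist (α' m)) ∧ (∀ m, IsDist (β m)) ∧
      (∀ m a, α' m a ≠ 0 → a ∈ BRf uR (β m)) ∧
      (∀ m θ, β m θ * (∑ θ', μ0 θ' * (χ * ψ θ' m + (1 - χ) * σ θ' m)) =
        μ0 θ * (χ * ψ θ m + (1 - χ) * σ θ m)) ∧
      (∀ θ m, σ θ m ≠ 0 → ∀ m' : M, ∑ a, uS a * α' m' a ≤ ∑ a, uS a * α' m a) ∧
      ∑ θ, μ0 θ * ∑ m, (χ * ψ θ m + (1 - χ) * σ θ m) * ∑ a, uS a * α' m a = pay uS b α := by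
  classical
  have hs1 : ∑ m, ∑ θ, b m θ = 1 := by
    rw [Finset.sum_comm]; simp only [h.bs]; exact hμ0.2
  have hS : (Finset.univ.filter fun m => ∑ θ, b m θ ≠ 0).Nonempty := by
    by_contra hcon
    rw [Finset.not_nonempty_iff_eq_empty, Finset.filter_eq_empty_iff] at hcon
    have : ∑ m, ∑ θ, b m θ = 0 := Finset.sum_eq_zero fun m hm => by
      have := hcon hm; simpa using this
    linarith
  obtain ⟨m0, hm0, hmax⟩ := Finset.exists_max_image _ (fun m => ∑ a, uS a * α m a) hS
  simp only [Finset.mem_filter, Finset.mem_univ, true_and] at hm0 hmax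
  let r : M → M := fun m => if ∑ θ, b m θ = 0 then m0 else m
  have hr : ∀ m, ∑ θ, b (r m) θ ≠ 0 := by
    intro m
    simp only [r]
    split_ifs with hh
    · exact hm0
    · exact hh
  have hnn : ∀ m, 0 ≤ ∑ θ, b m θ := fun m => Finset.sum_nonneg fun θ _ => h.b0 m θ
  have hpos : ∀ m, 0 < ∑ θ, b (r m) θ := fun m => lt_of_le_of_ne (hnn _) (hr m).symm
  have hzero : ∀ m, ∑ θ, b m θ = 0 → ∀ θ, b m θ = 0 := fun m hm θ =>
    (Finset.sum_eq_zero_iff_of_nonneg (fun i _ => h.b0 m i)).1 hm θ (Finset.mem_univ _)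
  let σ : Θ → M → ℝ := fun θ m =>
    if (1 - χ) * μ0 θ = 0 then (if m = m0 then 1 else 0) else c m θ / ((1 - χ) * μ0 θ)
  have hcσ : ∀ m θ, (1 - χ) * μ0 θ * σ θ m = c m θ := by
    intro m θ
    simp only [σ]
    split_ifs with h1 h2
    · rw [h1, zero_mul]
      have := h.cs θ
      rw [h1] at this
      exact ((Finset.sum_eq_zero_iff_of_nonneg (fun i _ => h.c0 i θ)).1 this m
        (Finset.mem_univ _)).symm
    · rw [h1, zero_mul]
      have := h.cs θ
      rw [h1] at this
      exact ((Finset.sum_eq_zero_iff_of_nonneg (fun i _ => h.c0 i θ)).1 this m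
        (Finset.mem_univ _)).symm
    · rw [mul_div_assoc']; exact mul_div_cancel_left₀ _ h1
  have hb : ∀ m θ, μ0 θ * (χ * ψ θ m + (1 - χ) * σ θ m) = b m θ := by
    intro m θ
    have e1 := hcσ m θ
    have e2 := hbc m θ
    linarith
  refine ⟨σ, fun m => α (r m), fun m θ => b (r m) θ / ∑ θ, b (r m) θ, ?_, ?_, ?_, ?_, ?_, ?_, ?_⟩
  · intro θ
    by_cases h1 : (1 - χ) * μ0 θ = 0
    · simp only [σ, h1, if_true]
      refine ⟨fun m => ?_, by simp⟩
      dsimp only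
      split_ifs <;> norm_num
    · simp only [σ, h1, if_false]
      refine ⟨fun m => div_nonneg (h.c0 m θ) (mul_nonneg (by linarith) (hμ0.1 θ)), ?_⟩
      rw [← Finset.sum_div, h.cs, div_self h1]
  · exact fun m => ⟨h.α0 _, h.α1 _⟩
  · intro m
    refine ⟨fun θ => div_nonneg (h.b0 _ θ) (hnn _), ?_⟩
    rw [← Finset.sum_div, div_self (hr m)]
  · intro m a ha
    refine (BR_scale (hpos m) (fun θ => ?_)).1 (h.mem_BR ha)
    have := hr m
    field_simp
  · intro m θ
    simp only [hb]
    by_cases hm : ∑ θ, b m θ = 0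
    · rw [hm, hzero m hm]; simp
    · have : r m = m := by simp [r, hm]
      simp only [this]
      field_simp
  · have hall : ∀ m', ∑ a, uS a * α (r m') a ≤ ∑ a, uS a * α m0 a := fun m' => hmax _ (hr m')
    have hr0 : r m0 = m0 := by simp [r, hm0]
    intro θ m hm m'
    refine (hall m').trans ?_
    simp only [σ] at hm
    split_ifs at hm with h1 h2
    · subst h2
      show _ ≤ ∑ a, uS a * α (r m) a
      rw [hr0]
    · exact absurd rfl hm
    · have hc : c m θ ≠ 0 := fun hc => hm (by simp [hc])
      have hcb := h.cb m θ
      have hc0 : 0 < c m θ := lt_of_le_of_ne (h.c0 m θ) hc.symm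
      have hbm : ∑ θ, b m θ ≠ 0 := fun hh => by
        have := hzero m hh θ; linarith
      have hrm : r m = m := by simp [r, hbm]
      simp only [hrm]
      have e1 : y - ∑ a, uS a * α m a = 0 := (mul_eq_zero.1 (h.yc m θ)).resolve_left hc
      have e2 : ∑ a, uS a * α m0 a ≤ y := by
        have : 0 ≤ (∑ θ, b m0 θ) * (y - ∑ a, uS a * α m0 a) := by
          rw [Finset.sum_mul]; exact Finset.sum_nonneg fun θ _ => h.yb m0 θ
        have := nonneg_of_mul_nonneg_right this (lt_of_le_of_ne (hnn m0) hm0.symm)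
        linarith
      linarith
  · simp only [Finset.mul_sum, ← mul_assoc]
    unfold pay
    have : ∀ θ m, μ0 θ * (χ * ψ θ m + (1 - χ) * σ θ m) = b m θ := fun θ m => hb m θ
    simp only [this]
    rw [Finset.sum_comm]
    refine Finset.sum_congr rfl fun m _ => ?_
    by_cases hm : ∑ θ, b m θ = 0
    · rw [hm, zero_mul]
      refine Finset.sum_eq_zero fun θ _ => ?_
      simp [hzero m hm]
    · have : r m = m := by simp [r, hm]
      simp only [this, Finset.sum_mul, Finset.mul_sum, mul_assoc]
      rw [Finset.sum_comm]

lemma pbe_of_out [Nonempty A] {uS : A → ℝ} {uR : A → Θ → ℝ} {μ0 : Θ → ℝ} {χ : ℝ}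
    (hχ1 : χ ≤ 1) (hμ0 : μ0 ∈ stdSimplex ℝ Θ) {ψ : Θ → M → ℝ} (hψ : IsExperiment ψ)
    {b c : M → Θ → ℝ} {α : M → A → ℝ} {y : ℝ} (h : Out uS uR μ0 χ 0 b c α y)
    (hbc : ∀ m θ, b m θ - c m θ = χ * μ0 θ * ψ θ m)
    (s : ℝ) (hs : pay uS b α = s)
    (H : ∀ ψ' : Θ → M → ℝ, IsExperiment ψ' → ∃ b c α y, Out (M := M) uS uR μ0 χ 0 b c α y ∧
      (∀ m θ, b m θ - c m θ = χ * μ0 θ * ψ' θ m) ∧ pay uS b α ≤ s) :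
    s ∈ chiPBEPayoffs A M uS uR μ0 χ := by
  classical
  have key : ∀ ψ' : Θ → M → ℝ, ∃ (σ : Θ → M → ℝ) (α' : M → A → ℝ) (β : M → Θ → ℝ),
      IsExperiment ψ' → (∀ θ, IsDist (σ θ)) ∧ (∀ m, IsDist (α' m)) ∧ (∀ m, IsDist (β m)) ∧
      (∀ m a, α' m a ≠ 0 → a ∈ BRf uR (β m)) ∧
      (∀ m θ, β m θ * (∑ θ', μ0 θ' * (χ * ψ' θ' m + (1 - χ) * σ θ' m)) =
        μ0 θ * (χ * ψ' θ m + (1 - χ) * σ θ m)) ∧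
      (∀ θ m, σ θ m ≠ 0 → ∀ m' : M, ∑ a, uS a * α' m' a ≤ ∑ a, uS a * α' m a) ∧
      ∑ θ, μ0 θ * ∑ m, (χ * ψ' θ m + (1 - χ) * σ θ m) * ∑ a, uS a * α' m a ≤ s ∧
      (ψ' = ψ →
        ∑ θ, μ0 θ * ∑ m, (χ * ψ' θ m + (1 - χ) * σ θ m) * ∑ a, uS a * α' m a = s) := by
    intro ψ'
    by_cases he : ψ' = ψ
    · subst he
      obtain ⟨σ, α', β, h1, h2, h3, h4, h5, h6, h7⟩ := conv hχ1 hμ0 h hbc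
      exact ⟨σ, α', β, fun _ => ⟨h1, h2, h3, h4, h5, h6, (h7.trans hs).le, fun _ => h7.trans hs⟩⟩
    · by_cases hx : IsExperiment ψ'
      · obtain ⟨b', c', α1, y', g1, g2, g3⟩ := H ψ' hx
        obtain ⟨σ, α', β, h1, h2, h3, h4, h5, h6, h7⟩ := conv hχ1 hμ0 g1 g2
        exact ⟨σ, α', β, fun _ => ⟨h1, h2, h3, h4, h5, h6, h7.le.trans g3, fun h => absurd h he⟩⟩
      · exact ⟨fun _ _ => 0, fun _ _ => 0, fun _ _ => 0, fun h => absurd h hx⟩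
  choose σ α' β hk using key
  refine ⟨ψ, fun θ ψ' => σ ψ' θ, fun m ψ' => α' ψ' m, fun m ψ' => β ψ' m,
    ⟨hψ, fun ψ' hx => (hk ψ' hx).1, fun ψ' hx => (hk ψ' hx).2.1, fun ψ' hx => (hk ψ' hx).2.2.1,
      fun ψ' hx => ?_, fun ψ' hx => (hk ψ' hx).2.2.2.1, fun ψ' hx => (hk ψ' hx).2.2.2.2.1,
      fun ψ' hx => (hk ψ' hx).2.2.2.2.2.1⟩, ?_⟩
  · have e1 := (hk ψ hψ).2.2.2.2.2.2.2 rfl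
    have e2 := (hk ψ' hx).2.2.2.2.2.2.1
    unfold chiValue
    rw [e1]; exact e2
  · exact ((hk ψ hψ).2.2.2.2.2.2.2 rfl).symm

lemma out_of_pbe [Nonempty A] [Nonempty M] {uS : A → ℝ} {uR : A → Θ → ℝ} {μ0 : Θ → ℝ} {χ : ℝ}
    (hχ0 : 0 ≤ χ) (hχ1 : χ ≤ 1) (hμ0 : μ0 ∈ stdSimplex ℝ Θ) {ψ : Θ → M → ℝ}
    {σ : Θ → (Θ → M → ℝ) → M → ℝ}
    {α : M → (Θ → M → ℝ) → A → ℝ} {β : M → (Θ → M → ℝ) → Θ → ℝ}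
    (h : IsChiPBE uS uR μ0 χ ψ σ α β) (ψ' : Θ → M → ℝ) (hx : IsExperiment ψ') :
    ∃ b c α' y, Out (M := M) uS uR μ0 χ 0 b c α' y ∧
      (∀ m θ, b m θ - c m θ = χ * μ0 θ * ψ' θ m) ∧ pay uS b α' = chiValue uS μ0 χ σ α ψ' := by
  obtain ⟨-, hσ, hα, hβ, -, hbr, hbay, hopt⟩ := h
  replace hσ := hσ ψ' hx
  replace hα := hα ψ' hx
  replace hβ := hβ ψ' hx
  replace hbr := hbr ψ' hx
  replace hbay := hbay ψ' hx
  replace hopt := hopt ψ' hx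
  obtain ⟨m0, -, hm0⟩ := Finset.exists_max_image Finset.univ (fun m => ∑ a, uS a * α m ψ' a)
    Finset.univ_nonempty
  have hc0 : ∀ m θ, 0 ≤ μ0 θ * ((1 - χ) * σ θ ψ' m) := fun m θ =>
    mul_nonneg (hμ0.1 θ) (mul_nonneg (by linarith) ((hσ θ).1 m))
  have hd0 : ∀ m θ, 0 ≤ μ0 θ * (χ * ψ' θ m) := fun m θ =>
    mul_nonneg (hμ0.1 θ) (mul_nonneg hχ0 ((hx θ).1 m))
  have hb0 : ∀ m θ, 0 ≤ μ0 θ * (χ * ψ' θ m + (1 - χ) * σ θ ψ' m) := fun m θ => by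
    have := hc0 m θ
    have := hd0 m θ
    rw [mul_add]; linarith
  refine ⟨fun m θ => μ0 θ * (χ * ψ' θ m + (1 - χ) * σ θ ψ' m),
    fun m θ => μ0 θ * ((1 - χ) * σ θ ψ' m), fun m => α m ψ', ∑ a, uS a * α m0 ψ' a,
    ⟨hc0, ?_, ?_, ?_, fun m => (hα m).1, fun m => (hα m).2, ?_, ?_, ?_, ?_, ?_⟩, ?_, ?_⟩
  · intro m θ
    have := hd0 m θ
    rw [mul_add]; linarith
  · intro θ
    rw [← Finset.mul_sum, Finset.sum_add_distrib, ← Finset.mul_sum, ← Finset.mul_sum, (hx θ).2,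
      (hσ θ).2]
    ring
  · intro θ
    rw [← Finset.mul_sum, ← Finset.mul_sum, (hσ θ).2]
    ring
  · intro m a a'
    refine br_of_mem (hα m).1 (fun a ha => ?_) a a'
    intro a'
    have h1 := hbr m a ha a'
    have hP : 0 ≤ ∑ θ', μ0 θ' * (χ * ψ' θ' m + (1 - χ) * σ θ' ψ' m) :=
      Finset.sum_nonneg fun θ _ => hb0 m θ
    have hsc : ∀ θ, μ0 θ * (χ * ψ' θ m + (1 - χ) * σ θ ψ' m) =
        (∑ θ', μ0 θ' * (χ * ψ' θ' m + (1 - χ) * σ θ' ψ' m)) * β m ψ' θ := fun θ => by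
      rw [← hbay m θ, mul_comm]
    rw [sum_scale (uR a') _ _ _ hsc, sum_scale (uR a) _ _ _ hsc]
    exact mul_le_mul_of_nonneg_left h1 hP
  · intro m θ
    exact mul_nonneg (hb0 m θ) (sub_nonneg.2 (hm0 m (Finset.mem_univ _)))
  · intro m θ
    by_cases hs : σ θ ψ' m = 0
    · simp [hs]
    · have := hopt θ m hs m0
      have h2 := hm0 m (Finset.mem_univ _)
      have : ∑ a, uS a * α m0 ψ' a - ∑ a, uS a * α m ψ' a = 0 := by linarith
      rw [this, mul_zero]
  · exact le_avg _ _ (hα m0).1 (hα m0).2 _ fun a _ => (abs_le.1 (uS_abs uS a)).1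
  · exact avg_le _ _ (hα m0).1 (hα m0).2 _ fun a _ => (abs_le.1 (uS_abs uS a)).2
  · intro m θ; ring
  · unfold pay chiValue
    have e : ∀ θ, μ0 θ * ∑ m, (χ * ψ' θ m + (1 - χ) * σ θ ψ' m) * ∑ a, uS a * α m ψ' a =
        ∑ m, (μ0 θ * (χ * ψ' θ m + (1 - χ) * σ θ ψ' m)) * ∑ a, uS a * α m ψ' a := fun θ => by
      rw [Finset.mul_sum]
      exact Finset.sum_congr rfl fun m _ => by rw [mul_assoc]
    rw [Finset.sum_congr rfl fun θ _ => e θ, Finset.sum_comm]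
    exact Finset.sum_congr rfl fun m _ => by rw [Finset.sum_mul]


lemma disc [Nonempty A] (uR : A → Θ → ℝ) (μ0 : Θ → ℝ) (hμ0 : μ0 ∈ stdSimplex ℝ Θ)
    (g : Set A → ℝ) (q : Measure (Belief Θ)) [IsProbabilityMeasure q]
    (hq : ∀ θ, ∫ μ, (μ : Belief Θ).1 θ ∂q = μ0 θ) :
    (μ0, ∫ μ, g (BRf uR (μ : Belief Θ).1) ∂q) ∈
      convexHull ℝ {x : (Θ → ℝ) × ℝ | x.1 ∈ stdSimplex ℝ Θ ∧ x.2 = g (BRf uR x.1)} := by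
  classical
  let E : Set A → Set (Belief Θ) := fun S => {μ | BRf uR μ.1 = S}
  have hcc : ∀ θ, Continuous fun μ : Belief Θ => μ.1 θ := fun θ =>
    (continuous_apply θ).comp continuous_subtype_val
  have hLc : ∀ a, Continuous fun μ : Belief Θ => ∑ θ, uR a θ * μ.1 θ := fun a =>
    continuous_finsetSum _ fun θ _ => continuous_const.mul (hcc θ)
  have hEm : ∀ S, MeasurableSet (E S) := by
    intro S
    have hcl : ∀ a, MeasurableSet {μ : Belief Θ | a ∈ BRf uR μ.1} := by
      intro a
      have : {μ : Belief Θ | a ∈ BRf uR μ.1} =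
          ⋂ a', {μ : Belief Θ | ∑ θ, uR a' θ * μ.1 θ ≤ ∑ θ, uR a θ * μ.1 θ} := by
        ext μ; simp [BRf]
      rw [this]
      exact (isClosed_iInter fun a' => isClosed_le (hLc a') (hLc a)).measurableSet
    have : E S = ⋂ a, {μ : Belief Θ | a ∈ BRf uR μ.1 ↔ a ∈ S} := by
      ext μ; simp [E, Set.ext_iff]
    rw [this]
    refine MeasurableSet.iInter fun a => ?_
    by_cases ha : a ∈ S
    · simpa [ha] using hcl a
    · have : {μ : Belief Θ | a ∈ BRf uR μ.1 ↔ a ∈ S} = {μ : Belief Θ | a ∈ BRf uR μ.1}ᶜ := by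
        ext μ; simp [ha]
      rw [this]
      exact (hcl a).compl
  have hdisj : Pairwise (Function.onFun Disjoint E) := by
    intro S T hST
    refine Set.disjoint_left.2 fun μ h1 h2 => hST ?_
    exact (show BRf uR μ.1 = S from h1).symm.trans h2
  have hU : ⋃ S, E S = Set.univ := by
    ext μ; simp [E]
  have hsplit : ∀ f : Belief Θ → ℝ, (∀ S, IntegrableOn f (E S) q) →
      ∫ μ, f μ ∂q = ∑ S, ∫ μ in E S, f μ ∂q := by
    intro f hf
    rw [← integral_iUnion_fintype hEm hdisj hf, hU, Measure.restrict_univ]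
  have hb : ∀ f : Belief Θ → ℝ, Continuous f → Integrable f q := by
    intro f hf
    have : CompactSpace (Belief Θ) := isCompact_iff_compactSpace.1 (isCompact_stdSimplex ℝ Θ)
    exact hf.integrable_of_hasCompactSupport (HasCompactSupport.of_compactSpace f)
  have hcoord : ∀ θ, Integrable (fun μ : Belief Θ => μ.1 θ) q := fun θ => hb _ (hcc θ)
  have hLi : ∀ a, Integrable (fun μ : Belief Θ => ∑ θ, uR a θ * μ.1 θ) q := fun a => hb _ (hLc a)
  let w : Set A → ℝ := fun S => q.real (E S)
  have hw0 : ∀ S, 0 ≤ w S := fun S => measureReal_nonneg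
  have hw1 : ∑ S, w S = 1 := by
    have := hsplit (fun _ => 1) (fun S => (integrable_const _).integrableOn)
    simp only [smul_eq_mul, mul_one, integral_const, probReal_univ,
      measureReal_restrict_apply_univ] at this
    exact this.symm
  have hzero : ∀ S, w S = 0 → ∀ f : Belief Θ → ℝ, ∫ μ in E S, f μ ∂q = 0 := by
    intro S hS f
    have : q (E S) = 0 := (measureReal_eq_zero_iff).1 hS
    rw [Measure.restrict_eq_zero.2 this, integral_zero_measure]
  have hgS : ∀ S, ∫ μ in E S, g (BRf uR (μ : Belief Θ).1) ∂q = w S * g S := by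
    intro S
    rw [setIntegral_congr_fun (hEm S) (g := fun _ => g S) (fun μ hμ => by
      show g _ = g S
      rw [show BRf uR μ.1 = S from hμ]), setIntegral_const, smul_eq_mul]
  have hgi : ∀ S, IntegrableOn (fun μ : Belief Θ => g (BRf uR μ.1)) (E S) q := by
    intro S
    refine ((integrable_const (g S)).integrableOn (s := E S)).congr_fun (fun μ hμ => ?_) (hEm S)
    show g S = g _
    rw [show BRf uR μ.1 = S from hμ]
  let z : Set A → (Θ → ℝ) × ℝ := fun S => if w S = 0 then (μ0, g (BRf uR μ0)) else
    (fun θ => (w S)⁻¹ * ∫ μ in E S, (μ : Belief Θ).1 θ ∂q, g S)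
  have hz : ∀ S, z S ∈ {x : (Θ → ℝ) × ℝ | x.1 ∈ stdSimplex ℝ Θ ∧ x.2 = g (BRf uR x.1)} := by
    intro S
    by_cases hS : w S = 0
    · simp only [z, hS, if_true]; exact ⟨hμ0, rfl⟩
    simp only [z, hS, if_false]
    have hwp : 0 < w S := lt_of_le_of_ne (hw0 S) (Ne.symm hS)
    refine ⟨⟨fun θ => ?_, ?_⟩, ?_⟩
    · exact mul_nonneg (inv_nonneg.2 (hw0 S)) (integral_nonneg fun μ => μ.2.1 θ)
    · show ∑ θ, (w S)⁻¹ * ∫ μ in E S, (μ : Belief Θ).1 θ ∂q = 1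
      rw [← Finset.mul_sum, ← integral_finsetSum _ (fun θ _ => (hcoord θ).integrableOn)]
      have : ∀ μ : Belief Θ, ∑ θ, μ.1 θ = 1 := fun μ => μ.2.2
      simp only [this, setIntegral_const, smul_eq_mul, mul_one]
      exact inv_mul_cancel₀ hS
    · show g S = g (BRf uR fun θ => (w S)⁻¹ * ∫ μ in E S, (μ : Belief Θ).1 θ ∂q)
      congr 1
      ext a
      rw [BR_scale (inv_pos.2 hwp) (fun θ => rfl)]
      have hJ : ∀ a, ∑ θ, uR a θ * ∫ μ in E S, (μ : Belief Θ).1 θ ∂q =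
          ∫ μ in E S, ∑ θ, uR a θ * (μ : Belief Θ).1 θ ∂q := by
        intro a
        rw [integral_finsetSum _ (fun θ _ => ((hcoord θ).const_mul _).integrableOn)]
        exact Finset.sum_congr rfl fun θ _ => (integral_const_mul _ _).symm
      simp only [BRf, Set.mem_ofPred_eq, hJ]
      constructor
      · intro ha a'
        refine setIntegral_mono_on (hLi a').integrableOn (hLi a).integrableOn (hEm S) ?_
        intro μ hμ
        have : a ∈ BRf uR μ.1 := by rw [show BRf uR μ.1 = S from hμ]; exact ha
        exact this a'
      · intro ha
        by_contra haS
        have hEne : q (E S) ≠ 0 := fun h0 => hS (by simp [w, measureReal_def, h0])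
        obtain ⟨μ1, hμ1⟩ := nonempty_of_measure_ne_zero hEne
        obtain ⟨a0, ha0⟩ := BRf_nonempty uR μ1.1
        rw [show BRf uR μ1.1 = S from hμ1] at ha0
        have hlt : ∀ μ ∈ E S, ∑ θ, uR a θ * μ.1 θ < ∑ θ, uR a0 θ * μ.1 θ := by
          intro μ hμ
          have h1 : a0 ∈ BRf uR μ.1 := by rw [show BRf uR μ.1 = S from hμ]; exact ha0
          have h2 : a ∉ BRf uR μ.1 := by rw [show BRf uR μ.1 = S from hμ]; exact haS
          simp only [BRf, Set.mem_ofPred_eq, not_forall, not_le] at h2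
          obtain ⟨a', ha'⟩ := h2
          exact ha'.trans_le (h1 a')
        have hpos : 0 < ∫ μ in E S, ((∑ θ, uR a0 θ * (μ : Belief Θ).1 θ) -
            ∑ θ, uR a θ * (μ : Belief Θ).1 θ) ∂q := by
          rw [setIntegral_pos_iff_support_of_nonneg_ae]
          · have : Function.support (fun μ : Belief Θ => (∑ θ, uR a0 θ * μ.1 θ) -
                ∑ θ, uR a θ * μ.1 θ) ∩ E S = E S := by
              refine Set.inter_eq_right.2 fun μ hμ => ?_
              have := hlt μ hμ
              simp only [Function.mem_support]
              linarith
            rw [this]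
            exact pos_iff_ne_zero.2 hEne
          · refine (ae_restrict_mem (hEm S)).mono fun μ hμ => ?_
            have := hlt μ hμ
            simp only [Pi.zero_apply]
            linarith
          · exact ((hLi a0).sub (hLi a)).integrableOn
        rw [integral_sub (hLi a0).integrableOn (hLi a).integrableOn] at hpos
        have := ha a0
        linarith
  have hfin : (μ0, ∫ μ, g (BRf uR (μ : Belief Θ).1) ∂q) = ∑ S, w S • z S := by
    refine Prod.ext ?_ ?_
    · rw [Prod.fst_sum]
      funext θ
      rw [Finset.sum_apply]
      show μ0 θ = _
      rw [← hq θ, hsplit _ (fun S => (hcoord θ).integrableOn)]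
      refine Finset.sum_congr rfl fun S _ => ?_
      by_cases hS : w S = 0
      · rw [hzero S hS, hS, zero_smul]; rfl
      · simp only [z, hS, if_false, Prod.smul_fst, Pi.smul_apply, smul_eq_mul]
        rw [mul_inv_cancel_left₀ hS]
    · rw [Prod.snd_sum]
      show ∫ μ, g (BRf uR (μ : Belief Θ).1) ∂q = _
      rw [hsplit _ hgi]
      refine Finset.sum_congr rfl fun S _ => ?_
      rw [hgS]
      by_cases hS : w S = 0
      · rw [hS]; simp
      · simp only [z, hS, if_false, Prod.smul_snd, smul_eq_mul]
  rw [hfin]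
  exact (convex_convexHull ℝ _).sum_mem (fun S _ => hw0 S) hw1
    (fun S _ => subset_convexHull ℝ _ (hz S))

lemma cara [Nonempty Θ] [Nonempty M] (hM : 2 * Fintype.card Θ ≤ Fintype.card M) (μ0 : Θ → ℝ)
    (f : (Θ → ℝ) → ℝ) (r : ℝ)
    (hx : (μ0, r) ∈ convexHull ℝ {x : (Θ → ℝ) × ℝ | x.1 ∈ stdSimplex ℝ Θ ∧ x.2 = f x.1}) :
    ∃ (l : M → ℝ) (ν : M → Θ → ℝ), (∀ m, 0 ≤ l m) ∧ ∑ m, l m = 1 ∧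
      (∀ m, ν m ∈ stdSimplex ℝ Θ) ∧ (∀ θ, ∑ m, l m * ν m θ = μ0 θ) ∧
      ∑ m, l m * f (ν m) = r := by
  classical
  obtain ⟨ι, hι, z, w, hz, hai, hw, hw1, hx⟩ := eq_pos_convex_span_of_mem_convexHull hx
  have hz' : ∀ i, (z i).1 ∈ stdSimplex ℝ Θ ∧ (z i).2 = f (z i).1 := fun i => hz ⟨i, rfl⟩
  have hli : LinearIndependent ℝ z := by
    rw [Fintype.linearIndependent_iff]
    intro g hg i
    refine (affineIndependent_iff.1 hai) Finset.univ g ?_ hg i (Finset.mem_univ _)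
    have h1 : ∀ θ, ∑ i, g i * (z i).1 θ = 0 := by
      intro θ
      have := congrArg (fun x : (Θ → ℝ) × ℝ => x.1 θ) hg
      simpa [Prod.fst_sum, Finset.sum_apply] using this
    have h2 : ∑ θ, ∑ i, g i * (z i).1 θ = 0 := Finset.sum_eq_zero fun θ _ => h1 θ
    rw [Finset.sum_comm] at h2
    rw [← h2]
    refine Finset.sum_congr rfl fun i _ => ?_
    rw [← Finset.mul_sum, (hz' i).1.2, mul_one]
  have hcard : Fintype.card ι ≤ Fintype.card M := by
    have h1 := hli.fintype_card_le_finrank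
    rw [Module.finrank_prod, Module.finrank_fintype_fun_eq_card, Module.finrank_self] at h1
    have h2 : 0 < Fintype.card Θ := Fintype.card_pos
    omega
  obtain ⟨e⟩ := Function.Embedding.nonempty_of_card_le hcard
  have hne : Nonempty ι := by
    by_contra hcon
    rw [not_nonempty_iff] at hcon
    simp at hw1
  obtain ⟨i0⟩ := hne
  let l : M → ℝ := Function.extend e w (fun _ => 0)
  let ν : M → Θ → ℝ := Function.extend e (fun i => (z i).1) (fun _ => (z i0).1)
  have hl : ∀ i, l (e i) = w i := fun i => e.injective.extend_apply _ _ _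
  have hν : ∀ i, ν (e i) = (z i).1 := fun i => e.injective.extend_apply _ _ _
  have hl0 : ∀ m, m ∉ Set.range e → l m = 0 := fun m hm =>
    Function.extend_apply' _ _ _ (by simpa using hm)
  have hν0 : ∀ m, m ∉ Set.range e → ν m = (z i0).1 := fun m hm =>
    Function.extend_apply' _ _ _ (by simpa using hm)
  have hsum : ∀ h : M → ℝ, ∑ m, l m * h m = ∑ i, w i * h (e i) := by
    intro h
    refine (Fintype.sum_of_injective e e.injective _ _ (fun m hm => ?_) (fun i => ?_)).symm
    · rw [hl0 m hm, zero_mul]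
    · rw [hl]
  refine ⟨l, ν, ?_, ?_, ?_, ?_, ?_⟩
  · intro m
    by_cases hm : m ∈ Set.range e
    · obtain ⟨i, rfl⟩ := hm
      rw [hl]; exact (hw i).le
    · rw [hl0 m hm]
  · have := hsum (fun _ => 1)
    simp only [mul_one] at this
    rw [this, hw1]
  · intro m
    by_cases hm : m ∈ Set.range e
    · obtain ⟨i, rfl⟩ := hm
      rw [hν]; exact (hz' i).1
    · rw [hν0 m hm]; exact (hz' i0).1
  · intro θ
    rw [hsum (fun m => ν m θ)]
    simp only [hν]
    have := congrArg (fun x : (Θ → ℝ) × ℝ => x.1 θ) hx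
    simpa [Prod.fst_sum, Finset.sum_apply] using this
  · rw [hsum (fun m => f (ν m))]
    simp only [hν, ← (hz' _).2]
    have := congrArg (fun x : (Θ → ℝ) × ℝ => x.2) hx
    simpa [Prod.snd_sum, Finset.sum_apply] using this

lemma recover [Nonempty M] {uS : A → ℝ} {uR : A → Θ → ℝ} {μ0 : Θ → ℝ} {χ : ℝ}
    (hχ0 : 0 ≤ χ) (hμ0 : μ0 ∈ stdSimplex ℝ Θ)
    {b c : M → Θ → ℝ} {α : M → A → ℝ} {y : ℝ} (h : Out uS uR μ0 χ 0 b c α y) :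
    ∃ ψ : Θ → M → ℝ, IsExperiment ψ ∧ ∀ m θ, b m θ - c m θ = χ * μ0 θ * ψ θ m := by
  classical
  obtain ⟨m0⟩ := (inferInstance : Nonempty M)
  have hs : ∀ θ, ∑ m, (b m θ - c m θ) = χ * μ0 θ := fun θ => by
    rw [Finset.sum_sub_distrib, h.bs, h.cs]; ring
  have hn : ∀ m θ, 0 ≤ b m θ - c m θ := fun m θ => sub_nonneg.2 (h.cb m θ)
  refine ⟨fun θ m => if χ * μ0 θ = 0 then (if m = m0 then 1 else 0) else
    (b m θ - c m θ) / (χ * μ0 θ), ?_, ?_⟩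
  · intro θ
    by_cases h1 : χ * μ0 θ = 0
    · simp only [h1, if_true]
      refine ⟨fun m => ?_, by simp⟩
      dsimp only
      split_ifs <;> norm_num
    · simp only [h1, if_false]
      refine ⟨fun m => div_nonneg (hn m θ) (mul_nonneg hχ0 (hμ0.1 θ)), ?_⟩
      rw [← Finset.sum_div, hs, div_self h1]
  · intro m θ
    dsimp only
    by_cases h1 : χ * μ0 θ = 0
    · have := hs θ
      rw [h1] at this
      rw [(Finset.sum_eq_zero_iff_of_nonneg (fun i _ => hn i θ)).1 this m (Finset.mem_univ _), h1,
        zero_mul]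
    · rw [if_neg h1, mul_div_cancel₀ _ h1]

lemma fin_of_pol [Nonempty A] [Nonempty Θ] [Nonempty M]
    (hM : 2 * Fintype.card Θ ≤ Fintype.card M) (uR : A → Θ → ℝ) (μ0 : Θ → ℝ)
    (hμ0 : μ0 ∈ stdSimplex ℝ Θ) (g : Set A → ℝ) (p : ProbabilityMeasure (Belief Θ))
    (hp : p ∈ IPolF μ0) :
    ∃ (l : M → ℝ) (ν : M → Θ → ℝ), (∀ m, 0 ≤ l m) ∧ ∑ m, l m = 1 ∧
      (∀ m, ν m ∈ stdSimplex ℝ Θ) ∧ (∀ θ, ∑ m, l m * ν m θ = μ0 θ) ∧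
      ∑ m, l m * g (BRf uR (ν m)) =
        ∫ μ, g (BRf uR (μ : Belief Θ).1) ∂(p : Measure (Belief Θ)) :=
  cara hM μ0 (fun μ => g (BRf uR μ)) _ (disc uR μ0 hμ0 g _ hp)

lemma IPolF_nonempty (μ0 : Θ → ℝ) (hμ0 : μ0 ∈ stdSimplex ℝ Θ) : (IPolF μ0).Nonempty := by
  refine ⟨⟨Measure.dirac (⟨μ0, hμ0⟩ : Belief Θ), inferInstance⟩, fun θ => ?_⟩
  show ∫ μ, (μ : Belief Θ).1 θ ∂(Measure.dirac (⟨μ0, hμ0⟩ : Belief Θ)) = _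
  rw [integral_dirac]

lemma wG_le_wHat [Nonempty A] (uS : A → ℝ) (uR : A → Θ → ℝ) (μ0 : Θ → ℝ)
    (hμ0 : μ0 ∈ stdSimplex ℝ Θ) : wG uS uR μ0 ≤ wHatG uS uR μ0 := by
  have := fin_le_sSup (M := Unit) μ0 (wG uS uR) _ (wG_abs uS uR) (fun _ => 1) (fun _ => μ0)
    (fun _ => zero_le_one) (by simp) (fun _ => hμ0) (by simp)
  simpa [wHatG] using this

/-- L7 -/
lemma full_out [Nonempty A] [Nonempty Θ] [Nonempty M]
    (hM : 2 * Fintype.card Θ ≤ Fintype.card M) (uS : A → ℝ) (uR : A → Θ → ℝ) (μ0 : Θ → ℝ)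
    (hμ0 : μ0 ∈ stdSimplex ℝ Θ) (p : ProbabilityMeasure (Belief Θ)) (hp : p ∈ IPolF μ0) :
    ∃ b c α y, Out (M := M) uS uR μ0 1 0 b c α y ∧ pay uS b α =
      ∫ μ, vG uS uR (μ : Belief Θ).1 ∂(p : Measure (Belief Θ)) := by
  classical
  obtain ⟨l, ν, hl, -, hν, hb, hs⟩ := fin_of_pol hM uR μ0 hμ0 (fun S => sSup (uS '' S)) p hp
  choose a ha hva using fun m => vG_mem uS uR (ν m)
  have hu : ∀ m, ∑ x, uS x * (if x = a m then (1 : ℝ) else 0) = uS (a m) := fun m => by simp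
  refine ⟨fun m θ => l m * ν m θ, fun _ _ => 0, fun m x => if x = a m then 1 else 0,
    ∑ a, |uS a|, ⟨fun _ _ => le_rfl, fun m θ => mul_nonneg (hl m) ((hν m).1 θ), hb, by simp,
      fun m x => ?_, by simp, ?_, ?_, by simp, ?_, le_rfl⟩, ?_⟩
  · split_ifs <;> norm_num
  · intro m x x'
    by_cases hx : x = a m
    · subst hx
      simp only [if_true, one_mul, add_zero, sub_nonneg]
      rw [sum_scale (uR x') _ (ν m) (l m) (fun _ => rfl),
        sum_scale (uR (a m)) _ (ν m) (l m) (fun _ => rfl)]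
      exact mul_le_mul_of_nonneg_left (ha m x') (hl m)
    · simp [hx]
  · intro m θ
    rw [hu]
    exact mul_nonneg (mul_nonneg (hl m) ((hν m).1 θ))
      (sub_nonneg.2 ((le_abs_self _).trans (uS_abs uS (a m))))
  · have : 0 ≤ ∑ a, |uS a| := Finset.sum_nonneg fun _ _ => abs_nonneg _
    linarith
  · refine Eq.trans ?_ hs
    unfold pay
    refine Finset.sum_congr rfl fun m _ => ?_
    rw [hu, ← Finset.mul_sum, (hν m).2, mul_one, hva]
    rfl

/-- maximal outcome -/
lemma exists_max [Nonempty A] [Nonempty M] (uS : A → ℝ) (uR : A → Θ → ℝ) (μ0 : Θ → ℝ) (χ : ℝ)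
    (hχ0 : 0 ≤ χ) (hχ1 : χ ≤ 1) (hμ0 : μ0 ∈ stdSimplex ℝ Θ) :
    ∃ b c α y, Out (M := M) uS uR μ0 χ 0 b c α y ∧
      ∀ b' c' α' y', Out (M := M) uS uR μ0 χ 0 b' c' α' y' → pay uS b' α' ≤ pay uS b α := by
  classical
  obtain ⟨m0⟩ := (inferInstance : Nonempty M)
  obtain ⟨b, c, α, y, h, -⟩ := exists_out uS uR μ0 χ hχ0 hχ1 hμ0
    (fun _ m => if m = m0 then 1 else 0)
    (fun θ => ⟨fun m => by dsimp only; split_ifs <;> norm_num, by simp⟩)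
  obtain ⟨z, ⟨hz1, hz2⟩, hmax⟩ := (K0_compact (M := M) uS uR μ0 χ hμ0).exists_isMaxOn
    ⟨(0, b, c, α, y), h, rfl⟩ (pay_cont (M := M) (Θ := Θ) uS).continuousOn
  obtain ⟨η, b1, c1, α1, y1⟩ := z
  obtain rfl : η = 0 := hz2
  exact ⟨b1, c1, α1, y1, hz1, fun b' c' α' y' h' =>
    hmax (show ((0 : ℝ), b', c', α', y') ∈ _ from ⟨h', rfl⟩)⟩

/-- L6 -/
lemma low_one [Nonempty A] [Nonempty Θ] [Nonempty M]
    (hM : 2 * Fintype.card Θ ≤ Fintype.card M) (uS : A → ℝ) (uR : A → Θ → ℝ) (μ0 : Θ → ℝ)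
    (hμ0 : μ0 ∈ stdSimplex ℝ Θ) (s : ℝ) (hs : s ∈ chiPBEPayoffs A M uS uR μ0 1) :
    wHatG uS uR μ0 ≤ s := by
  classical
  obtain ⟨ψ, σ, α, β, hP, rfl⟩ := hs
  refine csSup_le ((IPolF_nonempty μ0 hμ0).image _) ?_
  rintro _ ⟨p, hp, rfl⟩
  obtain ⟨l, ν, hl, -, hν, hb, hs⟩ := fin_of_pol hM uR μ0 hμ0 (fun S => sInf (uS '' S)) p hp
  obtain ⟨m0⟩ := (inferInstance : Nonempty M)
  have hn : ∀ m θ, 0 ≤ l m * ν m θ := fun m θ => mul_nonneg (hl m) ((hν m).1 θ)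
  let ψ' : Θ → M → ℝ := fun θ m =>
    if μ0 θ = 0 then (if m = m0 then 1 else 0) else l m * ν m θ / μ0 θ
  have hψ' : IsExperiment ψ' := by
    intro θ
    by_cases h1 : μ0 θ = 0
    · simp only [ψ', h1, if_true]
      refine ⟨fun m => ?_, by simp⟩
      dsimp only
      split_ifs <;> norm_num
    · simp only [ψ', h1, if_false]
      refine ⟨fun m => div_nonneg (hn m θ) (hμ0.1 θ), ?_⟩
      rw [← Finset.sum_div, hb, div_self h1]
  have hlink : ∀ m θ, μ0 θ * ψ' θ m = l m * ν m θ := by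
    intro m θ
    simp only [ψ']
    by_cases h1 : μ0 θ = 0
    · have := hb θ
      rw [h1] at this
      rw [(Finset.sum_eq_zero_iff_of_nonneg (fun i _ => hn i θ)).1 this m (Finset.mem_univ _), h1,
        zero_mul]
    · rw [if_neg h1, mul_div_cancel₀ _ h1]
  obtain ⟨b, c, α', y, hO, hbc, hpay⟩ := out_of_pbe zero_le_one le_rfl hμ0 hP ψ' hψ'
  have hc : ∀ m θ, c m θ = 0 := by
    intro m θ
    have := hO.cs θ
    rw [sub_self, zero_mul] at this
    exact (Finset.sum_eq_zero_iff_of_nonneg (fun i _ => hO.c0 i θ)).1 this m (Finset.mem_univ _)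
  have hbl : ∀ m θ, b m θ = l m * ν m θ := by
    intro m θ
    have := hbc m θ
    rw [hc, sub_zero, one_mul, hlink] at this
    exact this
  refine le_trans ?_ (hP.2.2.2.2.1 ψ' hψ')
  rw [← hpay]
  refine le_trans (le_of_eq hs.symm) ?_
  unfold pay
  refine Finset.sum_le_sum fun m _ => ?_
  have hbm : ∑ θ, b m θ = l m := by
    simp only [hbl]; rw [← Finset.mul_sum, (hν m).2, mul_one]
  rw [hbm]
  rcases (hl m).eq_or_lt with h0 | h0
  · rw [← h0, zero_mul, zero_mul]
  · refine mul_le_mul_of_nonneg_left ?_ (hl m)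
    refine le_avg uS (α' m) (hO.α0 m) (hO.α1 m) _ fun a ha => ?_
    exact wG_le uS uR (ν m) ((BR_scale h0 (hbl m)).1 (hO.mem_BR ha))

/-- intermediate payoffs are equilibrium payoffs -/
lemma mem_of_out [Nonempty A] [Nonempty M] {uS : A → ℝ} {uR : A → Θ → ℝ} {μ0 : Θ → ℝ} {χ : ℝ}
    (hχ0 : 0 ≤ χ) (hχ1 : χ ≤ 1) (hμ0 : μ0 ∈ stdSimplex ℝ Θ)
    {b c : M → Θ → ℝ} {α : M → A → ℝ} {y : ℝ} (h : Out uS uR μ0 χ 0 b c α y)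
    (t : ℝ) (ht : t ≤ pay uS b α) (hw : wHatG uS uR μ0 ≤ t) :
    t ∈ chiPBEPayoffs A M uS uR μ0 χ := by
  obtain ⟨b', c', α', y', hO, hp⟩ :=
    interm hχ0 hχ1 hμ0 h t ht ((wG_le_wHat uS uR μ0 hμ0).trans hw)
  obtain ⟨ψ, hψ, hlink⟩ := recover hχ0 hμ0 hO
  refine pbe_of_out hχ1 hμ0 hψ hO hlink t hp fun ψ' hψ' => ?_
  obtain ⟨b1, c1, α1, y1, h1, h2, h3⟩ := exists_low uS uR μ0 χ hχ0 hχ1 hμ0 ψ' hψ'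
  exact ⟨b1, c1, α1, y1, h1, h2, h3.trans hw⟩

end ChiP

/-- **Payoff set under partial credibility.** For every credibility `χ ∈ [0,1]`, the set
of sender `χ`-PBE payoffs is nonempty and lies weakly below `[ŵ(μ0), v̂(μ0)]` in the
strong set order; for `χ = 1`, it equals `[ŵ(μ0), v̂(μ0)]`. -/
theorem chiPBE_payoffs_below_Icc
    (A Θ M : Type) [Fintype A] [Fintype Θ] [Fintype M]
    [Nonempty A] [Nonempty Θ] [Nonempty M]
    (hM : 2 * Fintype.card Θ ≤ Fintype.card M)
    (uS : A → ℝ) (uR : A → Θ → ℝ) (μ0 : Θ → ℝ) (hμ0 : μ0 ∈ stdSimplex ℝ Θ) :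
    (∀ χ : ℝ, 0 ≤ χ → χ ≤ 1 →
      (chiPBEPayoffs A M uS uR μ0 χ).Nonempty ∧
      ∀ s ∈ chiPBEPayoffs A M uS uR μ0 χ,
        ∀ t ∈ Set.Icc (wHatG uS uR μ0) (vHatG uS uR μ0),
          min s t ∈ chiPBEPayoffs A M uS uR μ0 χ ∧
          max s t ∈ Set.Icc (wHatG uS uR μ0) (vHatG uS uR μ0)) ∧
    chiPBEPayoffs A M uS uR μ0 1 = Set.Icc (wHatG uS uR μ0) (vHatG uS uR μ0) := by

  have hup : ∀ χ : ℝ, 0 ≤ χ → χ ≤ 1 → ∀ s ∈ chiPBEPayoffs A M uS uR μ0 χ,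
      ∃ b c α y, ChiP.Out (M := M) uS uR μ0 χ 0 b c α y ∧ ChiP.pay uS b α = s := by
    rintro χ hχ0 hχ1 s ⟨ψ, σ, α, β, hP, rfl⟩
    obtain ⟨b, c, α', y, hO, -, hp⟩ := ChiP.out_of_pbe hχ0 hχ1 hμ0 hP ψ hP.1
    exact ⟨b, c, α', y, hO, hp⟩
  refine ⟨fun χ hχ0 hχ1 => ⟨?_, ?_⟩, ?_⟩
  · obtain ⟨b, c, α, y, hO, hmax⟩ := ChiP.exists_max (M := M) uS uR μ0 χ hχ0 hχ1 hμ0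
    obtain ⟨ψ, hψ, hlink⟩ := ChiP.recover hχ0 hμ0 hO
    refine ⟨_, ChiP.pbe_of_out hχ1 hμ0 hψ hO hlink _ rfl fun ψ' hψ' => ?_⟩
    obtain ⟨b1, c1, α1, y1, h1, h2⟩ := ChiP.exists_out uS uR μ0 χ hχ0 hχ1 hμ0 ψ' hψ'
    exact ⟨b1, c1, α1, y1, h1, h2, hmax _ _ _ _ h1⟩
  · intro s hs t ht
    obtain ⟨b, c, α, y, hO, hp⟩ := hup χ hχ0 hχ1 s hs
    rcases le_total s t with hst | hst
    · rw [min_eq_left hst, max_eq_right hst]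
      exact ⟨hs, ht⟩
    · rw [min_eq_right hst, max_eq_left hst]
      exact ⟨ChiP.mem_of_out hχ0 hχ1 hμ0 hO t (hst.trans hp.ge) ht.1, ht.1.trans hst,
        hp ▸ ChiP.pay_le_vHat hμ0 hO⟩
  · ext t
    constructor
    · intro hs
      obtain ⟨b, c, α, y, hO, hp⟩ := hup 1 zero_le_one le_rfl t hs
      exact ⟨ChiP.low_one hM uS uR μ0 hμ0 t hs, hp ▸ ChiP.pay_le_vHat hμ0 hO⟩
    · intro ht
      obtain ⟨b, c, α, y, hO, hmax⟩ := ChiP.exists_max (M := M) uS uR μ0 1 zero_le_one le_rfl hμ0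
      refine ChiP.mem_of_out zero_le_one le_rfl hμ0 hO t (ht.2.trans ?_) ht.1
      refine csSup_le ((ChiP.IPolF_nonempty μ0 hμ0).image _) ?_
      rintro _ ⟨p, hp, rfl⟩
      obtain ⟨b1, c1, α1, y1, h1, h2⟩ := ChiP.full_out (M := M) hM uS uR μ0 hμ0 p hp
      exact h2.symm.le.trans (hmax _ _ _ _ h1)
end
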